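/- For every M, A, n ∈ ℕ with M ≥ 1, there exists a finite graph G such that: (1) the (154 × 154)-grid is not a 3-fat minor of G, and (2) G is not (M,A)-quasi-isometric to any graph that has no K_n minor. -/

import Mathlib

open SimpleGraph

namespace CGT

/-- Distance between two vertex sets, as an extended natural number. -/
noncomputable def sDist {V : Type*} (G : SimpleGraph V) (U U' : Set V) : ℕ∞ :=
  ⨅ (u : U) (v : U'), G.edist u.1 v.1

/-- The ball of radius `r` around a vertex set `U`. -/
def gBall {V : Type*} (G : SimpleGraph V) (U : Set V) (r : ℕ) : Set V :=
  {v | ∃ u ∈ U, G.edist u v ≤ (r : ℕ∞)}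

/-- A set of vertices is connected if the induced subgraph is connected. -/
def SetConn {V : Type*} (G : SimpleGraph V) (U : Set V) : Prop :=
  (G.induce U).Connected

/-- The vertex set of a walk. -/
def walkSupp {V : Type*} {G : SimpleGraph V} {a b : V} (p : G.Walk a b) : Set V :=
  {v | v ∈ p.support}

/-- `X` separates `Y` and `Z` in `G`: every path with one end in `Y` and one in `Z`
contains a vertex of `X`. -/
def Separates {V : Type*} (G : SimpleGraph V) (X Y Z : Set V) : Prop :=
  ∀ ⦃y z : V⦄, y ∈ Y → z ∈ Z → ∀ p : G.Walk y z, p.IsPath → ∃ x ∈ X, x ∈ p.support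

/-- `f` is an `(M,A)`-quasi-isometry from `G` to `H`.  The two-sided distance bound
`M⁻¹ d_G(u,v) - A ≤ d_H(f u, f v) ≤ M d_G(u,v) + A` is stated multiplied out over `ℕ∞`. -/
structure IsQI {V V' : Type*} (M A : ℕ) (G : SimpleGraph V) (H : SimpleGraph V')
    (f : V → V') : Prop where
  upper : ∀ u v : V, H.edist (f u) (f v) ≤ (M : ℕ∞) * G.edist u v + (A : ℕ∞)
  lower : ∀ u v : V, G.edist u v ≤ (M : ℕ∞) * H.edist (f u) (f v) + (M : ℕ∞) * (A : ℕ∞)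
  dense : ∀ w : V', ∃ v : V, H.edist w (f v) ≤ (A : ℕ∞)

/-- `G` is `(M,A)`-quasi-isometric to `H`. -/
def QIsometric {V V' : Type*} (M A : ℕ) (G : SimpleGraph V) (H : SimpleGraph V') : Prop :=
  ∃ f : V → V', IsQI M A G H f

/-- `X` is a minor of `G`. -/
def HasMinor {V W : Type*} (G : SimpleGraph V) (X : SimpleGraph W) : Prop :=
  ∃ U : W → Set V,
    (∀ x, (U x).Nonempty) ∧ (∀ x, SetConn G (U x)) ∧
    (∀ ⦃x y⦄, x ≠ y → Disjoint (U x) (U y)) ∧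
    ∀ ⦃x y⦄, X.Adj x y → ∃ u ∈ U x, ∃ v ∈ U y, G.Adj u v

/-- The `(a × b)`-grid graph. -/
def gridGraph (a b : ℕ) : SimpleGraph (Fin a × Fin b) :=
  SimpleGraph.fromRel (fun u v =>
    (u.1 = v.1 ∧ u.2.1 + 1 = v.2.1) ∨ (u.2 = v.2 ∧ u.1.1 + 1 = v.1.1))

/-- A `K`-fat model of `X` in `G`: disjoint connected branch sets joined by internally
disjoint branch paths, all pairwise at distance at least `K` except for a branch path and
the branch sets of its endpoints. -/
structure FatModel {V W : Type*} (G : SimpleGraph V) (X : SimpleGraph W) (K : ℕ) where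
  branch : W → Set V
  branch_nonempty : ∀ x, (branch x).Nonempty
  branch_connected : ∀ x, SetConn G (branch x)
  branch_disjoint : ∀ ⦃x y⦄, x ≠ y → Disjoint (branch x) (branch y)
  pathEnd : ∀ ⦃x y⦄, X.Adj x y → V
  path : ∀ ⦃x y⦄ (e : X.Adj x y), G.Walk (pathEnd e) (pathEnd e.symm)
  path_isPath : ∀ ⦃x y⦄ (e : X.Adj x y), (path e).IsPath
  path_symm : ∀ ⦃x y⦄ (e : X.Adj x y), path e.symm = (path e).reverse
  pathEnd_mem : ∀ ⦃x y⦄ (e : X.Adj x y), pathEnd e ∈ branch x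
  path_meets : ∀ ⦃x y⦄ (e : X.Adj x y) (z : W) (v : V), v ∈ (path e).support → v ∈ branch z →
    (z = x ∧ v = pathEnd e) ∨ (z = y ∧ v = pathEnd e.symm)
  path_int_disjoint : ∀ ⦃x y x' y'⦄ (e : X.Adj x y) (e' : X.Adj x' y'), s(x, y) ≠ s(x', y') →
    ∀ v, v ∈ (path e).support → v ∈ (path e').support → v = pathEnd e' ∨ v = pathEnd e'.symm
  fat_branch : ∀ ⦃x y⦄, x ≠ y → (K : ℕ∞) ≤ sDist G (branch x) (branch y)
  fat_path_branch : ∀ ⦃x y⦄ (e : X.Adj x y) (z : W), z ≠ x → z ≠ y →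
    (K : ℕ∞) ≤ sDist G (walkSupp (path e)) (branch z)
  fat_paths : ∀ ⦃x y x' y'⦄ (e : X.Adj x y) (e' : X.Adj x' y'), s(x, y) ≠ s(x', y') →
    (K : ℕ∞) ≤ sDist G (walkSupp (path e)) (walkSupp (path e'))

/-- `X` is a `K`-fat minor of `G`. -/
def IsFatMinor {V W : Type*} (G : SimpleGraph V) (X : SimpleGraph W) (K : ℕ) : Prop :=
  Nonempty (FatModel G X K)

/-- `W` is a `K`-fat `n`-path-connected set in `G`. -/
def FatPathConn {V : Type*} (G : SimpleGraph V) (K n : ℕ) (W : Set V) : Prop :=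
  (∃ S : Finset V, ↑S ⊆ W ∧ 2 * n ≤ S.card) ∧
  (∀ ⦃u v : V⦄, u ∈ W → v ∈ W → u ≠ v → (K : ℕ∞) ≤ G.edist u v) ∧
  ∀ l : ℕ, l ≤ n → ∀ A B : Finset V, ↑A ⊆ W → ↑B ⊆ W → A.card = l → B.card = l →
    ∃ (a b : Fin l → V) (P : ∀ i : Fin l, G.Walk (a i) (b i)),
      (∀ i, (P i).IsPath) ∧ (∀ i, a i ∈ A ∧ b i ∈ B) ∧
      ∀ i j, i ≠ j → (K : ℕ∞) ≤ sDist G (walkSupp (P i)) (walkSupp (P j))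

end CGT

namespace Ghdm

/-- Raw vertex codes for the graphs `G_{h,d,m}`:
`path k` is the `k`-th vertex of the base path; `tree j i p` is the vertex at position `p`
of the `i`-th binary tree at level `j` (the root being position `[]`); and
`spine j i k t e s` is the `s`-th internal vertex of the spine from the `k`-th leaf of that
tree to the `e`-th element of the `t`-th local gluing set at level `j-1`. -/
inductive Raw : Type where
  | path (k : ℕ)
  | tree (j i : ℕ) (p : List Bool)
  | spine (j i k t e s : ℕ)
deriving DecidableEq

/-- `N = 2^{h+1} - 1`, the number of copies of `G_{h,d,m-1}` glued inside `G_{h,d,m}`. -/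
def NN (h : ℕ) : ℕ := 2 ^ (h + 1) - 1

/-- Canonical representative of a raw vertex code: all tree roots are identified with the
single root `tree m 1 []`, and the leftmost leaf of tree `i > 1` is identified with the
rightmost leaf of tree `i - 1` (consecutive copies are glued along these leaves). -/
def canon (h m : ℕ) : Raw → Raw
  | .tree j i p =>
    if p = [] then .tree m 1 []
    else if p = List.replicate h false ∧ 1 < i then .tree j (i - 1) (List.replicate h true)
    else .tree j i p
  | x => x

/-- The `q`-bit binary representation of `i` (most significant bit first);
`false` means "left". -/
def natToBits (q i : ℕ) : List Bool := (List.range q).map fun a => Nat.testBit i (q - 1 - a)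

/-- Position of the `k`-th leaf (1-based, from the left) in a binary tree of height `h`. -/
def leafPos (h k : ℕ) : List Bool := natToBits h (k - 1)

/-- The `e`-th element of the `g`-th gluing set `V^{jv}_g` (at level `jv`):
its element `e = 1` is an anchor of the base path, and its element `e ≥ 2` is a shared
extreme leaf of the trees at level `e`. -/
def VsetElem (h d jv g e : ℕ) : Raw :=
  if e = 1 then .path ((g - 1) * NN h ^ (jv - 1) * (d + 1))
  else if (g - 1) * NN h ^ (jv - e) = 0 then .tree e 1 (List.replicate h false)
  else .tree e ((g - 1) * NN h ^ (jv - e)) (List.replicate h true)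

/-- Valid (canonical) vertex codes of `G_{h,d,m}`. -/
def Valid (h d m : ℕ) : Raw → Prop
  | .path k => k ≤ (d + 1) * NN h ^ (m - 1)
  | .tree j i p => 2 ≤ j ∧ j ≤ m ∧ 1 ≤ i ∧ i ≤ NN h ^ (m - j) ∧ p.length ≤ h ∧
      (p = [] → j = m ∧ i = 1) ∧ (p = List.replicate h false → p ≠ [] → i = 1)
  | .spine j i k t e s => 2 ≤ j ∧ j ≤ m ∧ 1 ≤ i ∧ i ≤ NN h ^ (m - j) ∧
      1 ≤ k ∧ k ≤ 2 ^ h ∧ (t = 2 * k - 2 ∨ t = 2 * k + 1) ∧ 1 ≤ t ∧ t ≤ 2 ^ (h + 1) ∧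
      1 ≤ e ∧ e ≤ j - 1 ∧ 1 ≤ s ∧ s ≤ d

/-- Generating adjacencies between raw vertex codes: consecutive base path vertices,
parent/child in the binary trees, consecutive spine vertices, a spine and the leaf it
starts at, a spine and the gluing-set vertex it ends at (the latter collapsed to a single
edge when `d = 0`). -/
inductive rawAdj (h d : ℕ) : Raw → Raw → Prop
  | base (k : ℕ) : rawAdj h d (.path k) (.path (k + 1))
  | child (j i : ℕ) (p : List Bool) (b : Bool) : p.length < h →
      rawAdj h d (.tree j i p) (.tree j i (p ++ [b]))
  | step (j i k t e s : ℕ) : rawAdj h d (.spine j i k t e s) (.spine j i k t e (s + 1))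
  | toLeaf (j i k t e : ℕ) : rawAdj h d (.tree j i (leafPos h k)) (.spine j i k t e 1)
  | toV (j i k t e : ℕ) :
      rawAdj h d (.spine j i k t e d) (VsetElem h d (j - 1) ((i - 1) * NN h + t) e)
  | short (j i k t e : ℕ) : d = 0 → 1 ≤ k → k ≤ 2 ^ h → (t = 2 * k - 2 ∨ t = 2 * k + 1) →
      1 ≤ t → t ≤ 2 ^ (h + 1) → 1 ≤ e → e ≤ j - 1 →
      rawAdj h d (.tree j i (leafPos h k)) (VsetElem h d (j - 1) ((i - 1) * NN h + t) e)

/-- Adjacency of canonical representatives. -/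
def rel (h d m : ℕ) (x y : Raw) : Prop :=
  ∃ a b, rawAdj h d a b ∧ x = canon h m a ∧ y = canon h m b

/-- The vertex set of `G_{h,d,m}`. -/
def Verts (h d m : ℕ) : Set Raw := {x | Valid h d m x}

/-- The graph `G_{h,d,m}`. -/
def G (h d m : ℕ) : SimpleGraph (Verts h d m) :=
  (SimpleGraph.fromRel (rel h d m)).induce (Verts h d m)

/-- Lift a set of raw codes to a set of vertices of `G_{h,d,m}`. -/
def lift {h d m : ℕ} (S : Set Raw) : Set (Verts h d m) := Subtype.val ⁻¹' S

/-- The root `R(G_{h,d,m})`. -/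
def RootR (m : ℕ) : Raw := .tree m 1 []

/-- The gluing set `V^{jv}_g` of `G_{h,d,m}`, as a set of raw codes. -/
def VsetRaw (h d m jv g : ℕ) : Set Raw :=
  {x | ∃ e, 1 ≤ e ∧ e ≤ jv ∧ x = canon h m (VsetElem h d jv g e)}

/-- The set `S(G_{h,d,m})`. -/
def SsetR (h d m : ℕ) : Set Raw :=
  VsetRaw h d m (m - 1) 1 ∪ {canon h m (.tree m 1 (leafPos h 1))}

/-- The set `T(G_{h,d,m})`. -/
def TsetR (h d m : ℕ) : Set Raw :=
  VsetRaw h d m (m - 1) (2 ^ (h + 1)) ∪ {canon h m (.tree m 1 (leafPos h (2 ^ h)))}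

/-- For a vertex of the top binary tree at position `p`, the (1-based) index of the
leftmost leaf of the top tree below it. -/
def kOf (h : ℕ) (p : List Bool) : ℕ :=
  (p.foldl (fun a b => 2 * a + if b then 1 else 0) 0) * 2 ^ (h - p.length) + 1

/-- `S(Δ(x))` for the vertex `x` of the top binary tree `B(G_{h,d,m})` at position `p`. -/
def SDeltaR (h d m : ℕ) (p : List Bool) : Set Raw :=
  VsetRaw h d m (m - 1) (2 * kOf h p - 1) ∪ {canon h m (.tree m 1 (leafPos h (kOf h p)))}

/-- The leaf of `B(G_{h,d,m})` immediately to the left of the leftmost leaf below the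
top-tree vertex at position `p`; it is the unique leaf joined by spines to `S(Δ(x))`. -/
def leafLeftR (h m : ℕ) (p : List Bool) : Raw :=
  canon h m (.tree m 1 (leafPos h (kOf h p - 1)))

end Ghdm

namespace GC
open Relation

def Cn {α : Type*} (R : α → α → Prop) (P : Set α) (a b : α) : Prop :=
  a ∈ P ∧ ReflTransGen (fun u v => R u v ∧ v ∈ P) a b

section
variable {α : Type*} {R : α → α → Prop} {P Q : Set α} {a b c : α}

theorem Cn.refl (h : a ∈ P) : Cn R P a a := ⟨h, .refl⟩

theorem Cn.left (h : Cn R P a b) : a ∈ P := h.1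

theorem Cn.cut (h : Cn R P a b) (L : Set α) (ha : a ∈ L)
    (hL : ∀ x y, x ∈ L → x ∈ P → y ∈ P → R x y → y ∈ L) : b ∈ L := by
  have : b ∈ L ∧ b ∈ P := by
    obtain ⟨h0, h⟩ := h
    induction h with
    | refl => exact ⟨ha, h0⟩
    | tail _ hs ih => exact ⟨hL _ _ ih.1 ih.2 hs.2 hs.1, hs.2⟩
  exact this.1

theorem Cn.right (h : Cn R P a b) : b ∈ P :=
  h.cut P h.1 (fun _ _ _ _ hy _ => hy)

theorem Cn.step (h : Cn R P a b) (hr : R b c) (hc : c ∈ P) : Cn R P a c :=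
  ⟨h.1, h.2.tail ⟨hr, hc⟩⟩

theorem Cn.single (ha : a ∈ P) (hr : R a b) (hb : b ∈ P) : Cn R P a b :=
  (Cn.refl ha).step hr hb

theorem Cn.trans (h : Cn R P a b) (h' : Cn R P b c) : Cn R P a c :=
  ⟨h.1, h.2.trans h'.2⟩

theorem Cn.symm (hR : ∀ x y, R x y → R y x) (h : Cn R P a b) : Cn R P b a := by
  refine h.cut {x | Cn R P x a} (Cn.refl h.1) ?_
  intro x y hx hxP hyP hxy
  exact (Cn.single hyP (hR _ _ hxy) hxP).trans hx

theorem Cn.mono (h : Cn R P a b) (hPQ : P ⊆ Q) : Cn R Q a b := by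
  refine h.cut {x | Cn R Q a x} (Cn.refl (hPQ h.1)) ?_
  intro x y hx _ hy hxy
  exact Cn.step hx hxy (hPQ hy)

theorem Cn.monoR {R' : α → α → Prop} (h : Cn R P a b) (hR : ∀ x y, R x y → R' x y) :
    Cn R' P a b := by
  refine h.cut {x | Cn R' P a x} (Cn.refl h.1) ?_
  intro x y hx _ hy hxy
  exact Cn.step hx (hR _ _ hxy) hy

/-- restrict to the reachable component -/
theorem Cn.comp (h : Cn R P a b) : Cn R {x | Cn R P a x} a b := by
  refine h.cut {x | Cn R {x | Cn R P a x} a x} (Cn.refl (Cn.refl h.1)) ?_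
  intro x y hx _ hy hxy
  have hx' : Cn R {x | Cn R P a x} a x := hx
  exact hx'.step hxy (Cn.step (show Cn R P a x from hx'.right) hxy hy)

end

section menger
variable {V : Type*}

def Lnk (G : SimpleGraph V) (A B : Set V) (k : ℕ) : Prop :=
  ∃ (P : Fin k → Set V) (a b : Fin k → V),
    (∀ i j, i ≠ j → Disjoint (P i) (P j)) ∧
    ∀ i, a i ∈ A ∧ b i ∈ B ∧ Cn G.Adj (P i) (a i) (b i)

def NoSep (G : SimpleGraph V) (A B : Set V) (k : ℕ) : Prop :=
  ∀ Z : Finset V, Z.card < k → ∃ a ∈ A, ∃ b ∈ B, Cn G.Adj {x | x ∉ Z} a b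

theorem adj_symm' (G : SimpleGraph V) : ∀ x y, G.Adj x y → G.Adj y x := fun _ _ h => h.symm

theorem NoSep.symm {G : SimpleGraph V} {A B : Set V} {k : ℕ} (h : NoSep G A B k) :
    NoSep G B A k := by
  intro Z hZ
  obtain ⟨a, ha, b, hb, hc⟩ := h Z hZ
  exact ⟨b, hb, a, ha, hc.symm (adj_symm' G)⟩

/-- one side of the induction step. -/
theorem menger_side [DecidableEq V] {G G' : SimpleGraph V} {A B : Set V} {k : ℕ}
    (hns : NoSep G A B k) (S : Finset V) (x y : V)
    (hG : ∀ u v, G.Adj u v → G'.Adj u v ∨ (u = x ∧ v = y) ∨ (u = y ∧ v = x))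
    (hS : ∀ a ∈ A, ∀ b ∈ B, ¬ Cn G'.Adj {v | v ∉ S} a b)
    (hy : ∀ a ∈ A, ¬ Cn G'.Adj {v | v ∉ S} a y) :
    NoSep G' A (insert x S : Finset V) k := by
  intro Z hZ
  by_contra hcon
  push Not at hcon
  obtain ⟨a, ha, b, hb, hc⟩ := hns Z hZ
  have hax : a ∉ insert x S := by
    intro h
    exact hcon a ha a h (Cn.refl hc.left)
  have key : b ∈ {v | Cn G'.Adj {v | v ∉ Z ∧ v ∉ insert x S} a v} := by
    refine hc.cut _ (Cn.refl ⟨hc.left, hax⟩) ?_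
    intro u v hu huZ hvZ huv
    have hu' : Cn G'.Adj {v | v ∉ Z ∧ v ∉ insert x S} a u := hu
    have huS := hu'.right
    rcases hG u v huv with h | ⟨rfl, rfl⟩ | ⟨rfl, rfl⟩
    · refine hu'.step h ⟨hvZ, ?_⟩
      intro hv
      exact hcon a ha v hv ((hu'.mono (fun z hz => hz.1)).step h hvZ)
    · exact absurd (Finset.mem_insert_self _ _) huS.2
    · exact absurd (hu'.mono (fun z hz hzS => hz.2 (Finset.mem_insert_of_mem hzS))) (hy a ha)
  have key' : Cn G'.Adj {v | v ∉ Z ∧ v ∉ insert x S} a b := key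
  exact hS a ha b hb (key'.mono (fun z hz hzS => hz.2 (Finset.mem_insert_of_mem hzS)))

/-- a linkage onto a set of exactly `k` elements, trimmed -/
theorem lnk_trim {G : SimpleGraph V} {A : Set V} {S : Finset V} {k : ℕ}
    (hl : Lnk G A S k) (hk : S.card = k) :
    ∃ C : V → Set V, (∀ s ∈ S, ∀ t ∈ S, s ≠ t → Disjoint (C s) (C t)) ∧
      (∀ s ∈ S, ∃ a ∈ A, Cn G.Adj (C s) a s ∧
        ∀ v ∈ C s, v ≠ s → Cn G.Adj {u | u ∉ S} a v) := by
  classical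
  obtain ⟨P, a, b, hd, hP⟩ := hl
  rcases S.eq_empty_or_nonempty with rfl | hSne
  · exact ⟨fun _ => ∅, by simp, by simp⟩
  haveI : Nonempty (Fin k) := ⟨⟨0, by rw [← hk]; exact hSne.card_pos⟩⟩
  have hbinj : Function.Injective b := by
    intro i j hij
    by_contra hne
    exact Set.disjoint_left.1 (hd i j hne) (hP i).2.2.right (hij ▸ (hP j).2.2.right)
  have himg : Finset.univ.image b = S := by
    apply Finset.eq_of_subset_of_card_le
    · intro v hv
      obtain ⟨i, -, rfl⟩ := Finset.mem_image.1 hv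
      exact (hP i).2.1
    · rw [Finset.card_image_of_injective _ hbinj, hk]; simp
  have hsurj : ∀ s ∈ S, ∃ i, b i = s := by
    intro s hs
    rw [← himg] at hs
    obtain ⟨i, -, h⟩ := Finset.mem_image.1 hs
    exact ⟨i, h⟩
  have huniq : ∀ i, ∀ s ∈ S, s ∈ P i → s = b i := by
    intro i s hs hsi
    obtain ⟨j, rfl⟩ := hsurj s hs
    by_contra hne
    have : i ≠ j := fun h => hne (by rw [h])
    exact Set.disjoint_left.1 (hd i j this) hsi (hP j).2.2.right
  choose! ix hix using hsurj
  refine ⟨fun s => {v | v = s ∨ Cn G.Adj (P (ix s) ∩ {u | u ≠ s}) (a (ix s)) v}, ?_, ?_⟩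
  · intro s hs t ht hst
    have hne : ix s ≠ ix t := fun h => hst (by rw [← hix s hs, ← hix t ht, h])
    refine Set.disjoint_left.2 ?_
    intro v hv hv'
    have h1 : ∀ s ∈ S, ∀ v, (v = s ∨ Cn G.Adj (P (ix s) ∩ {u | u ≠ s}) (a (ix s)) v) →
        v ∈ P (ix s) := by
      rintro s hs v (rfl | h)
      · have := (hP (ix v)).2.2.right
        rwa [hix v hs] at this
      · exact h.right.1
    exact Set.disjoint_left.1 (hd _ _ hne) (h1 s hs v hv) (h1 t ht v hv')
  · intro s hs
    refine ⟨a (ix s), (hP _).1, ?_, ?_⟩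
    · by_cases has : a (ix s) = s
      · rw [has]; exact Cn.refl (Or.inl rfl)
      have hc := (hP (ix s)).2.2
      rw [hix s hs] at hc
      set C := {v | v = s ∨ Cn G.Adj (P (ix s) ∩ {u | u ≠ s}) (a (ix s)) v} with hC
      have h0 : Cn G.Adj (P (ix s) ∩ {u | u ≠ s}) (a (ix s)) (a (ix s)) := Cn.refl ⟨hc.left, has⟩
      have : s ∈ {v | (v ≠ s → Cn G.Adj (P (ix s) ∩ {u | u ≠ s}) (a (ix s)) v) ∧
          Cn G.Adj C (a (ix s)) v ∨ Cn G.Adj C (a (ix s)) s} := by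
        refine hc.cut _ (Or.inl ⟨fun _ => h0, Cn.refl (Or.inr h0)⟩) ?_
        rintro u v (⟨hu1, hu2⟩ | hu) huP hvP huv
        · by_cases hus : u = s
          · right; rw [← hus]; exact hus ▸ hu2
          by_cases hvs : v = s
          · right; exact hvs ▸ hu2.step huv (Or.inl hvs)
          have := (hu1 hus).step huv (show v ∈ P (ix s) ∩ {u | u ≠ s} from ⟨hvP, hvs⟩)
          exact Or.inl ⟨fun _ => this, hu2.step huv (Or.inr this)⟩
        · exact Or.inr hu
      rcases this with h | h
      · exact h.2
      · exact h
    · rintro v (h | h) hne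
      · exact absurd h hne
      · refine h.mono ?_
        rintro u ⟨hu, hus⟩ huS
        exact hus ((huniq _ u huS hu).trans (hix s hs))

theorem menger [Finite V] (G : SimpleGraph V) : ∀ (A B : Set V) (k : ℕ), NoSep G A B k →
    Lnk G A B k := by
  classical
  induction G using WellFoundedLT.induction with
  | ind G ih =>
  intro A B k hns
  by_cases hbot : ∀ u v, ¬ G.Adj u v
  · have hfin : (A ∩ B).Finite := Set.toFinite _
    have hcard : k ≤ hfin.toFinset.card := by
      by_contra hlt
      obtain ⟨a, ha, b, hb, hc⟩ := hns hfin.toFinset (by omega)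
      have hab : b = a := hc.cut {x | x = a} rfl (fun x y _ _ _ hxy => absurd hxy (hbot _ _))
      subst hab
      exact hc.left (by simp [ha, hb])
    obtain ⟨T, hT, hTk⟩ := Finset.exists_subset_card_eq hcard
    let e := T.equivFinOfCardEq hTk
    have hm : ∀ i, ((e.symm i : V) ∈ A ∧ (e.symm i : V) ∈ B) := by
      intro i
      have := hT (e.symm i).2
      simpa using this
    refine ⟨fun i => {(e.symm i : V)}, fun i => e.symm i, fun i => e.symm i, ?_, ?_⟩
    · intro i j hij
      simp only [Set.disjoint_singleton]
      intro h
      exact hij (e.symm.injective (Subtype.ext h))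
    · intro i
      exact ⟨(hm i).1, (hm i).2, Cn.refl rfl⟩
  push Not at hbot
  obtain ⟨x0, y0, hxy0⟩ := hbot
  set G' := G.deleteEdges {s(x0, y0)} with hG'
  have hlt : G' < G := by
    refine lt_of_le_of_ne (SimpleGraph.deleteEdges_le _) ?_
    intro h
    have : G'.Adj x0 y0 := h ▸ hxy0
    simp [hG'] at this
  have hle : ∀ u v, G'.Adj u v → G.Adj u v := fun u v h => (SimpleGraph.deleteEdges_le _) h
  have lift : ∀ {A B k}, Lnk G' A B k → Lnk G A B k := by
    rintro A B k ⟨P, a, b, hd, hP⟩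
    exact ⟨P, a, b, hd, fun i => ⟨(hP i).1, (hP i).2.1, (hP i).2.2.monoR hle⟩⟩
  by_cases hns' : NoSep G' A B k
  · exact lift (ih G' hlt A B k hns')
  unfold NoSep at hns'
  push Not at hns'
  obtain ⟨S, hSk, hS⟩ := hns'
  obtain ⟨a0, ha0, b0, hb0, hc0⟩ := hns S hSk
  -- orientation
  have hor : ∃ x y, G.Adj x y ∧ s(x, y) = s(x0, y0) ∧ (∃ a ∈ A, Cn G'.Adj {v | v ∉ S} a x) ∧
      (∃ b ∈ B, Cn G'.Adj {v | v ∉ S} b y) := by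
    by_contra hno
    push Not at hno
    have : b0 ∈ {v | (∃ a ∈ A, Cn G'.Adj {v | v ∉ S} a v)} := by
      by_contra hbL
      have h2 : a0 ∈ {v | (∃ b ∈ B, Cn G'.Adj {v | v ∉ S} b v)} ∨ True := Or.inr trivial
      -- first exit from L
      have hex : ∃ u v, (∃ a ∈ A, Cn G'.Adj {v | v ∉ S} a u) ∧ s(u, v) = s(x0, y0) ∧ G.Adj u v ∧
          v ∉ S := by
        by_contra hn
        push Not at hn
        apply hbL
        refine hc0.cut _ ⟨a0, ha0, Cn.refl hc0.left⟩ ?_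
        rintro u v ⟨a, ha, hu⟩ huS hvS huv
        by_cases he : s(u, v) = s(x0, y0)
        · exact absurd (hn u v ⟨a, ha, hu⟩ he huv) hvS
        · exact ⟨a, ha, hu.step (by simp [hG', huv, he]) hvS⟩
      obtain ⟨u, v, hu, he, huv, hvS⟩ := hex
      have hvB := hno u v huv he hu
      obtain ⟨a1, ha1, hu1⟩ := hu
      -- the complement of the B-side is closed
      have : b0 ∈ {z | ¬ ∃ b ∈ B, Cn G'.Adj {v | v ∉ S} b z} := by
        refine hc0.cut _ ?_ ?_
        · rintro ⟨b, hb, hc⟩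
          exact hS a0 ha0 b hb (hc.symm (adj_symm' _))
        · rintro p q hp hpS hqS hpq ⟨b, hb, hq⟩
          by_cases he' : s(p, q) = s(x0, y0)
          · rw [← he, Sym2.eq_iff] at he'
            rcases he' with ⟨rfl, rfl⟩ | ⟨rfl, rfl⟩
            · exact hvB b hb hq
            · exact hS a1 ha1 b hb (hu1.trans (hq.symm (adj_symm' _)))
          · exact hp ⟨b, hb, hq.step (by simp [hG', hpq.symm, Sym2.eq_swap (a := q), he']) hpS⟩
      exact this ⟨b0, hb0, Cn.refl hc0.right⟩
    obtain ⟨a, ha, hab⟩ := this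
    exact hS a ha b0 hb0 hab
  obtain ⟨x, y, hxy, hexy, ⟨ax, hax, hcx⟩, ⟨bY, hby, hcy⟩⟩ := hor
  have hGG : ∀ u v, G.Adj u v → G'.Adj u v ∨ (u = x ∧ v = y) ∨ (u = y ∧ v = x) := by
    intro u v huv
    by_cases he : s(u, v) = s(x0, y0)
    · right; rw [← hexy, Sym2.eq_iff] at he; exact he
    · left; simp [hG', huv, he]
  have hyA : ∀ a ∈ A, ¬ Cn G'.Adj {v | v ∉ S} a y := fun a ha h =>
    hS a ha bY hby (h.trans (hcy.symm (adj_symm' _)))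
  have hxB : ∀ b ∈ B, ¬ Cn G'.Adj {v | v ∉ S} b x := fun b hb h =>
    hS ax hax b hb (hcx.trans (h.symm (adj_symm' _)))
  have hS' : ∀ b ∈ B, ∀ a ∈ A, ¬ Cn G'.Adj {v | v ∉ S} b a := fun b hb a ha h =>
    hS a ha b hb (h.symm (adj_symm' _))
  have n1 := menger_side hns S x y hGG hS hyA
  have n2 := menger_side hns.symm S y x
    (fun u v h => by rcases hGG u v h with h | h | h <;> simp [h]) hS' hxB
  have hxS : x ∉ S := hcx.right
  have hyS : y ∉ S := hcy.right
  have hsep : ¬ (S.card + 1 < k) := by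
    intro hlt'
    obtain ⟨a, ha, s, hs, h⟩ := n1 (insert x S) (by rw [Finset.card_insert_of_notMem hxS]; exact hlt')
    exact h.right hs
  have hcx' : (insert x S).card = k := by rw [Finset.card_insert_of_notMem hxS]; omega
  have hcy' : (insert y S).card = k := by rw [Finset.card_insert_of_notMem hyS]; omega
  obtain ⟨C, hCd, hC⟩ := lnk_trim (ih G' hlt _ _ _ n1) hcx'
  obtain ⟨D, hDd, hD⟩ := lnk_trim (ih G' hlt _ _ _ n2) hcy'
  -- the matching s ↦ s, x ↦ y
  let m : V → V := fun s => if s = x then y else s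
  have hm : ∀ s ∈ insert x S, m s ∈ insert y S := by
    intro s hs
    by_cases h : s = x
    · simp [m, h]
    · simp only [m, h, if_false]
      exact Finset.mem_insert_of_mem ((Finset.mem_insert.1 hs).resolve_left h)
  have hminj : ∀ s ∈ insert x S, ∀ t ∈ insert x S, m s = m t → s = t := by
    intro s hs t ht hst
    by_cases h : s = x <;> by_cases h' : t = x <;> simp [m, h, h'] at hst ⊢
    · exact absurd (hst ▸ (Finset.mem_insert.1 ht).resolve_left h') hyS
    · exact absurd (hst ▸ (Finset.mem_insert.1 hs).resolve_left h) hyS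
    · exact hst
  have hCD : ∀ s ∈ insert x S, ∀ t ∈ insert x S, s ≠ t → Disjoint (C s) (D (m t)) := by
    intro s hs t ht hst
    refine Set.disjoint_left.2 ?_
    intro v hv hv'
    obtain ⟨a, ha, hcs, hct⟩ := hC s hs
    obtain ⟨b, hb, hds, hdt⟩ := hD (m t) (hm t ht)
    have e1 : v = s ∨ Cn G'.Adj {u | u ∉ S} a v := by
      by_cases h : v = s
      · exact Or.inl h
      · exact Or.inr ((hct v hv h).mono (fun u hu huS => hu (Finset.mem_insert_of_mem huS)))
    have e2 : v = m t ∨ Cn G'.Adj {u | u ∉ S} b v := by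
      by_cases h : v = m t
      · exact Or.inl h
      · exact Or.inr ((hdt v hv' h).mono (fun u hu huS => hu (Finset.mem_insert_of_mem huS)))
    rcases e1 with h1 | h1
    · rcases e2 with h2 | h2
      · -- v = s = m t
        have hmt : m t = s := h2.symm.trans h1
        by_cases h : t = x
        · simp [m, h] at hmt
          -- s = y
          have : s ∈ S := (Finset.mem_insert.1 hs).resolve_left (by rw [← hmt]; exact hxy.ne')
          exact hyS (hmt ▸ this)
        · simp [m, h] at hmt; exact hst hmt.symm
      · subst h1
        rcases Finset.mem_insert.1 hs with h | h
        · subst h; exact hxB b hb h2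
        · exact h2.right h
    · rcases e2 with h2 | h2
      · subst h2
        rcases Finset.mem_insert.1 (hm t ht) with h | h
        · rw [h] at h1; exact hyA a ha h1
        · exact h1.right h
      · exact hS a ha b hb (h1.trans (h2.symm (adj_symm' _)))
  let e := (insert x S).equivFinOfCardEq hcx'
  have he : ∀ i, (e.symm i : V) ∈ insert x S := fun i => (e.symm i).2
  choose! ca hca1 hca2 hca3 using hC
  choose! db hdb1 hdb2 hdb3 using hD
  refine ⟨fun i => C (e.symm i) ∪ D (m (e.symm i)), fun i => ca (e.symm i),
    fun i => db (m (e.symm i)), ?_, ?_⟩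
  · intro i j hij
    have hne : (e.symm i : V) ≠ e.symm j := fun h => hij (e.symm.injective (Subtype.ext h))
    have hne' : m (e.symm i : V) ≠ m (e.symm j) := fun h => hne (hminj _ (he i) _ (he j) h)
    rw [Set.disjoint_union_left, Set.disjoint_union_right, Set.disjoint_union_right]
    exact ⟨⟨hCd _ (he i) _ (he j) hne, hCD _ (he i) _ (he j) hne⟩,
      (hCD _ (he j) _ (he i) hne.symm).symm, hDd _ (hm _ (he i)) _ (hm _ (he j)) hne'⟩
  · intro i
    refine ⟨hca1 _ (he i), hdb1 _ (hm _ (he i)), ?_⟩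
    have c1 : Cn G.Adj (C (e.symm i) ∪ D (m (e.symm i))) (ca (e.symm i)) (e.symm i) :=
      ((hca2 _ (he i)).monoR hle).mono Set.subset_union_left
    have c2 : Cn G.Adj (C (e.symm i) ∪ D (m (e.symm i))) (m (e.symm i)) (db (m (e.symm i))) :=
      (((hdb2 _ (hm _ (he i))).symm (adj_symm' _)).monoR hle).mono Set.subset_union_right
    by_cases h : (e.symm i : V) = x
    · refine (c1.step ?_ c2.left).trans c2
      simp only [m, h, if_true]; exact hxy
    · have hmm : m (e.symm i) = e.symm i := by simp [m, h]
      show Cn G.Adj (C (e.symm i) ∪ D (m (e.symm i))) (ca (e.symm i)) (db (m (e.symm i)))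
      rw [hmm] at c2 ⊢
      rw [hmm] at c1
      exact c1.trans c2
end menger
end GC

namespace GC

def TA (u v : ℕ × ℕ) : Prop := v = (u.1 + 1, u.2 / 2) ∨ u = (v.1 + 1, v.2 / 2)

theorem TA.symm : ∀ u v, TA u v → TA v u := fun _ _ h => Or.symm h

/-- leaf `k` under `(s,a)` separation -/
theorem tree_sep {X : Set (ℕ × ℕ)} {k k' s a : ℕ} (hc : Cn TA X (0, k) (0, k'))
    (hk : k / 2 ^ s = a) (hk' : k' / 2 ^ s ≠ a) : (s, a) ∈ X ∧ (s + 1, a / 2) ∈ X := by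
  by_contra hcon
  have : (0, k') ∈ {w : ℕ × ℕ | w.1 ≤ s ∧ w.2 / 2 ^ (s - w.1) = a} := by
    refine hc.cut _ (by simpa using hk) ?_
    rintro ⟨t, b⟩ ⟨t', b'⟩ ⟨h1, h2⟩ hu hv huv
    simp only at h1 h2
    rcases huv with h | h
    · simp only [Prod.mk.injEq] at h
      obtain ⟨rfl, rfl⟩ := h
      rcases Nat.lt_or_ge t s with hlt | hge
      · refine ⟨hlt, ?_⟩
        show b / 2 / 2 ^ (s - (t + 1)) = a
        rw [Nat.div_div_eq_div_mul, ← pow_succ', ← h2]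
        congr 2; omega
      · have : t = s := le_antisymm h1 hge
        subst this
        simp at h2
        subst h2
        exact absurd ⟨hu, hv⟩ hcon
    · simp only [Prod.mk.injEq] at h
      obtain ⟨rfl, rfl⟩ := h
      refine ⟨by show t' ≤ s; omega, ?_⟩
      show b' / 2 ^ (s - t') = a
      rw [← h2, Nat.div_div_eq_div_mul, ← pow_succ']
      congr 2; omega
  exact hk' (by simpa using this.2)

theorem tree_lemma (h : ℕ) (X : Bool → Set (ℕ × ℕ)) (cr : Bool → ℕ → Prop)
    (hX : ∀ i u, u ∈ X i → u.1 < h)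
    (far0 : ∀ i u, u ∈ X i → u ∉ X (!i))
    (far1 : ∀ i u v, u ∈ X i → v ∈ X (!i) → ¬ TA u v)
    (far2 : ∀ i u v w, u ∈ X i → v ∈ X (!i) → TA u w → ¬ TA v w)
    (hcr : ∀ i t, cr i t → ¬ cr (!i) t)
    (cut1 : ∀ i k, k < 2 ^ h → cr i (2 * k) ∨
      ∃ c c', c ≤ k ∧ k ≤ c' ∧ Cn TA (X i) (0, c) (0, c'))
    (cut2 : ∀ i k, k + 1 < 2 ^ h → cr i (2 * k + 1) ∨
      ∃ c c', c ≤ k + 1 ∧ k ≤ c' ∧ Cn TA (X i) (0, c) (0, c'))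
    (cut3 : ∀ i k, k + 1 < 2 ^ h → cr i (2 * k) ∨ cr i (2 * k + 1) ∨ cr i (2 * k + 2) ∨
      ∃ c c', c ≤ k ∧ k + 1 ≤ c' ∧ Cn TA (X i) (0, c) (0, c')) : False := by
  classical
  let Bad : ℕ → ℕ → Prop := fun s a => (∀ i, (s, a) ∉ X i) ∧
    ∀ i c c', c / 2 ^ s < a → a < c' / 2 ^ s → ¬ Cn TA (X i) (0, c) (0, c')
  have hex : ∃ s, s ≤ h ∧ ∃ a, a < 2 ^ (h - s) ∧ Bad s a := by
    refine ⟨h, le_rfl, 0, by simp, ?_, ?_⟩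
    · intro i hi; exact absurd (hX i _ hi) (lt_irrefl _)
    · intro i c c' h1; exact absurd h1 (Nat.not_lt_zero _)
  have hmin := fun m (hm : m < Nat.find hex) => Nat.find_min hex hm
  obtain ⟨hsh, a, ha, hbad⟩ := Nat.find_spec hex
  generalize Nat.find hex = s at hmin hsh ha hbad
  have hmin' : ∀ t b, t < s → b < 2 ^ (h - t) → ¬ Bad t b := fun t b ht hb hB =>
    hmin t ht ⟨by omega, b, hb, hB⟩
  obtain _ | s := s
  · have hcra : ∀ i, cr i (2 * a) := by
      intro i
      rcases cut1 i a (by simpa using ha) with hc | ⟨c, c', h1, h2, hc⟩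
      · exact hc
      · exfalso
        rcases h1.eq_or_lt with rfl | h1
        · exact hbad.1 i hc.left
        rcases h2.eq_or_lt with rfl | h2
        · exact hbad.1 i hc.right
        exact hbad.2 i c c' (by simpa using h1) (by simpa using h2) hc
    exact hcr true _ (hcra true) (hcra _)
  have hpw : 2 ^ (h - s) = 2 * 2 ^ (h - (s + 1)) := by
    rw [← pow_succ']; congr 1; omega
  have hdd : ∀ c, c / 2 ^ (s + 1) = c / 2 ^ s / 2 := fun c => by
    rw [pow_succ, Nat.div_div_eq_div_mul]
  have chd : ∀ b, b = 2 * a ∨ b = 2 * a + 1 → ∃ i, (s, b) ∈ X i := by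
    intro b hb
    by_contra hno
    push Not at hno
    refine hmin' s b (by omega) (by omega) ⟨hno, ?_⟩
    intro i c c' h1 h2 hc
    by_cases e1 : c / 2 ^ (s + 1) = a
    · by_cases e2 : c' / 2 ^ (s + 1) = a
      · rw [hdd] at e1 e2; omega
      · exact hbad.1 i (tree_sep hc e1 e2).1
    · by_cases e2 : c' / 2 ^ (s + 1) = a
      · exact hbad.1 i (tree_sep (hc.symm TA.symm) e2 e1).1
      · refine hbad.2 i c c' ?_ ?_ hc
        · rw [hdd] at e1 ⊢; omega
        · rw [hdd] at e2 ⊢; omega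
  obtain ⟨i, hy⟩ := chd (2 * a) (Or.inl rfl)
  obtain ⟨j, hz⟩ := chd (2 * a + 1) (Or.inr rfl)
  have hij : j = i := by
    by_contra hne
    have : j = !i := by revert hne; cases i <;> cases j <;> simp
    subst this
    exact far2 i _ _ (s + 1, a) hy hz (Or.inl (by simp)) (Or.inl (by simp; omega))
  subst hij
  obtain ⟨k, hk⟩ : ∃ k, k + 1 = (2 * a + 1) * 2 ^ s :=
    ⟨(2 * a + 1) * 2 ^ s - 1, by have : 0 < (2 * a + 1) * 2 ^ s := by positivity
                                 omega⟩
  have hs0 : 0 < 2 ^ s := by positivity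
  have hkle : ∀ c, c ≤ k ↔ c / 2 ^ s ≤ 2 * a := by
    intro c
    rw [← Nat.lt_succ_iff, ← Nat.lt_succ_iff (m := c / 2 ^ s), Nat.div_lt_iff_lt_mul hs0]
    simp only [Nat.succ_eq_add_one, hk]
  have hkK : k + 1 < 2 ^ h := by
    have : 2 ^ h = 2 ^ (h - s) * 2 ^ s := by rw [← pow_add]; congr 1; omega
    rw [hk, this]
    exact Nat.mul_lt_mul_of_pos_right (by omega) hs0
  have nospan : ∀ i c c', c ≤ k → k + 1 ≤ c' → ¬ Cn TA (X i) (0, c) (0, c') := by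
    intro i c c' h1 h2 hc
    have h1' := (hkle c).1 h1
    have h2' : ¬ c' / 2 ^ s ≤ 2 * a := fun hh => by have := (hkle c').2 hh; omega
    by_cases e1 : c / 2 ^ s = 2 * a
    · have := (tree_sep hc e1 (by omega)).2
      rw [show 2 * a / 2 = a by omega] at this
      exact hbad.1 i this
    by_cases e2 : c' / 2 ^ s = 2 * a + 1
    · have := (tree_sep (hc.symm TA.symm) e2 (by omega)).2
      rw [show (2 * a + 1) / 2 = a by omega] at this
      exact hbad.1 i this
    refine hbad.2 i c c' ?_ ?_ hc <;> rw [hdd] <;> omega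
  have hnl : ∀ l b, (l = k ∨ l = k + 1) → l / 2 ^ s = b → (s, b) ∈ X j → (0, l) ∉ X (!j) := by
    intro l b hl hlb hbX h0
    have hex2 : ∃ t, t ≤ s ∧ (t, l / 2 ^ t) ∉ X (!j) := ⟨s, le_rfl, by
      rw [hlb]; exact far0 j _ hbX⟩
    have hm2 := fun m (hm : m < Nat.find hex2) => Nat.find_min hex2 hm
    obtain ⟨hts, htX⟩ := Nat.find_spec hex2
    generalize Nat.find hex2 = t at hm2 hts htX
    obtain _ | t := t
    · simp at htX; exact htX h0
    have hu : (t, l / 2 ^ t) ∈ X (!j) := by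
      by_contra hh; exact hm2 t (by omega) ⟨by omega, hh⟩
    have hta : TA (t, l / 2 ^ t) (t + 1, l / 2 ^ (t + 1)) :=
      Or.inl (by simp [pow_succ, Nat.div_div_eq_div_mul])
    have htX' : (t + 1, l / 2 ^ (t + 1)) ∉ X j := fun hh => far1 j _ _ hh hu (TA.symm _ _ hta)
    have hts' : t + 1 < s := by
      rcases hts.eq_or_lt with e | e
      · rw [e, hlb] at htX'; exact absurd hbX htX'
      · exact e
    refine hmin' (t + 1) (l / 2 ^ (t + 1)) (by omega) ?_ ⟨?_, ?_⟩
    · have : 2 ^ h = 2 ^ (h - (t + 1)) * 2 ^ (t + 1) := by rw [← pow_add]; congr 1; omega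
      rw [Nat.div_lt_iff_lt_mul (by positivity), ← this]
      rcases hl with rfl | rfl <;> omega
    · intro i
      by_cases e : i = j
      · rw [e]; exact htX'
      · have : i = !j := by revert e; cases i <;> cases j <;> simp
        rw [this]; exact htX
    · intro i c c' h1 h2 hc
      have h1' : c < l := by
        by_contra hh; exact absurd (Nat.div_le_div_right (c := 2 ^ (t+1)) (Nat.le_of_not_lt hh)) (by omega)
      have h2' : l < c' := by
        by_contra hh; exact absurd (Nat.div_le_div_right (c := 2 ^ (t+1)) (Nat.le_of_not_lt hh)) (by omega)
      exact nospan i c c' (by omega) (by omega) hc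
  have hk1 : (0, k) ∉ X (!j) := hnl k (2 * a) (Or.inl rfl) (by
    have h1 := (hkle k).1 le_rfl
    refine le_antisymm h1 ?_
    rw [Nat.le_div_iff_mul_le hs0]
    nlinarith) hy
  have hk2 : (0, k + 1) ∉ X (!j) := hnl (k + 1) (2 * a + 1) (Or.inr rfl) (by
    rw [hk, Nat.mul_div_cancel _ hs0]) hz
  have c1 : cr (!j) (2 * k) := by
    rcases cut1 (!j) k (by omega) with hc | ⟨c, c', h1, h2, hc⟩
    · exact hc
    rcases h2.eq_or_lt with rfl | h2
    · exact absurd hc.right hk1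
    · exact absurd hc (nospan _ c c' h1 h2)
  have c2 : cr (!j) (2 * k + 1) := by
    rcases cut2 (!j) k (by omega) with hc | ⟨c, c', h1, h2, hc⟩
    · exact hc
    rcases h1.eq_or_lt with rfl | h1
    · exact absurd hc.left hk2
    rcases h2.eq_or_lt with rfl | h2
    · exact absurd hc.right hk1
    · exact absurd hc (nospan _ c c' (by omega) h2)
  have c3 : cr (!j) (2 * k + 2) := by
    rcases cut1 (!j) (k + 1) (by omega) with hc | ⟨c, c', h1, h2, hc⟩
    · exact hc
    rcases h1.eq_or_lt with rfl | h1
    · exact absurd hc.left hk2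
    · exact absurd hc (nospan _ c c' (by omega) h2)
  rcases cut3 j k hkK with hc | hc | hc | ⟨c, c', h1, h2, hc⟩
  · exact hcr _ _ hc c1
  · exact hcr _ _ hc c2
  · exact hcr _ _ hc c3
  · exact nospan _ _ _ h1 h2 hc

end GC

namespace GC

inductive An : Type where
  | rail (e p : ℕ)
  | node (e q s a : ℕ)
  | root

def nn (h : ℕ) : ℕ := 2 * 2 ^ h - 1

theorem nn_pos (h : ℕ) : 0 < nn h := by
  have : 0 < 2 ^ h := by positivity
  unfold nn; omega

theorem nn_add (h : ℕ) : nn h + 1 = 2 * 2 ^ h := by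
  have : 0 < 2 ^ h := by positivity
  unfold nn; omega

def wf (h e s a : ℕ) : Prop := (e = 0 ∧ s = 0 ∧ a = 0) ∨ (1 ≤ e ∧ s < h ∧ a < 2 ^ (h - s))

def kl (h e : ℕ) : ℕ := if e = 0 then 1 else 2 ^ h

def InC (h J g : ℕ) : An → Prop
  | .rail e p => e ≤ J ∧ g * nn h ^ (J - e) ≤ p ∧ p ≤ (g + 1) * nn h ^ (J - e)
  | .node e q s a => e ≤ J ∧ g * nn h ^ (J - e) ≤ q ∧ q + 1 ≤ (g + 1) * nn h ^ (J - e) ∧ wf h e s a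
  | .root => False

def Zn (h J g : ℕ) (x : An) : Prop := ∃ e, e ≤ J ∧ x = .rail e (g * nn h ^ (J - e))

/-- zones (relative) of leaf `k`. -/
def LZ (h k t : ℕ) : Prop := k < 2 ^ h ∧ (t + 1 = 2 * k ∨ (t = 2 * k + 2 ∧ k + 2 ≤ 2 ^ h))

theorem LZ.bd {h k t : ℕ} (hl : LZ h k t) : 1 ≤ t ∧ t < nn h := by
  obtain ⟨h1, h2⟩ := hl
  have := nn_add h
  omega

def Inc (h : ℕ) (x y : An) : Prop := ∃ e q k, x = .node e q 0 k ∧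
  ((k = 0 ∧ y = .rail e q) ∨ (k + 1 = kl h e ∧ y = .rail e (q + 1)) ∨
    ∃ e0 t e', e = e0 + 1 ∧ LZ h k t ∧ e' ≤ e0 ∧ y = .rail e' ((q * nn h + t) * nn h ^ (e0 - e')))

def Short (h : ℕ) (x y : An) : Prop := ∃ e q s a, x = .node (e + 1) q s a ∧
  ((s + 1 < h ∧ y = .node (e + 1) q (s + 1) (a / 2)) ∨ (s + 1 = h ∧ y = .root))

def Sh (h : ℕ) (x y : An) : Prop := Short h x y ∨ Short h y x

def Pat (h : ℕ) (x y : An) : Prop := Inc h x y ∨ Inc h y x ∨ Sh h x y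

theorem Sh.symm {h : ℕ} {x y : An} (hs : Sh h x y) : Sh h y x := Or.symm hs

theorem Pat.symm {h : ℕ} : ∀ x y : An, Pat h x y → Pat h y x := by
  rintro x y (h | h | h)
  · exact Or.inr (Or.inl h)
  · exact Or.inl h
  · exact Or.inr (Or.inr h.symm)

def Far (h : ℕ) (P Q : Set An) : Prop := ∀ a ∈ P, ∀ b ∈ Q,
  a ≠ b ∧ ¬ Sh h a b ∧ ∀ c, Sh h a c → ¬ Sh h b c

theorem Far.symm {h : ℕ} {P Q : Set An} (hf : Far h P Q) : Far h Q P := by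
  intro a ha b hb
  obtain ⟨h1, h2, h3⟩ := hf b hb a ha
  exact ⟨h1.symm, fun h => h2 h.symm, fun c hc hc' => h3 c hc' hc⟩

theorem Zn.inC {h J g : ℕ} {x : An} (hz : Zn h J g x) : InC h J g x := by
  obtain ⟨e, he, rfl⟩ := hz
  exact ⟨he, le_rfl, Nat.mul_le_mul_right _ (by omega)⟩

theorem Zn.inC' {h J g : ℕ} {x : An} (hz : Zn h J (g + 1) x) : InC h J g x := by
  obtain ⟨e, he, rfl⟩ := hz
  exact ⟨he, Nat.mul_le_mul_right _ (by omega), le_rfl⟩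

theorem pwpos (h n : ℕ) : 0 < nn h ^ n := Nat.pow_pos (nn_pos h)

theorem Zn.of_inC {h J g s : ℕ} {x : An} (hz : Zn h J s x) (hi : InC h J g x) :
    s = g ∨ s = g + 1 := by
  obtain ⟨e, he, rfl⟩ := hz
  obtain ⟨-, h1, h2⟩ := hi
  have := Nat.le_of_mul_le_mul_right h1 (pwpos h _)
  have := Nat.le_of_mul_le_mul_right h2 (pwpos h _)
  omega

theorem Zn.uniq {h J g g' : ℕ} {x : An} (hz : Zn h J g x) (hz' : Zn h J g' x) : g = g' := by
  obtain ⟨e, he, rfl⟩ := hz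
  obtain ⟨e', he', h2⟩ := hz'
  simp only [An.rail.injEq] at h2
  obtain ⟨rfl, h2⟩ := h2
  exact Nat.eq_of_mul_eq_mul_right (pwpos h _) h2

/-- a point in two copies is in the common zone -/
theorem InC.two {h J g g' : ℕ} {x : An} (hi : InC h J g x) (hi' : InC h J g' x) (hne : g ≠ g') :
    ∃ τ, Zn h J τ x ∧ (τ = g ∨ τ = g + 1) ∧ (τ = g' ∨ τ = g' + 1) := by
  wlog hlt : g < g' generalizing g g'
  · obtain ⟨τ, h1, h2, h3⟩ := this hi' hi hne.symm (by omega)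
    exact ⟨τ, h1, h3, h2⟩
  cases x with
  | root => exact hi.elim
  | node e q s a =>
    obtain ⟨-, h1, h2, -⟩ := hi
    obtain ⟨-, h3, h4, -⟩ := hi'
    have := Nat.mul_le_mul_right (nn h ^ (J - e)) (show g + 1 ≤ g' by omega)
    omega
  | rail e p =>
    obtain ⟨he, h1, h2⟩ := hi
    obtain ⟨-, h3, h4⟩ := hi'
    have h5 := Nat.le_of_mul_le_mul_right (h3.trans h2) (pwpos h _)
    have : g' = g + 1 := by omega
    subst this
    exact ⟨g + 1, ⟨e, he, by rw [le_antisymm h2 h3]⟩, by omega, by omega⟩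

def lv : An → ℕ
  | .rail e _ => e
  | .node e _ _ _ => e
  | .root => 0

theorem InC.lvle {h J g : ℕ} {x : An} (hi : InC h J g x) : lv x ≤ J := by
  cases x with
  | root => exact hi.elim
  | node e q s a => exact hi.1
  | rail e p => exact hi.1

theorem InC.ne_root {h J g : ℕ} {x : An} (hi : InC h J g x) : x ≠ .root := by
  rintro rfl; exact hi

def IsNode (x : An) : Prop := ∃ e q s a, x = .node e q s a

def Awf (h : ℕ) : An → Prop
  | .node e _ s a => wf h e s a
  | _ => True

theorem InC.awf {h J g : ℕ} {x : An} (hi : InC h J g x) : Awf h x := by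
  cases x with
  | root => trivial
  | node e q s a => exact hi.2.2.2
  | rail e p => trivial

theorem InC.node_nb {h J g : ℕ} {x y : An} (hi : InC h J g x) (hx : IsNode x) (hp : Pat h x y)
    (hl : lv y ≤ J) (hy : y ≠ .root) (hw : Awf h y) : InC h J g y := by
  obtain ⟨e, q, s, a, rfl⟩ := hx
  obtain ⟨h1, h2, h3, h4⟩ := hi
  rcases hp with ⟨e, q, k, he, hp⟩ | ⟨e, q, k, he, hp⟩ | ⟨e, q, s, a, he, hp⟩ | ⟨e, q, s, a, he, hp⟩
  · simp only [An.node.injEq] at he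
    obtain ⟨rfl, rfl, rfl, rfl⟩ := he
    rcases hp with ⟨rfl, rfl⟩ | ⟨-, rfl⟩ | ⟨e0, t, e', rfl, ht, he', rfl⟩
    · exact ⟨h1, h2, by omega⟩
    · exact ⟨h1, by omega, by omega⟩
    · have := ht.bd
      have e1 : nn h ^ (J - e') = nn h ^ (J - (e0 + 1)) * nn h * nn h ^ (e0 - e') := by
        rw [← pow_succ, ← pow_add]; congr 1; omega
      refine ⟨by omega, ?_, ?_⟩
      · rw [e1, ← mul_assoc, ← mul_assoc]
        refine Nat.mul_le_mul_right _ ?_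
        exact (Nat.mul_le_mul_right _ h2).trans (Nat.le_add_right _ _)
      · rw [e1, ← mul_assoc, ← mul_assoc]
        refine Nat.mul_le_mul_right _ ?_
        refine le_trans ?_ (Nat.mul_le_mul_right _ h3)
        rw [Nat.add_mul]; omega
  · rcases hp with ⟨-, hh⟩ | ⟨-, hh⟩ | ⟨_, _, _, -, -, -, hh⟩ <;> cases hh
  · simp only [An.node.injEq] at he
    obtain ⟨rfl, rfl, rfl, rfl⟩ := he
    rcases hp with ⟨_, rfl⟩ | ⟨_, rfl⟩
    · exact ⟨h1, h2, h3, hw⟩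
    · exact absurd rfl hy
  · subst he
    rcases hp with ⟨_, he⟩ | ⟨_, he⟩
    · simp only [An.node.injEq] at he
      obtain ⟨rfl, rfl, rfl, rfl⟩ := he
      exact ⟨h1, h2, h3, hw⟩
    · cases he

theorem Pat.node_or {h : ℕ} {x y : An} (hp : Pat h x y) :
    IsNode x ∨ IsNode y := by
  rcases hp with ⟨e, q, k, he, hp⟩ | ⟨e, q, k, he, hp⟩ | ⟨e, q, s, a, he, hp⟩ | ⟨e, q, s, a, he, hp⟩
  · exact Or.inl ⟨_, _, _, _, he⟩
  · exact Or.inr ⟨_, _, _, _, he⟩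
  · exact Or.inl ⟨_, _, _, _, he⟩
  · exact Or.inr ⟨_, _, _, _, he⟩

/-- going up in level: from level `≤ J` to level `> J`. -/
theorem Pat.up {h J : ℕ} {x y : An} (hp : Pat h x y) (hx : x ≠ .root) (hxl : lv x ≤ J)
    (hyl : J < lv y) : ∃ e0 q k t, y = .node (e0 + 1) q 0 k ∧ J ≤ e0 ∧ LZ h k t ∧
      Zn h J ((q * nn h + t) * nn h ^ (e0 - J)) x := by
  rcases hp with ⟨e, q, k, rfl, hp⟩ | ⟨e, q, k, rfl, hp⟩ | ⟨e, q, s, a, rfl, hp⟩ | ⟨e, q, s, a, rfl, hp⟩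
  · exfalso
    rcases hp with ⟨-, rfl⟩ | ⟨-, rfl⟩ | ⟨_, _, _, rfl, -, _, rfl⟩ <;> simp only [lv] at * <;> omega
  · rcases hp with ⟨-, rfl⟩ | ⟨-, rfl⟩ | ⟨e0, t, e', rfl, ht, h1, rfl⟩ <;> simp only [lv] at *
    · omega
    · omega
    · refine ⟨e0, q, k, t, rfl, by omega, ht, e', hxl, ?_⟩
      rw [mul_assoc, ← pow_add]
      congr 3; omega
  · rcases hp with ⟨_, rfl⟩ | ⟨_, rfl⟩ <;> simp only [lv] at * <;> omega
  · rcases hp with ⟨_, rfl⟩ | ⟨_, rfl⟩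
    · simp only [lv] at * ; omega
    · exact absurd rfl hx

theorem zmod {h q q' t t' : ℕ} (h1 : t < nn h) (h2 : t' < nn h)
    (he : q * nn h + t = q' * nn h + t') : q = q' ∧ t = t' := by
  have hN := nn_pos h
  have e1 := congrArg (· / nn h) he
  have e2 := congrArg (· % nn h) he
  simp only [Nat.mul_comm _ (nn h), Nat.mul_add_div hN, Nat.mul_add_mod, Nat.div_eq_of_lt h1,
    Nat.div_eq_of_lt h2, Nat.mod_eq_of_lt h1, Nat.mod_eq_of_lt h2] at e1 e2
  omega

/-- attached leaf at an interior zone has level exactly `J+1`. -/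
theorem zone_inner {h J q q' k t t' e0 : ℕ} (he : J ≤ e0) (ht' : LZ h k t') (h1 : 1 ≤ t) (h2 : t < nn h)
    (heq : (q' * nn h + t') * nn h ^ (e0 - J) = q * nn h + t) : e0 = J ∧ q' = q ∧ t' = t := by
  rcases he.eq_or_lt with rfl | hlt
  · simp only [Nat.sub_self, pow_zero, mul_one] at heq
    exact ⟨rfl, zmod ht'.bd.2 h2 heq⟩
  · exfalso
    obtain ⟨m, hm⟩ : ∃ m, e0 - J = m + 1 := ⟨e0 - J - 1, by omega⟩
    rw [hm, pow_succ, ← mul_assoc] at heq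
    have := zmod (t := 0) (nn_pos h) h2 (by simpa using heq)
    omega

end GC

namespace GC

def Cross (h : ℕ) (P : Set An) (J g : ℕ) : Prop :=
  ∃ a b, Zn h J g a ∧ Zn h J (g + 1) b ∧ Cn (Pat h) (P ∩ {x | InC h J g x}) a b

/-- trace of `P` on the tree of gadget `(e,q)` -/
def TX (h : ℕ) (P : Set An) (e q : ℕ) : Set (ℕ × ℕ) :=
  {u | An.node e q u.1 u.2 ∈ P ∧ u.1 < h ∧ u.2 < 2 ^ (h - u.1)}

theorem cross_of {h J g τ τ' : ℕ} {P : Set An} {x z : An} (hne : τ ≠ τ')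
    (hz : Zn h J τ z) (hx : Zn h J τ' x) (h1 : τ = g ∨ τ = g + 1) (h2 : τ' = g ∨ τ' = g + 1)
    (hc : Cn (Pat h) (P ∩ {x | InC h J g x}) z x) : Cross h P J g := by
  rcases h1 with rfl | rfl
  · obtain rfl : τ' = τ + 1 := by omega
    exact ⟨z, x, hz, hx, hc⟩
  · obtain rfl : τ' = g := by omega
    exact ⟨x, z, hx, hz, hc.symm Pat.symm⟩

/-- an element of level `≤ J` in copy `(J+1,q)` lies in a subcopy -/
theorem InC.sub {h J q : ℕ} {x : An} (hi : InC h (J + 1) q x) (hl : lv x ≤ J) :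
    ∃ t, t < nn h ∧ InC h J (q * nn h + t) x := by
  have hN := nn_pos h
  have key : ∀ e p, e ≤ J → q * nn h ^ (J + 1 - e) ≤ p → p + 1 ≤ (q + 1) * nn h ^ (J + 1 - e) →
      ∃ t, t < nn h ∧ (q * nn h + t) * nn h ^ (J - e) ≤ p ∧
        p + 1 ≤ (q * nn h + t + 1) * nn h ^ (J - e) := by
    intro e p he h1 h2
    have e1 : nn h ^ (J + 1 - e) = nn h * nn h ^ (J - e) := by
      rw [← pow_succ']; congr 1; omega
    rw [e1, ← mul_assoc] at h1 h2
    have hp := pwpos h (J - e)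
    refine ⟨p / nn h ^ (J - e) - q * nn h, ?_, ?_, ?_⟩
    · have : p / nn h ^ (J - e) < (q + 1) * nn h := by
        rw [Nat.div_lt_iff_lt_mul hp]; omega
      rw [Nat.add_mul] at this; omega
    · have : q * nn h ≤ p / nn h ^ (J - e) := by rwa [Nat.le_div_iff_mul_le hp]
      rw [Nat.add_sub_cancel' this]
      exact Nat.div_mul_le_self _ _
    · have : q * nn h ≤ p / nn h ^ (J - e) := by rwa [Nat.le_div_iff_mul_le hp]
      rw [Nat.add_sub_cancel' this, Nat.add_mul, Nat.one_mul, Nat.succ_le_iff]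
      exact Nat.lt_div_mul_add hp
  cases x with
  | root => exact hi.elim
  | node e q' s a =>
    obtain ⟨h1, h2, h3, h4⟩ := hi
    obtain ⟨t, ht, h5, h6⟩ := key e q' hl h2 h3
    exact ⟨t, ht, hl, h5, h6, h4⟩
  | rail e p =>
    obtain ⟨h1, h2, h3⟩ := hi
    rcases h3.eq_or_lt with rfl | h3
    · refine ⟨nn h - 1, by omega, ?_⟩
      apply Zn.inC'
      refine ⟨e, hl, ?_⟩
      congr 1
      rw [show J + 1 - e = (J - e) + 1 by simp only [lv] at hl; omega, pow_succ', ← mul_assoc]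
      congr 1
      rw [Nat.add_mul]; omega
    · obtain ⟨t, ht, h5, h6⟩ := key e p hl h2 h3
      exact ⟨t, ht, hl, h5, by omega⟩

theorem InC.sup {h J q t : ℕ} {x : An} (hi : InC h J (q * nn h + t) x) (ht : t < nn h) :
    InC h (J + 1) q x := by
  have e1 : ∀ e, e ≤ J → nn h ^ (J + 1 - e) = nn h * nn h ^ (J - e) := by
    intro e he
    rw [← pow_succ']; congr 1; omega
  have h1 : ∀ e, e ≤ J → q * nn h ^ (J + 1 - e) ≤ (q * nn h + t) * nn h ^ (J - e) := by
    intro e he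
    rw [e1 e he, ← mul_assoc]
    exact Nat.mul_le_mul_right _ (by omega)
  have h2 : ∀ e, e ≤ J → (q * nn h + t + 1) * nn h ^ (J - e) ≤ (q + 1) * nn h ^ (J + 1 - e) := by
    intro e he
    rw [e1 e he, ← mul_assoc]
    refine Nat.mul_le_mul_right _ ?_
    rw [Nat.add_mul]; omega
  cases x with
  | root => exact hi.elim
  | node e q' s a =>
    obtain ⟨a1, a2, a3, a4⟩ := hi
    exact ⟨by omega, (h1 e a1).trans a2, a3.trans (h2 e a1), a4⟩
  | rail e p =>
    obtain ⟨a1, a2, a3⟩ := hi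
    exact ⟨by omega, (h1 e a1).trans a2, a3.trans (h2 e a1)⟩

theorem Zn.split {h J g : ℕ} {x : An} (hz : Zn h (J + 1) g x) :
    x = .rail (J + 1) g ∨ Zn h J (g * nn h) x := by
  obtain ⟨e, he, rfl⟩ := hz
  rcases he.eq_or_lt with rfl | he
  · left; simp
  · right
    refine ⟨e, by omega, ?_⟩
    rw [mul_assoc, ← pow_succ']
    congr 3; omega

/-- the generic cut lemma -/
theorem gcut {h J q : ℕ} {P : Set An} (hr : An.root ∉ P) (hcr : Cross h P (J + 1) q)
    (σ : ℕ → Prop) (h0 : σ 0) (hN : ¬ σ (nn h)) :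
    (∃ t, t < nn h ∧ ¬ (σ t ↔ σ (t + 1)) ∧ Cross h P J (q * nn h + t)) ∨
    ∃ k k', (k = 0 ∨ ∃ t, LZ h k t ∧ σ t) ∧ (k' + 1 = 2 ^ h ∨ ∃ t, LZ h k' t ∧ ¬ σ t) ∧
      Cn TA (TX h P (J + 1) q) (0, k) (0, k') := by
  by_contra hcon
  rw [not_or] at hcon
  obtain ⟨hc1, hc2⟩ := hcon
  have hNp := nn_pos h
  obtain ⟨a, b, ha, hb, hc⟩ := hcr
  -- crossing argument
  have cra : ∀ t τ τ' z x, t < nn h → (τ = t ∨ τ = t + 1) → (τ' = t ∨ τ' = t + 1) → σ τ →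
      Zn h J (q * nn h + τ) z → Zn h J (q * nn h + τ') x →
      Cn (Pat h) (P ∩ {x | InC h J (q * nn h + t) x}) z x → σ τ' := by
    intro t τ τ' z x ht h1 h2 hσ hz hx hc
    by_contra hσ'
    have hne : τ ≠ τ' := by rintro rfl; exact hσ' hσ
    refine hc1 ⟨t, ht, ?_, cross_of (by omega) hz hx (by omega) (by omega) hc⟩
    rcases h1 with rfl | rfl <;> rcases h2 with rfl | rfl <;> tauto
  let L1 : Set An := {x | ∃ t τ z, t < nn h ∧ (τ = t ∨ τ = t + 1) ∧ σ τ ∧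
    Zn h J (q * nn h + τ) z ∧ Cn (Pat h) (P ∩ {x | InC h J (q * nn h + t) x}) z x}
  let L2 : Set An := {x | ∃ k s c, x = .node (J + 1) q s c ∧ (k = 0 ∨ ∃ t, LZ h k t ∧ σ t) ∧
    Cn TA (TX h P (J + 1) q) (0, k) (s, c)}
  have hL1z : ∀ x τ, x ∈ P → τ < nn h → σ τ → Zn h J (q * nn h + τ) x → x ∈ L1 := by
    intro x τ hx hτ hσ hz
    exact ⟨τ, τ, x, hτ, Or.inl rfl, hσ, hz, Cn.refl ⟨hx, hz.inC⟩⟩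
  have hbL : b = .rail (J + 1) q ∨ b ∈ L1 ∨ b ∈ L2 := by
    refine hc.cut {x | x = .rail (J + 1) q ∨ x ∈ L1 ∨ x ∈ L2} ?_ ?_
    · rcases ha.split with h | h
      · exact Or.inl h
      · exact Or.inr (Or.inl (hL1z a 0 hc.left.1 hNp h0 (by simpa using h)))
    · rintro x y hxL ⟨hxP, hxC⟩ ⟨hyP, hyC⟩ hxy
      have hyC : InC h (J + 1) q y := hyC
      have hxC : InC h (J + 1) q x := hxC
      have hyr := hyC.ne_root
      have hxr := hxC.ne_root
      have hleaf : ∀ k, y = .node (J + 1) q 0 k → (k = 0 ∨ ∃ t, LZ h k t ∧ σ t) → y ∈ L2 := by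
        rintro k rfl hk
        refine ⟨k, 0, k, rfl, hk, Cn.refl ⟨hyP, ?_⟩⟩
        have := hyC.2.2.2
        rcases this with ⟨h1, -⟩ | ⟨-, h2⟩
        · omega
        · exact h2
      rcases hxL with rfl | ⟨t, τ, z, ht, hτ, hσ, hz, hzx⟩ | ⟨k, s, c, rfl, hk, hkc⟩
      · -- from the left terminal
        rcases hxy with ⟨e, q1, k, he, -⟩ | ⟨e, q1, k, rfl, hp⟩ | ⟨e, _, _, _, he, -⟩ | ⟨e, _, _, _, he, hp⟩
        · cases he
        · rcases hp with ⟨rfl, hh⟩ | ⟨-, hh⟩ | ⟨e0, t, e', rfl, -, h2, hh⟩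
          · simp only [An.rail.injEq] at hh
            obtain ⟨rfl, rfl⟩ := hh
            exact Or.inr (Or.inr (hleaf 0 rfl (Or.inl rfl)))
          · simp only [An.rail.injEq] at hh
            obtain ⟨rfl, rfl⟩ := hh
            have := hyC.2.1
            simp at this
          · simp only [An.rail.injEq] at hh
            have := hyC.1
            omega
        · cases he
        · rcases hp with ⟨_, hh⟩ | ⟨_, hh⟩ <;> cases hh
      · have hxi : InC h J (q * nn h + t) x := hzx.right.2
        have hxl := hxi.lvle
        by_cases hyl : lv y ≤ J
        · obtain ⟨t', ht', hx', hy'⟩ : ∃ t', t' < nn h ∧ InC h J (q * nn h + t') x ∧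
              InC h J (q * nn h + t') y := by
            rcases hxy.node_or with hn | hn
            · exact ⟨t, ht, hxi, hxi.node_nb hn hxy hyl hyr hyC.awf⟩
            · obtain ⟨t', ht', hy'⟩ := hyC.sub hyl
              exact ⟨t', ht', hy'.node_nb hn (Pat.symm _ _ hxy) hxl hxr hxC.awf, hy'⟩
          refine Or.inr (Or.inl ?_)
          by_cases htt : t = t'
          · subst htt
            exact ⟨t, τ, z, ht, hτ, hσ, hz, hzx.step hxy ⟨hyP, hy'⟩⟩
          · obtain ⟨ρ, hρ, h1, h2⟩ := hxi.two hx' (by omega)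
            obtain ⟨ρ', rfl⟩ : ∃ ρ', ρ = q * nn h + ρ' := ⟨ρ - q * nn h, by omega⟩
            have hσ' := cra t τ ρ' z x ht hτ (by omega) hσ hz hρ hzx
            exact ⟨t', ρ', x, ht', by omega, hσ', hρ, Cn.single ⟨hxP, hx'⟩ hxy ⟨hyP, hy'⟩⟩
        · have hyl' : lv y = J + 1 := le_antisymm hyC.lvle (by omega)
          obtain ⟨e0, q', k, t', rfl, he0, hLZ, hzn⟩ := hxy.up hxr hxl (by omega)
          simp only [lv] at hyl'
          obtain rfl : e0 = J := by omega
          simp only [Nat.sub_self, pow_zero, mul_one] at hzn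
          have hq : q' = q := by
            have h1 := hyC.2.1
            have h2 := hyC.2.2.1
            simp at h1 h2; omega
          subst hq
          have h3 := hzn.of_inC hxi
          refine Or.inr (Or.inr (hleaf k rfl (Or.inr ⟨t', hLZ, ?_⟩)))
          exact cra t τ t' z x ht hτ (by omega) hσ hz hzn hzx
      · -- from a tree node
        have hstep : ∀ s' c', y = .node (J + 1) q s' c' → TA (s, c) (s', c') → y ∈ L2 := by
          rintro s' c' rfl hta
          refine ⟨k, s', c', rfl, hk, hkc.step hta ⟨hyP, ?_⟩⟩
          have := hyC.2.2.2
          rcases this with ⟨h1, -⟩ | ⟨-, h2⟩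
          · omega
          · exact h2
        rcases hxy with ⟨e, q1, k', he, hp⟩ | ⟨e, q1, k', rfl, hp⟩ | ⟨e, _, _, _, he, hp⟩ |
          ⟨e, _, _, _, rfl, hp⟩
        · simp only [An.node.injEq] at he
          obtain ⟨rfl, rfl, rfl, rfl⟩ := he
          rcases hp with ⟨rfl, rfl⟩ | ⟨hh, rfl⟩ | ⟨e0, t, e', h1, hLZ, h2, rfl⟩
          · exact Or.inl rfl
          · exfalso
            exact hc2 ⟨k, c, hk, Or.inl (by simpa [kl] using hh), hkc⟩
          · obtain rfl : J = e0 := by omega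
            by_cases hσ : σ t
            · exact Or.inr (Or.inl (hL1z _ t hyP hLZ.bd.2 hσ ⟨e', h2, rfl⟩))
            · exfalso
              exact hc2 ⟨k, c, hk, Or.inr ⟨t, hLZ, hσ⟩, hkc⟩
        · rcases hp with ⟨_, hh⟩ | ⟨_, hh⟩ | ⟨_, _, _, -, -, -, hh⟩ <;> cases hh
        · simp only [An.node.injEq] at he
          obtain ⟨h1, rfl, rfl, rfl⟩ := he
          rcases hp with ⟨_, rfl⟩ | ⟨_, rfl⟩
          · exact Or.inr (Or.inr (hstep _ _ (by rw [h1]) (Or.inl rfl)))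
          · exact absurd hyP hr
        · rcases hp with ⟨_, hh⟩ | ⟨_, hh⟩
          · simp only [An.node.injEq] at hh
            obtain ⟨h1, rfl, rfl, rfl⟩ := hh
            exact Or.inr (Or.inr (hstep _ _ (by rw [h1]) (Or.inr rfl)))
          · cases hh
  rcases hb.split with rfl | hb'
  · rcases hbL with h | ⟨t, τ, z, ht, hτ, hσ, hz, hzx⟩ | ⟨k, s, c, h, -⟩
    · simp at h
    · have := hzx.right.2.1; omega
    · cases h
  · rcases hbL with h | ⟨t, τ, z, ht, hτ, hσ, hz, hzx⟩ | ⟨k, s, c, h, -⟩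
    · obtain ⟨e, he, rfl⟩ := hb'
      simp only [An.rail.injEq] at h; omega
    · have hb'' : Zn h J (q * nn h + nn h) b := by rwa [Nat.add_mul, Nat.one_mul] at hb'
      have := hb''.of_inC hzx.right.2
      exact hN (cra t τ (nn h) z b ht hτ (by omega) hσ hz hb'' hzx)
    · obtain ⟨e, he, rfl⟩ := hb'
      cases h

end GC

namespace GC

theorem TA_Sh {h e q : ℕ} {u v : ℕ × ℕ} (hu : u.1 < h) (hv : v.1 < h) (ht : TA u v) :
    Sh h (.node (e + 1) q u.1 u.2) (.node (e + 1) q v.1 v.2) := by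
  rcases ht with rfl | rfl
  · exact Or.inl ⟨e, q, _, _, rfl, Or.inl ⟨hv, rfl⟩⟩
  · exact Or.inr ⟨e, q, _, _, rfl, Or.inl ⟨hu, rfl⟩⟩

theorem flemma_step {h J q : ℕ} (P : Bool → Set An) (hr : ∀ i, An.root ∉ P i)
    (hf : ∀ i, Far h (P i) (P (!i)))
    (ih : ∀ g i, Cross h (P i) J g → ¬ Cross h (P (!i)) J g)
    (hc : ∀ i, Cross h (P i) (J + 1) q) : False := by
  have hN := nn_add h
  refine tree_lemma h (fun i => TX h (P i) (J + 1) q) (fun i t => Cross h (P i) J (q * nn h + t))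
    ?_ ?_ ?_ ?_ ?_ ?_ ?_ ?_
  · rintro i u ⟨-, hu, -⟩; exact hu
  · rintro i u ⟨hu, -, -⟩ ⟨hu', -, -⟩
    exact (hf i _ hu _ hu').1 rfl
  · rintro i u v ⟨hu, h1, -⟩ ⟨hv, h2, -⟩ hta
    exact (hf i _ hu _ hv).2.1 (TA_Sh h1 h2 hta)
  · rintro i u v w ⟨hu, h1, -⟩ ⟨hv, h2, -⟩ ht ht'
    rcases Nat.lt_or_ge w.1 h with hw | hw
    · exact (hf i _ hu _ hv).2.2 _ (TA_Sh h1 hw ht) (TA_Sh h2 hw ht')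
    · refine (hf i _ hu _ hv).2.2 .root (Or.inl ⟨J, q, _, _, rfl, Or.inr ⟨?_, rfl⟩⟩)
        (Or.inl ⟨J, q, _, _, rfl, Or.inr ⟨?_, rfl⟩⟩)
      · rcases ht with rfl | rfl
        · simp only at hw; omega
        · simp only at h1; omega
      · rcases ht' with rfl | rfl
        · simp only at hw; omega
        · simp only at h2; omega
  · intro i t h1 h2; exact ih _ i h1 h2
  · intro i k hk
    rcases gcut (hr i) (hc i) (fun t => t ≤ 2 * k) (by simp) (by omega) with
      ⟨t, ht, hfl, hcr⟩ | ⟨c, c', h1, h2, hj⟩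
    · left
      obtain rfl : t = 2 * k := by omega
      exact hcr
    · right
      refine ⟨c, c', ?_, ?_, hj⟩
      · rcases h1 with h1 | ⟨t, ⟨-, h1⟩, h3⟩ <;> omega
      · rcases h2 with h2 | ⟨t, ⟨-, h2⟩, h3⟩ <;> omega
  · intro i k hk
    rcases gcut (hr i) (hc i) (fun t => t ≤ 2 * k + 1) (by simp) (by omega) with
      ⟨t, ht, hfl, hcr⟩ | ⟨c, c', h1, h2, hj⟩
    · left
      obtain rfl : t = 2 * k + 1 := by omega
      exact hcr
    · right
      refine ⟨c, c', ?_, ?_, hj⟩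
      · rcases h1 with h1 | ⟨t, ⟨-, h1⟩, h3⟩ <;> omega
      · rcases h2 with h2 | ⟨t, ⟨-, h2⟩, h3⟩ <;> omega
  · intro i k hk
    rcases gcut (hr i) (hc i) (fun t => t ≤ 2 * k ∨ t = 2 * k + 2) (by simp) (by omega) with
      ⟨t, ht, hfl, hcr⟩ | ⟨c, c', h1, h2, hj⟩
    · have : t = 2 * k ∨ t = 2 * k + 1 ∨ t = 2 * k + 2 := by omega
      rcases this with rfl | rfl | rfl
      · exact Or.inl hcr
      · exact Or.inr (Or.inl hcr)
      · exact Or.inr (Or.inr (Or.inl hcr))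
    · right; right; right
      refine ⟨c, c', ?_, ?_, hj⟩
      · rcases h1 with h1 | ⟨t, ⟨-, h1⟩, h3⟩ <;> omega
      · rcases h2 with h2 | ⟨t, ⟨-, h2⟩, h3⟩ <;> omega

theorem cross_zero {h g : ℕ} {P : Set An} (hc : Cross h P 0 g) : An.node 0 g 0 0 ∈ P := by
  obtain ⟨a, b, ⟨e, he, rfl⟩, ⟨e', he', rfl⟩, hc⟩ := hc
  obtain rfl : e = 0 := by omega
  obtain rfl : e' = 0 := by omega
  simp only [Nat.sub_self, pow_zero, mul_one] at hc
  by_contra hno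
  have := hc.cut {x | x = .rail 0 g} rfl ?_
  · simp at this
  · rintro x y rfl - ⟨hyP, hyC⟩ hxy
    exfalso
    rcases hxy with ⟨e, q1, k, he, -⟩ | ⟨e, q1, k, rfl, hp⟩ | ⟨e, _, _, _, he, -⟩ | ⟨e, _, _, _, he, hp⟩
    · cases he
    · obtain ⟨h1, h2, h3, h4⟩ := hyC
      obtain rfl : e = 0 := by omega
      simp only [Nat.sub_self, pow_zero, mul_one] at h2 h3
      obtain rfl : q1 = g := by omega
      rcases h4 with ⟨-, -, rfl⟩ | ⟨h4, -⟩
      · exact hno hyP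
      · omega
    · cases he
    · rcases hp with ⟨_, hh⟩ | ⟨_, hh⟩ <;> cases hh

theorem flemma' {h : ℕ} (P : Bool → Set An) (hr : ∀ i, An.root ∉ P i)
    (hf : ∀ i, Far h (P i) (P (!i))) : ∀ J g, ¬ ∀ i, Cross h (P i) J g := by
  intro J
  induction J with
  | zero =>
    intro g hc
    exact (hf true _ (cross_zero (hc true)) _ (cross_zero (hc _))).1 rfl
  | succ J ih =>
    intro q hc
    refine flemma_step P hr hf ?_ hc
    intro g i h1 h2
    refine ih g (fun j => ?_)
    by_cases e : j = i
    · rw [e]; exact h1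
    · have : j = !i := by revert e; cases i <;> cases j <;> simp
      rw [this]; exact h2

theorem flemma {h : ℕ} {P Q : Set An} (hP : An.root ∉ P) (hQ : An.root ∉ Q)
    (hf : Far h P Q) (J g : ℕ) (h1 : Cross h P J g) : ¬ Cross h Q J g := by
  intro h2
  refine flemma' (h := h) (fun i => if i then P else Q) ?_ ?_ J g ?_
  · intro i; cases i <;> simpa
  · intro i; cases i
    · simpa using hf.symm
    · simpa using hf
  · intro i; cases i <;> simpa

end GC

namespace GC

def rg0 (h q s a : ℕ) : ℕ := q * nn h + 2 * (a * 2 ^ s)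
def rg1 (h q s a : ℕ) : ℕ := q * nn h + 2 * ((a + 1) * 2 ^ s) - 1

def RR (h J q s a : ℕ) (x : An) : Prop :=
  (∃ t b, x = .node (J + 1) q t b ∧ t ≤ s ∧ b / 2 ^ (s - t) = a ∧ wf h (J + 1) t b) ∨
  ∃ g, rg0 h q s a ≤ g ∧ g < rg1 h q s a ∧ InC h J g x

def RP (h J q s a : ℕ) (x : An) : Prop :=
  RR h J q s a x ∨ (∃ g, g + 1 = rg0 h q s a ∧ InC h J g x ∧ ¬ Zn h J g x) ∨
    (InC h J (rg1 h q s a) x ∧ ¬ Zn h J (rg1 h q s a + 1) x)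

def Lf (h J g : ℕ) (y : An) : Prop := ∃ e0 q k t, y = .node (e0 + 1) q 0 k ∧ J ≤ e0 ∧ LZ h k t ∧
  g = (q * nn h + t) * nn h ^ (e0 - J)

theorem LZ.uniq {h k k' t : ℕ} (h1 : LZ h k t) (h2 : LZ h k' t) : k = k' := by
  obtain ⟨_, h1⟩ := h1
  obtain ⟨_, h2⟩ := h2
  omega

theorem Lf.uniq {h J g : ℕ} {y y' : An} (h1 : Lf h J g y) (h2 : Lf h J g y') : y = y' := by
  obtain ⟨e0, q, k, t, rfl, he, hl, rfl⟩ := h1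
  obtain ⟨e1, q', k', t', rfl, he', hl', hh⟩ := h2
  wlog hle : e0 ≤ e1 generalizing e0 e1 q q' k k' t t'
  · exact (this e1 q' k' t' he' hl' e0 q k t he hl hh.symm (by omega)).symm
  have e : nn h ^ (e1 - J) = nn h ^ (e1 - e0) * nn h ^ (e0 - J) := by
    rw [← pow_add]; congr 1; omega
  rw [e, ← mul_assoc] at hh
  have h3 := Nat.eq_of_mul_eq_mul_right (pwpos h _) hh
  obtain ⟨rfl, rfl, rfl⟩ := zone_inner hle hl' hl.bd.1 hl.bd.2 h3.symm
  rw [hl.uniq hl']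

theorem node_in {h J : ℕ} {y : An} (hn : IsNode y) (hl : lv y ≤ J) (hw : Awf h y) :
    ∃ g, InC h J g y := by
  obtain ⟨e, q, s, a, rfl⟩ := hn
  have hp := pwpos h (J - e)
  refine ⟨q / nn h ^ (J - e), hl, Nat.div_mul_le_self _ _, ?_, hw⟩
  rw [Nat.add_mul, Nat.one_mul, Nat.succ_le_iff]
  exact Nat.lt_div_mul_add hp

set_option maxHeartbeats 4000000 in
theorem exit_lemma {h J q s a : ℕ} {P : Set An} (hs : s ≤ h) (ha : a < 2 ^ (h - s))
    (hg0 : 1 ≤ rg0 h q s a)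
    (hw : ∀ x ∈ P, Awf h x) (hr : An.root ∉ P) (hx : An.node (J + 1) q s a ∉ P)
    (hf : An.node (J + 1) q 0 (a * 2 ^ s) ∉ P)
    (hl : An.node (J + 1) q 0 ((a + 1) * 2 ^ s - 1) ∉ P)
    (hl0 : ∀ y ∈ P, ¬ Lf h J (rg0 h q s a) y) (hl1 : ∀ y ∈ P, ¬ Lf h J (rg1 h q s a) y)
    (hc0 : ¬ Cross h P J (rg0 h q s a - 1)) (hc1 : ¬ Cross h P J (rg1 h q s a))
    {x0 b0 : An} (hx0 : RR h J q s a x0) (hcn : Cn (Pat h) P x0 b0) : RP h J q s a b0 := by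
  have hs0 : 0 < 2 ^ s := by positivity
  have hK : (a + 1) * 2 ^ s ≤ 2 ^ h := by
    have : 2 ^ h = 2 ^ (h - s) * 2 ^ s := by rw [← pow_add]; congr 1; omega
    rw [this]; exact Nat.mul_le_mul_right _ ha
  have hFL : a * 2 ^ s + 1 ≤ (a + 1) * 2 ^ s := by rw [Nat.add_mul]; omega
  have hdiv : ∀ k, k / 2 ^ s = a ↔ a * 2 ^ s ≤ k ∧ k < (a + 1) * 2 ^ s := by
    intro k
    rw [← Nat.lt_succ_iff, Nat.succ_eq_add_one, ← Nat.div_lt_iff_lt_mul hs0,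
      Nat.lt_succ_iff, ← Nat.le_div_iff_mul_le hs0]
    omega
  have hg0' : rg0 h q s a = q * nn h + 2 * (a * 2 ^ s) := rfl
  have hg1' : rg1 h q s a = q * nn h + 2 * ((a + 1) * 2 ^ s) - 1 := rfl
  unfold RP
  unfold RR at hx0 ⊢
  generalize rg0 h q s a = g0 at hg0 hl0 hc0 hx0 hg0' ⊢
  generalize rg1 h q s a = g1 at hl1 hc1 hx0 hg1' ⊢
  generalize a * 2 ^ s = F at hf hFL hdiv hg0'
  generalize (a + 1) * 2 ^ s = L at hl hK hFL hdiv hg1'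
  have hN := nn_add h
  -- sides
  let Sd : ℕ → ℕ → Prop := fun c ζ => (c + 1 = g0 ∧ ζ = g0) ∨ (c = g1 ∧ ζ = g1)
  have hcr : ∀ c ζ, Sd c ζ → ¬ Cross h P J c := by
    rintro c ζ (⟨h1, -⟩ | ⟨rfl, -⟩)
    · rwa [show c = g0 - 1 by omega]
    · exact hc1
  have hlf : ∀ c ζ y, Sd c ζ → y ∈ P → ¬ Lf h J ζ y := by
    rintro c ζ y (⟨-, rfl⟩ | ⟨-, rfl⟩) hy
    · exact hl0 y hy
    · exact hl1 y hy
  have hsd : ∀ c ζ, Sd c ζ → ζ = c ∨ ζ = c + 1 := by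
    rintro c ζ (⟨h1, rfl⟩ | ⟨rfl, rfl⟩) <;> omega
  let RA : An → Prop := fun x =>
    ∃ t b, x = .node (J + 1) q t b ∧ t ≤ s ∧ b / 2 ^ (s - t) = a ∧ wf h (J + 1) t b
  let RB : An → Prop := fun x => ∃ g, g0 ≤ g ∧ g < g1 ∧ InC h J g x
  let LS : An → Prop := fun x => ∃ c ζ z, Sd c ζ ∧ Zn h J ζ z ∧
    Cn (Pat h) (P ∩ {x | InC h J c x}) z x
  have key : (RA b0 ∨ RB b0) ∨ LS b0 := by
    refine hcn.cut {x | (RA x ∨ RB x) ∨ LS x} (Or.inl hx0) ?_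
    rintro x y hxL hxP hyP hxy
    have hyr : y ≠ .root := fun e => hr (e ▸ hyP)
    have hxr : x ≠ .root := fun e => hr (e ▸ hxP)
    have hyw := hw y hyP
    have hxw := hw x hxP
    rcases hxL with (⟨t, b, rfl, hts, hb, hwf⟩ | ⟨g, hg1, hg2, hxg⟩) | ⟨c, ζ, z, hsc, hz, hzx⟩
    · -- tree node
      left
      rcases hxy with ⟨e, q1, k, he, hp⟩ | ⟨e, q1, k, rfl, hp⟩ | ⟨e, _, _, _, he, hp⟩ |
          ⟨e, _, _, _, rfl, hp⟩
      · simp only [An.node.injEq] at he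
        obtain ⟨rfl, rfl, rfl, rfl⟩ := he
        have hb2 := (hdiv b).1 hb
        have hbF : b ≠ F := by rintro rfl; exact hf hxP
        have hbL : b ≠ L - 1 := by rintro rfl; exact hl hxP
        rcases hp with ⟨rfl, rfl⟩ | ⟨hh, rfl⟩ | ⟨e0, t, e', h1, hLZ, h2, rfl⟩
        · omega
        · simp [kl] at hh; omega
        · obtain rfl : J = e0 := by omega
          right
          refine ⟨q * nn h + t, ?_, ?_, Zn.inC ⟨e', h2, rfl⟩⟩
          · rcases hLZ.2 with h3 | h3 <;> omega
          · rcases hLZ.2 with h3 | h3 <;> omega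
      · rcases hp with ⟨_, hh⟩ | ⟨_, hh⟩ | ⟨_, _, _, -, -, -, hh⟩ <;> cases hh
      · simp only [An.node.injEq] at he
        obtain ⟨h1, rfl, rfl, rfl⟩ := he
        obtain rfl : J = e := by omega
        rcases hp with ⟨_, rfl⟩ | ⟨_, rfl⟩
        · left
          have hlt : t < s := by
            rcases hts.eq_or_lt with rfl | hlt
            · simp at hb; subst hb; exact absurd hxP hx
            · exact hlt
          refine ⟨t + 1, b / 2, rfl, hlt, ?_, hyw⟩
          rw [Nat.div_div_eq_div_mul, ← pow_succ', ← hb]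
          congr 2; omega
        · exact absurd rfl hyr
      · rcases hp with ⟨_, hh⟩ | ⟨_, hh⟩
        · simp only [An.node.injEq] at hh
          obtain ⟨h1, rfl, rfl, rfl⟩ := hh
          obtain rfl : J = e := by omega
          left
          refine ⟨_, _, rfl, by omega, ?_, hyw⟩
          rw [← hb, Nat.div_div_eq_div_mul, ← pow_succ']
          congr 2; omega
        · cases hh
    · have hxl := hxg.lvle
      by_cases hyl : lv y ≤ J
      · rcases hxy.node_or with hn | hn
        · exact Or.inl (Or.inr ⟨g, hg1, hg2, hxg.node_nb hn hxy hyl hyr hyw⟩)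
        · obtain ⟨g', hy'⟩ := node_in hn hyl hyw
          have hx' := hy'.node_nb hn (Pat.symm _ _ hxy) hxl hxr hxw
          by_cases hin : g0 ≤ g' ∧ g' < g1
          · exact Or.inl (Or.inr ⟨g', hin.1, hin.2, hy'⟩)
          · obtain ⟨τ, hτ, h1, h2⟩ := hxg.two hx' (by omega)
            refine Or.inr ⟨g', τ, x, ?_, hτ, Cn.single ⟨hxP, hx'⟩ hxy ⟨hyP, hy'⟩⟩
            show (g' + 1 = g0 ∧ τ = g0) ∨ (g' = g1 ∧ τ = g1)
            omega
      · obtain ⟨e0, q', k, t', rfl, he0, hLZ, hzn⟩ := hxy.up hxr hxl (by omega)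
        have h3 := hzn.of_inC hxg
        by_cases e1 : (q' * nn h + t') * nn h ^ (e0 - J) = g0
        · exact absurd ⟨e0, q', k, t', rfl, he0, hLZ, e1.symm⟩ (hl0 _ hyP)
        by_cases e2 : (q' * nn h + t') * nn h ^ (e0 - J) = g1
        · exact absurd ⟨e0, q', k, t', rfl, he0, hLZ, e2.symm⟩ (hl1 _ hyP)
        obtain ⟨t2, ht2⟩ : ∃ t2, (q' * nn h + t') * nn h ^ (e0 - J) = q * nn h + t2 :=
          ⟨(q' * nn h + t') * nn h ^ (e0 - J) - q * nn h, by omega⟩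
        have hb1 : g0 < q * nn h + t2 ∧ q * nn h + t2 < g1 := by
          clear hx0; omega
        have hb2 : 1 ≤ t2 ∧ t2 < nn h := by clear hx0; omega
        obtain ⟨rfl, rfl, rfl⟩ := zone_inner he0 hLZ hb2.1 hb2.2 ht2
        refine Or.inl (Or.inl ⟨0, k, rfl, Nat.zero_le _, ?_, hyw⟩)
        refine (hdiv k).2 ?_
        clear hx0 h3 ht2 e1 e2
        have h4 := hLZ.2
        clear hLZ
        omega
    · have hxc : InC h J c x := hzx.right.2
      have hxl := hxc.lvle
      have hzz : ∀ τ, (τ = c ∨ τ = c + 1) → Zn h J τ x → τ = ζ := by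
        intro τ h1 h2
        by_contra hne
        exact hcr c ζ hsc (cross_of (Ne.symm hne) hz h2 (hsd c ζ hsc) h1 hzx)
      by_cases hyl : lv y ≤ J
      · rcases hxy.node_or with hn | hn
        · exact Or.inr ⟨c, ζ, z, hsc, hz, hzx.step hxy ⟨hyP, hxc.node_nb hn hxy hyl hyr hyw⟩⟩
        · obtain ⟨g', hy'⟩ := node_in hn hyl hyw
          have hx' := hy'.node_nb hn (Pat.symm _ _ hxy) hxl hxr hxw
          by_cases hcg : g' = c
          · subst hcg
            exact Or.inr ⟨g', ζ, z, hsc, hz, hzx.step hxy ⟨hyP, hy'⟩⟩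
          · obtain ⟨τ, hτ, h1, h2⟩ := hxc.two hx' (by omega)
            have := hzz τ h1 hτ
            refine Or.inl (Or.inr ⟨g', ?_, ?_, hy'⟩)
            · rcases hsc with h | h <;> omega
            · rcases hsc with h | h <;> omega
      · obtain ⟨e0, q', k, t', rfl, he0, hLZ, hzn⟩ := hxy.up hxr hxl (by omega)
        have h3 := hzn.of_inC hxc
        have h4 := hzz _ h3 hzn
        exact absurd ⟨e0, q', k, t', rfl, he0, hLZ, h4.symm⟩ (hlf c ζ _ hsc hyP)
  rcases key with h | ⟨c, ζ, z, hsc, hz, hzx⟩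
  · exact Or.inl h
  · have hzz : ∀ τ, (τ = c ∨ τ = c + 1) → Zn h J τ b0 → τ = ζ := by
      intro τ h1 h2
      by_contra hne
      exact hcr c ζ hsc (cross_of (Ne.symm hne) hz h2 (hsd c ζ hsc) h1 hzx)
    right
    rcases hsc with ⟨h1, h2⟩ | ⟨rfl, rfl⟩
    · refine Or.inl ⟨c, h1, hzx.right.2, fun hh => ?_⟩
      have := hzz c (Or.inl rfl) hh; omega
    · refine Or.inr ⟨hzx.right.2, fun hh => ?_⟩
      have := hzz (ζ + 1) (Or.inr rfl) hh; omega

/-- everything in a copy is in the root region, or one of three exceptions -/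
theorem copy_cover {h J g : ℕ} {x : An} (hx : InC h J g x) :
    (∃ J', J = J' + 1 ∧ RR h J' g h 0 x) ∨ x ∈ [An.rail J g, .rail J (g + 1), .node 0 g 0 0] := by
  have hN := nn_add h
  have hsubc : ∀ J', J = J' + 1 → lv x ≤ J' → RR h J' g h 0 x := by
    rintro J' rfl hl
    obtain ⟨t, ht, hi⟩ := hx.sub hl
    refine Or.inr ⟨g * nn h + t, ?_, ?_, hi⟩
    · unfold rg0; omega
    · unfold rg1; omega
  by_cases hl : lv x < J
  · left
    exact ⟨J - 1, by omega, hsubc _ (by omega) (by omega)⟩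
  have hl' : lv x = J := le_antisymm hx.lvle (by omega)
  cases x with
  | root => exact hx.elim
  | rail e p =>
    right
    simp only [lv] at hl'
    subst hl'
    obtain ⟨-, h1, h2⟩ := hx
    simp at h1 h2
    have : p = g ∨ p = g + 1 := by omega
    rcases this with rfl | rfl <;> simp
  | node e q s a =>
    simp only [lv] at hl'
    subst hl'
    obtain ⟨-, h1, h2, h3⟩ := hx
    simp at h1 h2
    obtain rfl : q = g := by omega
    rcases h3 with ⟨rfl, rfl, rfl⟩ | ⟨he, h4, h5⟩
    · right; simp
    · left
      obtain ⟨J', rfl⟩ : ∃ J', e = J' + 1 := ⟨e - 1, by omega⟩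
      exact ⟨J', rfl, Or.inl ⟨s, a, rfl, h4.le, by rw [Nat.div_eq_of_lt h5], Or.inr ⟨he, h4, h5⟩⟩⟩

theorem cover_succ {h J q s a : ℕ} {x : An} (hx : RP h J q (s + 1) a x) (hg : 1 ≤ rg0 h q (s + 1) a) :
    x = .node (J + 1) q (s + 1) a ∨ RR h J q s (2 * a) x ∨ RR h J q s (2 * a + 1) x ∨
    InC h J (rg0 h q (s + 1) a - 1) x ∨ InC h J (rg1 h q s (2 * a)) x ∨
    InC h J (rg1 h q (s + 1) a) x := by
  have hs0 : 0 < 2 ^ s := by positivity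
  rcases hx with (⟨t, b, rfl, hts, hb, hwf⟩ | ⟨g, hg1, hg2, hxg⟩) | ⟨g, h1, h2, -⟩ | ⟨h1, -⟩
  · rcases hts.eq_or_lt with rfl | hlt
    · left; simp at hb; rw [hb]
    · have e : b / 2 ^ (s - t) / 2 = a := by
        rw [Nat.div_div_eq_div_mul, ← pow_succ, ← hb]; congr 2; omega
      have : b / 2 ^ (s - t) = 2 * a ∨ b / 2 ^ (s - t) = 2 * a + 1 := by omega
      rcases this with e | e
      · exact Or.inr (Or.inl (Or.inl ⟨t, b, rfl, by omega, e, hwf⟩))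
      · exact Or.inr (Or.inr (Or.inl (Or.inl ⟨t, b, rfl, by omega, e, hwf⟩)))
  · have e1 : a * 2 ^ (s + 1) = 2 * a * 2 ^ s := by ring
    have e2 : (a + 1) * 2 ^ (s + 1) = (2 * a + 1 + 1) * 2 ^ s := by ring
    have e3 : (2 * a + 1) * 2 ^ s = 2 * a * 2 ^ s + 2 ^ s := by ring
    have e4 : (2 * a + 1 + 1) * 2 ^ s = 2 * a * 2 ^ s + 2 * 2 ^ s := by ring
    unfold rg0 at hg1
    unfold rg1 at hg2
    rw [e1] at hg1
    rw [e2, e4] at hg2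
    rcases lt_trichotomy g (rg1 h q s (2 * a)) with hlt | heq | hgt
    · exact Or.inr (Or.inl (Or.inr ⟨g, hg1, hlt, hxg⟩))
    · subst heq
      exact Or.inr (Or.inr (Or.inr (Or.inr (Or.inl hxg))))
    · refine Or.inr (Or.inr (Or.inl (Or.inr ⟨g, ?_, ?_, hxg⟩)))
      · unfold rg1 at hgt; unfold rg0; omega
      · unfold rg1; omega
  · right; right; right; left
    rwa [show rg0 h q (s + 1) a - 1 = g by omega]
  · exact Or.inr (Or.inr (Or.inr (Or.inr (Or.inr h1))))

theorem cover_zero {h J q a : ℕ} {x : An} (hx : RP h J q 0 a x) (hg : 1 ≤ rg0 h q 0 a) :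
    x = .node (J + 1) q 0 a ∨
    InC h J (rg0 h q 0 a - 1) x ∨ InC h J (rg0 h q 0 a) x ∨
    InC h J (rg1 h q 0 a) x := by
  rcases hx with (⟨t, b, rfl, hts, hb, hwf⟩ | ⟨g, hg1, hg2, hxg⟩) | ⟨g, h1, h2, -⟩ | ⟨h1, -⟩
  · left
    obtain rfl : t = 0 := by omega
    simp at hb; rw [hb]
  · right; right; left
    have : g = rg0 h q 0 a := by unfold rg0 rg1 at *; omega
    rwa [← this]
  · right; left
    rwa [show rg0 h q 0 a - 1 = g by omega]
  · exact Or.inr (Or.inr (Or.inr h1))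

end GC

namespace GC

open Classical in
noncomputable def cnt (x : Fin 154 → An) (p : An → Prop) : ℕ :=
  (Finset.univ.filter (fun c => p (x c))).card

theorem cnt_mono {x : Fin 154 → An} {p q : An → Prop} (h : ∀ c, p (x c) → q (x c)) :
    cnt x p ≤ cnt x q := by
  classical
  apply Finset.card_le_card
  intro c hc
  simp only [Finset.mem_filter, Finset.mem_univ, true_and] at *
  exact h c hc

theorem cnt_or {x : Fin 154 → An} {p q : An → Prop} :
    cnt x (fun a => p a ∨ q a) ≤ cnt x p + cnt x q := by
  classical
  unfold cnt
  refine le_trans (Finset.card_le_card ?_) (Finset.card_union_le _ _)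
  intro c hc
  simpa using hc

theorem cnt_eq {x : Fin 154 → An} (hx : Function.Injective x) (y : An) :
    cnt x (fun a => a = y) ≤ 1 := by
  classical
  unfold cnt
  rw [Finset.card_le_one]
  intro a ha b hb
  simp only [Finset.mem_filter, Finset.mem_univ, true_and] at *
  exact hx (ha.trans hb.symm)

theorem cnt_list {x : Fin 154 → An} (hx : Function.Injective x) (l : List An) :
    cnt x (fun a => a ∈ l) ≤ l.length := by
  induction l with
  | nil => simp [cnt]
  | cons y l ih =>
    have h1 := cnt_mono (x := x) (p := fun a => a ∈ y :: l) (q := fun a => a = y ∨ a ∈ l)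
      (fun c hc => List.mem_cons.1 hc)
    have h2 := cnt_or (x := x) (p := fun a => a = y) (q := fun a => a ∈ l)
    have h3 := cnt_eq hx y
    simp only [List.length_cons]
    omega

theorem cnt_not {x : Fin 154 → An} (p : An → Prop) :
    cnt x p + cnt x (fun a => ¬ p a) = 154 := by
  classical
  unfold cnt
  have := Finset.card_filter_add_card_filter_not (s := (Finset.univ : Finset (Fin 154)))
    (fun c => p (x c))
  simpa using this

def Link (h : ℕ) (x : Fin 154 → An) : Prop :=
  ∀ (l : ℕ) (A B : Finset (Fin 154)), A.card = l → B.card = l →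
    ∃ P : Fin l → Set An, (∀ i, ∀ y ∈ P i, Awf h y) ∧ (∀ i j, i ≠ j → Far h (P i) (P j)) ∧
      ∀ i, ∃ a ∈ A, ∃ b ∈ B, Cn (Pat h) (P i) (x a) (x b)

theorem Far.no {h : ℕ} {P Q : Set An} (hf : Far h P Q) {y : An} (h1 : y ∈ P) (h2 : y ∈ Q) : False :=
  (hf y h1 y h2).1 rfl

def TT (h J q s a : ℕ) : Fin 8 → Set An → Prop
  | 0, P => An.root ∈ P
  | 1, P => An.node (J + 1) q s a ∈ P
  | 2, P => An.node (J + 1) q 0 (a * 2 ^ s) ∈ P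
  | 3, P => An.node (J + 1) q 0 ((a + 1) * 2 ^ s - 1) ∈ P
  | 4, P => ∃ y ∈ P, Lf h J (rg0 h q s a) y
  | 5, P => ∃ y ∈ P, Lf h J (rg1 h q s a) y
  | 6, P => An.root ∉ P ∧ Cross h P J (rg0 h q s a - 1)
  | 7, P => An.root ∉ P ∧ Cross h P J (rg1 h q s a)

theorem TT.excl {h J q s a : ℕ} {P Q : Set An} (hf : Far h P Q) (i : Fin 8)
    (h1 : TT h J q s a i P) (h2 : TT h J q s a i Q) : False := by
  fin_cases i
  · exact hf.no h1 h2
  · exact hf.no h1 h2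
  · exact hf.no h1 h2
  · exact hf.no h1 h2
  · obtain ⟨y, hy, h1⟩ := h1
    obtain ⟨y', hy', h2⟩ := h2
    obtain rfl := h1.uniq h2
    exact hf.no hy hy'
  · obtain ⟨y, hy, h1⟩ := h1
    obtain ⟨y', hy', h2⟩ := h2
    obtain rfl := h1.uniq h2
    exact hf.no hy hy'
  · exact flemma h1.1 h2.1 hf _ _ h1.2 h2.2
  · exact flemma h1.1 h2.1 hf _ _ h1.2 h2.2

theorem dich {h : ℕ} {x : Fin 154 → An} (hL : Link h x) {J q s a : ℕ} (hs : s ≤ h)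
    (ha : a < 2 ^ (h - s)) (hg0 : 1 ≤ rg0 h q s a) (h1 : 8 < cnt x (fun y => ¬ RP h J q s a y)) :
    cnt x (RR h J q s a) ≤ 8 := by
  classical
  by_contra h2
  obtain ⟨A, hA, hAc⟩ := Finset.exists_subset_card_eq (show 9 ≤ _ from (not_le.1 h2))
  obtain ⟨B, hB, hBc⟩ := Finset.exists_subset_card_eq (show 9 ≤ _ from h1)
  obtain ⟨P, hw, hf, hP⟩ := hL 9 A B hAc hBc
  have key : ∀ i, ∃ j, TT h J q s a j (P i) := by
    intro i
    by_contra hcon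
    push Not at hcon
    obtain ⟨c, hc, b, hb, hcn⟩ := hP i
    have hc' := hA hc
    have hb' := hB hb
    simp only [Finset.mem_filter, Finset.mem_univ, true_and] at hc' hb'
    have hr : An.root ∉ P i := hcon 0
    refine hb' (exit_lemma hs ha hg0 (hw i) hr (hcon 1) (hcon 2) (hcon 3) ?_ ?_ ?_ ?_ hc' hcn)
    · intro y hy hl; exact hcon 4 ⟨y, hy, hl⟩
    · intro y hy hl; exact hcon 5 ⟨y, hy, hl⟩
    · intro hh; exact hcon 6 ⟨hr, hh⟩
    · intro hh; exact hcon 7 ⟨hr, hh⟩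
  choose f hff using key
  obtain ⟨i, j, hij, he⟩ := Fintype.exists_ne_map_eq_of_card_lt f (by simp)
  exact TT.excl (hf i j hij) (f i) (hff i) (he ▸ hff j)

theorem copy_cnt {h : ℕ} {x : Fin 154 → An} (hx : Function.Injective x) (J g : ℕ)
    (hJ : ∀ J', J = J' + 1 → cnt x (RR h J' g h 0) ≤ 8) : cnt x (InC h J g) ≤ 11 := by
  have h1 := cnt_mono (x := x) (p := InC h J g) (q := fun y => (∃ J', J = J' + 1 ∧ RR h J' g h 0 y)
    ∨ y ∈ [An.rail J g, .rail J (g + 1), .node 0 g 0 0]) (fun c hc => copy_cover hc)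
  have h2 := cnt_or (x := x) (p := fun y => (∃ J', J = J' + 1 ∧ RR h J' g h 0 y))
    (q := fun y => y ∈ [An.rail J g, .rail J (g + 1), .node 0 g 0 0])
  have h3 := cnt_list hx [An.rail J g, .rail J (g + 1), .node 0 g 0 0]
  simp only [List.length_cons, List.length_nil] at h3
  have h4 : cnt x (fun y => (∃ J', J = J' + 1 ∧ RR h J' g h 0 y)) ≤ 8 := by
    cases J with
    | zero => simp [cnt]
    | succ J =>
      refine le_trans (cnt_mono ?_) (hJ J rfl)
      rintro c ⟨J', h5, h6⟩
      obtain rfl : J = J' := by omega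
      exact h6
  omega

theorem regions {h : ℕ} (hh : 1 ≤ h) {x : Fin 154 → An} (hx : Function.Injective x) (hL : Link h x) :
    ∀ J s q a, s ≤ h → a < 2 ^ (h - s) → 1 ≤ q → 8 < cnt x (fun y => ¬ RP h J q s a y) := by
  have hN : 3 ≤ nn h := by
    have := nn_add h
    have : 2 ^ 1 ≤ 2 ^ h := Nat.pow_le_pow_right (by omega) hh
    omega
  have hr0 : ∀ q s a, 1 ≤ q → 3 ≤ rg0 h q s a := by
    intro q s a hq
    unfold rg0
    have := Nat.mul_le_mul_right (nn h) hq
    omega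
  have hr1 : ∀ q s a, 1 ≤ q → 1 ≤ rg1 h q s a := by
    intro q s a hq
    unfold rg1
    have := Nat.mul_le_mul_right (nn h) hq
    omega
  intro J
  induction J using Nat.strong_induction_on with
  | _ J ihJ =>
  have hcopy : ∀ g, 1 ≤ g → cnt x (InC h J g) ≤ 11 := by
    intro g hg
    refine copy_cnt hx J g ?_
    rintro J' rfl
    have := hr0 g h 0 hg
    exact dich hL le_rfl (by simp) (by omega) (ihJ J' (by omega) h g 0 le_rfl (by simp) hg)
  intro s
  induction s with
  | zero =>
    intro q a hs ha hq
    by_contra hcon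
    have h0 := cnt_not (x := x) (RP h J q 0 a)
    have hr := hr0 q 0 a hq
    have h1 := hcopy (rg0 h q 0 a - 1) (by omega)
    have h2 := hcopy (rg0 h q 0 a) (by omega)
    have h3 := hcopy (rg1 h q 0 a) (hr1 _ _ _ hq)
    have h4 := cnt_eq hx (.node (J + 1) q 0 a)
    have h5 := cnt_mono (x := x) (q := fun y => y = .node (J + 1) q 0 a ∨
      InC h J (rg0 h q 0 a - 1) y ∨ InC h J (rg0 h q 0 a) y ∨ InC h J (rg1 h q 0 a) y)
      (fun c (hc : RP h J q 0 a (x c)) => cover_zero hc (by omega))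
    have h6 := h5.trans cnt_or
    have h7 := h6.trans (Nat.add_le_add_left cnt_or _)
    have h8 := h7.trans (Nat.add_le_add_left (Nat.add_le_add_left cnt_or _) _)
    omega
  | succ s ih =>
    intro q a hs ha hq
    by_contra hcon
    have h0 := cnt_not (x := x) (RP h J q (s + 1) a)
    have hr := hr0 q (s + 1) a hq
    have hp : 2 ^ (h - s) = 2 * 2 ^ (h - (s + 1)) := by
      rw [← pow_succ']; congr 1; omega
    have h1 := hcopy (rg0 h q (s + 1) a - 1) (by omega)
    have h2 := hcopy (rg1 h q s (2 * a)) (hr1 _ _ _ hq)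
    have h3 := hcopy (rg1 h q (s + 1) a) (hr1 _ _ _ hq)
    have h4 := cnt_eq hx (.node (J + 1) q (s + 1) a)
    have ha' := hr0 q s (2 * a) hq
    have ha'' := hr0 q s (2 * a + 1) hq
    have d1 : cnt x (RR h J q s (2 * a)) ≤ 8 := dich hL (by omega) (by omega) (by omega)
      (ih q (2 * a) (by omega) (by omega) hq)
    have d2 : cnt x (RR h J q s (2 * a + 1)) ≤ 8 := dich hL (by omega) (by omega) (by omega)
      (ih q (2 * a + 1) (by omega) (by omega) hq)
    have h5 := cnt_mono (x := x) (q := fun y => y = .node (J + 1) q (s + 1) a ∨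
      RR h J q s (2 * a) y ∨ RR h J q s (2 * a + 1) y ∨ InC h J (rg0 h q (s + 1) a - 1) y ∨
      InC h J (rg1 h q s (2 * a)) y ∨ InC h J (rg1 h q (s + 1) a) y)
      (fun c (hc : RP h J q (s + 1) a (x c)) => cover_succ hc (by omega))
    have h6 := h5.trans cnt_or
    have h7 := h6.trans (Nat.add_le_add_left cnt_or _)
    have h8 := h7.trans (Nat.add_le_add_left (Nat.add_le_add_left cnt_or _) _)
    have h9 := h8.trans (Nat.add_le_add_left (Nat.add_le_add_left (Nat.add_le_add_left cnt_or _) _) _)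
    have h10 := h9.trans (Nat.add_le_add_left (Nat.add_le_add_left (Nat.add_le_add_left
      (Nat.add_le_add_left cnt_or _) _) _) _)
    omega

theorem no_link {h J : ℕ} (hh : 1 ≤ h) {x : Fin 154 → An} (hx : Function.Injective x)
    (hL : Link h x) (hv : ∀ c, InC h (J + 1) 1 (x c) ∨ x c = .root) : False := by
  have h1 := regions hh hx hL J h 1 0 le_rfl (by simp) le_rfl
  have h2 := cnt_list hx [An.root, An.rail (J + 1) 1, .rail (J + 1) (1 + 1), .node 0 1 0 0]
  have h3 : cnt x (fun y => ¬ RP h J 1 h 0 y) ≤ _ := cnt_mono (q := fun y => y ∈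
      [An.root, An.rail (J + 1) 1, .rail (J + 1) (1 + 1), .node 0 1 0 0]) (by
    intro c hc
    rcases hv c with hi | hi
    · rcases copy_cover hi with ⟨J', h4, h5⟩ | h4
      · obtain rfl : J = J' := by omega
        exact absurd (Or.inl h5) hc
      · exact List.mem_cons_of_mem _ h4
    · rw [hi]; simp)
  simp only [List.length_cons, List.length_nil] at h2
  omega

end GC

namespace GC

section util
variable {V : Type*} {G : SimpleGraph V}

theorem walk_cn {a b : V} (p : G.Walk a b) : Cn G.Adj (CGT.walkSupp p) a b := by
  induction p with
  | nil => exact Cn.refl (by simp [CGT.walkSupp])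
  | cons h p ih =>
    refine (Cn.single (by simp [CGT.walkSupp]) h (by simp [CGT.walkSupp])).trans (ih.mono ?_)
    intro x hx
    simp only [CGT.walkSupp, Set.mem_ofPred_eq, Walk.support_cons, List.mem_cons] at *
    exact Or.inr hx

theorem setconn_cn {U : Set V} (h : CGT.SetConn G U) {u v : V} (hu : u ∈ U) (hv : v ∈ U) :
    Cn G.Adj U u v := by
  obtain ⟨p⟩ := h.preconnected ⟨u, hu⟩ ⟨v, hv⟩
  have := walk_cn p
  have key : (⟨v, hv⟩ : U) ∈ {w : U | Cn G.Adj U u w.1} := by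
    refine this.cut _ (Cn.refl hu) ?_
    rintro x y hx - - hxy
    exact Cn.step hx (by simpa using hxy) y.2
  exact key

theorem cn_reach {U : Set V} {u v : V} (h : Cn G.Adj U u v) :
    ∃ (hu : u ∈ U) (hv : v ∈ U), (G.induce U).Reachable ⟨u, hu⟩ ⟨v, hv⟩ := by
  have : v ∈ {w | ∃ (hu : u ∈ U) (hv : w ∈ U), (G.induce U).Reachable ⟨u, hu⟩ ⟨w, hv⟩} := by
    refine h.cut _ ⟨h.left, h.left, Reachable.refl _⟩ ?_
    rintro x y ⟨h1, h2, h3⟩ - hy hxy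
    refine ⟨h1, hy, h3.trans (Adj.reachable ?_)⟩
    simpa using hxy
  exact this

theorem setconn_of {U : Set V} (hne : U.Nonempty) (h : ∀ u ∈ U, ∀ v ∈ U, Cn G.Adj U u v) :
    CGT.SetConn G U := by
  obtain ⟨w, hw⟩ := hne
  haveI : Nonempty U := ⟨⟨w, hw⟩⟩
  refine ⟨?_⟩
  rintro ⟨u, hu⟩ ⟨v, hv⟩
  obtain ⟨_, _, h3⟩ := cn_reach (h u hu v hv)
  exact h3

theorem sdist_le {K : ℕ} {U U' : Set V} (h : (K : ℕ∞) ≤ CGT.sDist G U U') {u v : V} (hu : u ∈ U)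
    (hv : v ∈ U') : (K : ℕ∞) ≤ G.edist u v :=
  h.trans ((iInf_le _ (⟨u, hu⟩ : U)).trans (iInf_le _ (⟨v, hv⟩ : U')))

theorem no3 {u : V} (h : ((3 : ℕ) : ℕ∞) ≤ G.edist u u) : False := by
  rw [edist_self] at h; simp at h

theorem no3' {u v : V} (h : ((3 : ℕ) : ℕ∞) ≤ G.edist u v) (ha : G.Adj u v) : False := by
  rw [edist_eq_one_iff_adj.2 ha] at h
  exact absurd h (by decide)

theorem no3'' {u v w : V} (h : ((3 : ℕ) : ℕ∞) ≤ G.edist u v) (ha : G.Adj u w) (hb : G.Adj w v) :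
    False := by
  have := G.edist_triangle (u := u) (v := w) (w := v)
  rw [edist_eq_one_iff_adj.2 ha, edist_eq_one_iff_adj.2 hb] at this
  exact absurd (h.trans this) (by decide)

end util

def Vd (h m : ℕ) (x : An) : Prop := InC h m 1 x ∨ x = .root

abbrev AV (h m : ℕ) := {x : An // Vd h m x}
abbrev EE (h m : ℕ) := {p : AV h m × AV h m // Inc h p.1.1 p.2.1}
abbrev LV (h m d : ℕ) := AV h m ⊕ (EE h m × Fin d)

def LR (h m d : ℕ) : LV h m d → LV h m d → Prop
  | .inl a, .inl b => Sh h a.1 b.1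
  | .inl a, .inr (p, i) => (a = p.1.1 ∧ i.1 = 0) ∨ (a = p.1.2 ∧ i.1 + 1 = d)
  | .inr (p, i), .inr (p', j) => p = p' ∧ i.1 + 1 = j.1
  | .inr _, .inl _ => False

def LG (h m d : ℕ) : SimpleGraph (LV h m d) := SimpleGraph.fromRel (LR h m d)

section lg
variable {h m d : ℕ}

theorem LG.ll {a b : AV h m} : (LG h m d).Adj (.inl a) (.inl b) ↔ a ≠ b ∧ Sh h a.1 b.1 := by
  simp only [LG, fromRel_adj, LR]
  constructor
  · rintro ⟨h1, h2⟩
    exact ⟨by simpa using h1, h2.elim id Sh.symm⟩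
  · rintro ⟨h1, h2⟩
    exact ⟨by simpa using h1, Or.inl h2⟩

theorem LG.lr {a : AV h m} {p : EE h m} {i : Fin d} : (LG h m d).Adj (.inl a) (.inr (p, i)) ↔
    (a = p.1.1 ∧ i.1 = 0) ∨ (a = p.1.2 ∧ i.1 + 1 = d) := by
  simp [LG, fromRel_adj, LR]

theorem LG.rr {p p' : EE h m} {i j : Fin d} : (LG h m d).Adj (.inr (p, i)) (.inr (p', j)) ↔
    p = p' ∧ (i.1 + 1 = j.1 ∨ j.1 + 1 = i.1) := by
  simp only [LG, fromRel_adj, LR]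
  constructor
  · rintro ⟨h1, ⟨h2, h3⟩ | ⟨h2, h3⟩⟩
    · exact ⟨h2, Or.inl h3⟩
    · exact ⟨h2.symm, Or.inr h3⟩
  · rintro ⟨rfl, h2⟩
    refine ⟨?_, by tauto⟩
    intro h3
    simp only [Sum.inr.injEq, Prod.mk.injEq, true_and] at h3
    subst h3
    omega

def tr (P : Set (LV h m d)) : Set An := {x | ∃ hx : Vd h m x, Sum.inl ⟨x, hx⟩ ∈ P}

theorem trace {P : Set (LV h m d)} {a b : AV h m} (hc : Cn (LG h m d).Adj P (.inl a) (.inl b)) :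
    Cn (Pat h) (tr P) a.1 b.1 := by
  let L : Set (LV h m d) := {w | (∀ y, w = .inl y → Cn (Pat h) (tr P) a.1 y.1) ∧
    ∀ p i, w = .inr (p, i) → Cn (Pat h) (tr P) a.1 p.1.1.1 ∨ Cn (Pat h) (tr P) a.1 p.1.2.1}
  have : Sum.inl b ∈ L := by
    refine hc.cut L ⟨?_, by simp⟩ ?_
    · intro y hy
      simp only [Sum.inl.injEq] at hy
      subst hy
      exact Cn.refl ⟨a.2, hc.left⟩
    · intro x y hx hxP hyP hxy
      rcases x with x | ⟨p, i⟩ <;> rcases y with y | ⟨p', j⟩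
      · have h1 := hx.1 x rfl
        refine ⟨?_, by simp⟩
        intro y' hy
        simp only [Sum.inl.injEq] at hy
        subst hy
        exact h1.step (Or.inr (Or.inr (LG.ll.1 hxy).2)) ⟨y.2, hyP⟩
      · have h1 := hx.1 x rfl
        refine ⟨by simp, ?_⟩
        intro p i he
        simp only [Sum.inr.injEq, Prod.mk.injEq] at he
        obtain ⟨rfl, rfl⟩ := he
        rcases LG.lr.1 hxy with ⟨rfl, -⟩ | ⟨rfl, -⟩
        · exact Or.inl h1
        · exact Or.inr h1
      · have h1 := hx.2 p i rfl
        refine ⟨?_, by simp⟩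
        intro y' hy
        simp only [Sum.inl.injEq] at hy
        subst hy
        rcases LG.lr.1 hxy.symm with ⟨rfl, -⟩ | ⟨rfl, -⟩
        · rcases h1 with h1 | h1
          · exact h1
          · exact h1.step (Or.inr (Or.inl p.2)) ⟨p.1.1.2, hyP⟩
        · rcases h1 with h1 | h1
          · exact h1.step (Or.inl p.2) ⟨p.1.2.2, hyP⟩
          · exact h1
      · have h1 := hx.2 p i rfl
        refine ⟨by simp, ?_⟩
        intro p2 i he
        simp only [Sum.inr.injEq, Prod.mk.injEq] at he
        obtain ⟨rfl, rfl⟩ := he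
        obtain ⟨rfl, -⟩ := LG.rr.1 hxy
        exact h1
  exact this.1 b rfl

theorem Sh.vd {a c : An} (ha : InC h m 1 a) (hs : Sh h a c) : Vd h m c := by
  rcases hs with ⟨e, q, s, k, rfl, hs⟩ | ⟨e, q, s, k, rfl, hs⟩
  · rcases hs with ⟨h1, rfl⟩ | ⟨-, rfl⟩
    · obtain ⟨h2, h3, h4, h5⟩ := ha
      refine Or.inl ⟨h2, h3, h4, Or.inr ⟨by omega, h1, ?_⟩⟩
      rcases h5 with ⟨h6, _⟩ | ⟨_, _, h7⟩
      · omega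
      · have : 2 ^ (h - s) = 2 * 2 ^ (h - (s + 1)) := by rw [← pow_succ']; congr 1; omega
        omega
    · exact Or.inr rfl
  · rcases hs with ⟨h1, rfl⟩ | ⟨-, rfl⟩
    · obtain ⟨h2, h3, h4, h5⟩ := ha
      refine Or.inl ⟨h2, h3, h4, Or.inr ⟨by omega, by omega, ?_⟩⟩
      rcases h5 with ⟨h6, _⟩ | ⟨_, _, h7⟩
      · omega
      · have : 2 ^ (h - s) = 2 * 2 ^ (h - (s + 1)) := by rw [← pow_succ']; congr 1; omega
        omega
    · exact ha.elim

theorem far_tr {P Q : Set (LV h m d)} (hPQ : ∀ u ∈ P, ∀ v ∈ Q, ((3 : ℕ) : ℕ∞) ≤ (LG h m d).edist u v) :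
    Far h (tr P) (tr Q) := by
  rintro a ⟨hav, haP⟩ b ⟨hbv, hbQ⟩
  have hd := hPQ _ haP _ hbQ
  have hab : a ≠ b := by rintro rfl; exact no3 hd
  refine ⟨hab, ?_, ?_⟩
  · intro hs
    exact no3' hd (LG.ll.2 ⟨by simpa using hab, hs⟩)
  · intro c hc hc'
    have hcv : Vd h m c := by
      rcases hav with h1 | rfl
      · exact hc.vd h1
      · rcases hbv with h1 | rfl
        · exact hc'.vd h1
        · exact absurd rfl hab
    by_cases e1 : a = c
    · subst e1
      exact no3' hd (LG.ll.2 ⟨by simpa using hab, hc'.symm⟩)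
    by_cases e2 : b = c
    · subst e2
      exact no3' hd (LG.ll.2 ⟨by simpa using hab, hc⟩)
    exact no3'' (w := .inl ⟨c, hcv⟩) hd (LG.ll.2 ⟨by simpa using e1, hc⟩)
      (LG.ll.2 ⟨by simpa using Ne.symm e2, hc'.symm⟩)

theorem av_finite (h m : ℕ) : Finite (AV h m) := by
  obtain ⟨B, hB⟩ : ∃ B, B = m + h + 2 ^ h + 2 * nn h ^ m + 1 := ⟨_, rfl⟩
  have h2p : 0 < 2 ^ h := by positivity
  let F : (Fin B × Fin B) ⊕ (Fin B × Fin B × Fin B × Fin B) ⊕ Unit → An := fun x => match x with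
    | .inl (e, p) => .rail e p
    | .inr (.inl (e, q, s, a)) => .node e q s a
    | .inr (.inr _) => .root
  have hpw : ∀ e, 2 * nn h ^ (m - e) ≤ 2 * nn h ^ m := fun e =>
    Nat.mul_le_mul_left _ (Nat.pow_le_pow_right (nn_pos h) (by omega))
  have : {x | Vd h m x} ⊆ Set.range F := by
    rintro x (hx | rfl)
    · cases x with
      | root => exact hx.elim
      | rail e p =>
        obtain ⟨h1, h2, h3⟩ := hx
        have := hpw e
        exact ⟨.inl (⟨e, by omega⟩, ⟨p, by omega⟩), rfl⟩
      | node e q s a =>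
        obtain ⟨h1, h2, h3, h4⟩ := hx
        have := hpw e
        have h5 : s < B ∧ a < B := by
          rcases h4 with ⟨-, rfl, rfl⟩ | ⟨-, h5, h6⟩
          · omega
          · have : 2 ^ (h - s) ≤ 2 ^ h := Nat.pow_le_pow_right (by omega) (by omega)
            omega
        exact ⟨.inr (.inl (⟨e, by omega⟩, ⟨q, by omega⟩, ⟨s, h5.1⟩, ⟨a, h5.2⟩)), rfl⟩
    · exact ⟨.inr (.inr ()), rfl⟩
  exact ((Set.finite_range F).subset this)

theorem lv_finite (h m d : ℕ) : Finite (LV h m d) := by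
  haveI := av_finite h m
  infer_instance

end lg
end GC

namespace GC

section grid
abbrev GG := CGT.gridGraph 154 154

theorem gg_h {r c c' : Fin 154} (hc : c.1 + 1 = c'.1) : GG.Adj (r, c) (r, c') := by
  simp only [GG, CGT.gridGraph, fromRel_adj]
  refine ⟨?_, Or.inl (Or.inl ⟨trivial, hc⟩)⟩
  intro h
  simp only [Prod.mk.injEq, true_and] at h
  subst h; omega

theorem gg_v {r r' c : Fin 154} (hc : r.1 + 1 = r'.1) : GG.Adj (r, c) (r', c) := by
  simp only [GG, CGT.gridGraph, fromRel_adj]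
  refine ⟨?_, Or.inl (Or.inr ⟨trivial, hc⟩)⟩
  intro h
  simp only [Prod.mk.injEq, and_true] at h
  subst h; omega

theorem gg_row {P : Set (Fin 154 × Fin 154)} {r : Fin 154} (hP : ∀ c, (r, c) ∈ P) (c c' : Fin 154) :
    Cn GG.Adj P (r, c) (r, c') := by
  have key : ∀ (k : ℕ) (hk : k < 154), Cn GG.Adj P (r, 0) (r, ⟨k, hk⟩) := by
    intro k
    induction k with
    | zero => intro hk; exact Cn.refl (hP _)
    | succ k ih => intro hk; exact (ih (by omega)).step (gg_h rfl) (hP _)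
  exact ((key c.1 c.2).symm (adj_symm' _)).trans (key c'.1 c'.2)

theorem gg_col {P : Set (Fin 154 × Fin 154)} {c : Fin 154} (hP : ∀ r, (r, c) ∈ P) (r r' : Fin 154) :
    Cn GG.Adj P (r, c) (r', c) := by
  have key : ∀ (k : ℕ) (hk : k < 154), Cn GG.Adj P (0, c) (⟨k, hk⟩, c) := by
    intro k
    induction k with
    | zero => intro hk; exact Cn.refl (hP _)
    | succ k ih => intro hk; exact (ih (by omega)).step (gg_v rfl) (hP _)
  exact ((key r.1 r.2).symm (adj_symm' _)).trans (key r'.1 r'.2)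

theorem gg_link (l : ℕ) (A B : Finset (Fin 154)) (hA : A.card = l) (hB : B.card = l) :
    Lnk GG {v | v.1 = 1 ∧ v.2 ∈ A} {v | v.1 = 1 ∧ v.2 ∈ B} l := by
  classical
  apply menger
  intro Z hZ
  have free : ∀ S : Finset (Fin 154), S.card = l → ∀ f : Fin 154 × Fin 154 → Fin 154,
      ∃ c ∈ S, c ∉ Z.image f := by
    intro S hS f
    by_contra hcon
    push Not at hcon
    have h1 := Finset.card_le_card (show S ⊆ Z.image f from hcon)
    have h2 := Finset.card_image_le (s := Z) (f := f)
    omega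
  obtain ⟨a, ha, ha'⟩ := free A hA Prod.snd
  obtain ⟨b, hb, hb'⟩ := free B hB Prod.snd
  obtain ⟨r, -, hr'⟩ := free A hA Prod.fst
  simp only [Finset.mem_image, not_exists, not_and] at ha' hb' hr'
  have h1 : ∀ r, (r, a) ∈ {x | x ∉ Z} := fun r hz => ha' _ hz rfl
  have h2 : ∀ r, (r, b) ∈ {x | x ∉ Z} := fun r hz => hb' _ hz rfl
  have h3 : ∀ c, (r, c) ∈ {x | x ∉ Z} := fun r hz => hr' _ hz rfl
  exact ⟨(1, a), ⟨rfl, ha⟩, (1, b), ⟨rfl, hb⟩,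
    ((gg_col h1 1 r).trans (gg_row h3 a b)).trans (gg_col h2 r 1)⟩

end grid

section model
variable {h m d : ℕ} {W : Type*} {X : SimpleGraph W} (fm : CGT.FatModel (LG h m d) X 3)

theorem anchor3 {x y1 y2 y3 : W} (e1 : X.Adj x y1) (e2 : X.Adj x y2) (e3 : X.Adj x y3)
    (n1 : y1 ≠ y2) (n3 : y2 ≠ y3) (p : EE h m) {k1 k2 k3 : Fin d}
    (w1 : fm.pathEnd e1 = .inr (p, k1)) (w2 : fm.pathEnd e2 = .inr (p, k2))
    (w3 : fm.pathEnd e3 = .inr (p, k3)) (hno : ∀ v ∈ fm.branch x, ∃ k, v = .inr (p, k))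
    (h12 : k1 < k2) (h23 : k2 < k3) : False := by
  have hint : ∀ k, k1 < k → k < k3 → Sum.inr (p, k) ∈ fm.branch x := by
    intro k hk hk'
    by_contra hcon
    have hc := setconn_cn (fm.branch_connected x) (fm.pathEnd_mem e1) (fm.pathEnd_mem e3)
    have := hc.cut {v | ∃ k' < k, v = .inr (p, k')} ⟨k1, hk, w1⟩ (by
      rintro u v ⟨k', h1, rfl⟩ - hv huv
      obtain ⟨k'', rfl⟩ := hno v hv
      refine ⟨k'', ?_, rfl⟩
      have h2 : k'' ≠ k := by rintro rfl; exact hcon hv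
      have := (LG.rr.1 huv).2
      have h3 : k''.1 ≠ k.1 := fun e => h2 (Fin.ext e)
      rw [Fin.lt_def] at *
      omega)
    rw [w3] at this
    obtain ⟨k', h1, h2⟩ := this
    simp only [Sum.inr.injEq, Prod.mk.injEq, true_and] at h2
    subst h2
    exact absurd (lt_trans h1 hk') (lt_irrefl _)
  have f1 := fm.fat_paths e1 e2 (by
    intro h; rw [Sym2.eq_iff] at h
    rcases h with ⟨_, h⟩ | ⟨h, _⟩
    · exact n1 h
    · exact e2.ne h)
  have f3 := fm.fat_paths e3 e2 (by
    intro h; rw [Sym2.eq_iff] at h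
    rcases h with ⟨_, h⟩ | ⟨h, _⟩
    · exact n3 h.symm
    · exact e2.ne h)
  have hc := walk_cn (fm.path e2)
  have hs1 : Sum.inr (p, k1) ∈ CGT.walkSupp (fm.path e1) := by
    rw [← w1]; exact (walk_cn (fm.path e1)).left
  have hs3 : Sum.inr (p, k3) ∈ CGT.walkSupp (fm.path e3) := by
    rw [← w3]; exact (walk_cn (fm.path e3)).left
  have := hc.cut {v | ∃ k', k1 < k' ∧ k' < k3 ∧ v = .inr (p, k')} ⟨k2, h12, h23, w2⟩ (by
    rintro u v ⟨k', h1, h2, rfl⟩ - hv huv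
    have hkd := k3.2
    rcases v with a | ⟨p', k''⟩
    · rcases LG.lr.1 huv.symm with ⟨_, h3⟩ | ⟨_, h3⟩
      · rw [Fin.lt_def] at *; omega
      · rw [Fin.lt_def] at *; omega
    · obtain ⟨rfl, h3⟩ := LG.rr.1 huv
      refine ⟨k'', ?_, ?_, rfl⟩
      · have : k''.1 ≠ k1.1 := by
          intro e
          obtain rfl := Fin.ext e
          exact no3 (sdist_le f1 hs1 hv)
        rw [Fin.lt_def] at *; omega
      · have : k''.1 ≠ k3.1 := by
          intro e
          obtain rfl := Fin.ext e
          exact no3 (sdist_le f3 hs3 hv)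
        rw [Fin.lt_def] at *; omega)
  obtain ⟨k', h1, h2, h3⟩ := this
  have h4 := hint k' h1 h2
  rw [← h3] at h4
  exact Set.disjoint_left.1 (fm.branch_disjoint e2.ne) h4 (fm.pathEnd_mem e2.symm)

theorem anchor {x y1 y2 y3 : W} (e1 : X.Adj x y1) (e2 : X.Adj x y2) (e3 : X.Adj x y3)
    (n1 : y1 ≠ y2) (n3 : y2 ≠ y3) (n2 : y1 ≠ y3) : ∃ a, Sum.inl a ∈ fm.branch x := by
  by_contra hcon
  push Not at hcon
  have hno : ∃ p, ∀ v ∈ fm.branch x, ∃ k, v = .inr (p, k) := by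
    obtain ⟨u, hu⟩ := fm.branch_nonempty x
    rcases u with a | ⟨p, k⟩
    · exact absurd hu (hcon a)
    refine ⟨p, fun v hv => ?_⟩
    refine (setconn_cn (fm.branch_connected x) hu hv).cut {v | ∃ k, v = .inr (p, k)} ⟨k, rfl⟩ ?_
    rintro u v ⟨k, rfl⟩ - hv huv
    rcases v with a | ⟨p', k'⟩
    · exact absurd hv (hcon a)
    · obtain ⟨rfl, _⟩ := LG.rr.1 huv
      exact ⟨k', rfl⟩
  obtain ⟨p, hp⟩ := hno
  obtain ⟨k1, w1⟩ := hp _ (fm.pathEnd_mem e1)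
  obtain ⟨k2, w2⟩ := hp _ (fm.pathEnd_mem e2)
  obtain ⟨k3, w3⟩ := hp _ (fm.pathEnd_mem e3)
  have hne : ∀ {y y' : W} (e : X.Adj x y) (e' : X.Adj x y'), y ≠ y' → ∀ {k k'},
      fm.pathEnd e = .inr (p, k) → fm.pathEnd e' = .inr (p, k') → k ≠ k' := by
    rintro y y' e e' hn k k' hk hk' rfl
    have f1 := fm.fat_paths e e' (by
      intro h; rw [Sym2.eq_iff] at h
      rcases h with ⟨_, h⟩ | ⟨h, _⟩
      · exact hn h
      · exact e'.ne h)
    refine no3 (sdist_le f1 (u := .inr (p, k)) (v := .inr (p, k)) ?_ ?_)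
    · rw [← hk]; exact (walk_cn (fm.path e)).left
    · rw [← hk']; exact (walk_cn (fm.path e')).left
  have a12 := hne e1 e2 n1 w1 w2
  have a23 := hne e2 e3 n3 w2 w3
  have a13 := hne e1 e3 n2 w1 w3
  rcases lt_or_gt_of_ne a12 with b12 | b12 <;> rcases lt_or_gt_of_ne a23 with b23 | b23 <;>
    rcases lt_or_gt_of_ne a13 with b13 | b13
  · exact anchor3 fm e1 e2 e3 n1 n3 p w1 w2 w3 hp b12 b23
  · exact anchor3 fm e1 e2 e3 n1 n3 p w1 w2 w3 hp b12 b23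
  · exact anchor3 fm e1 e3 e2 n2 n3.symm p w1 w3 w2 hp b13 b23
  · exact anchor3 fm e3 e1 e2 n2.symm n1 p w3 w1 w2 hp b13 b12
  · exact anchor3 fm e2 e1 e3 n1.symm n2 p w2 w1 w3 hp b12 b13
  · exact anchor3 fm e2 e3 e1 n3 n2.symm p w2 w3 w1 hp b23 b13
  · exact anchor3 fm e3 e2 e1 n3.symm n1.symm p w3 w2 w1 hp b23 b12
  · exact anchor3 fm e3 e2 e1 n3.symm n1.symm p w3 w2 w1 hp b23 b12

def real (Q : Set W) : Set (LV h m d) :=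
  {v | (∃ x ∈ Q, v ∈ fm.branch x) ∨ ∃ (x y : W) (e : X.Adj x y), x ∈ Q ∧ y ∈ Q ∧
    v ∈ CGT.walkSupp (fm.path e)}

theorem real_cn {Q : Set W} {x y : W} (hc : Cn X.Adj Q x y) {v w : LV h m d}
    (hv : v ∈ fm.branch x) (hw : w ∈ fm.branch y) : Cn (LG h m d).Adj (real fm Q) v w := by
  have hbr : ∀ x ∈ Q, ∀ v w, v ∈ fm.branch x → w ∈ fm.branch x →
      Cn (LG h m d).Adj (real fm Q) v w := by
    intro x hx v w hv hw
    exact (setconn_cn (fm.branch_connected x) hv hw).mono (fun u hu => Or.inl ⟨x, hx, hu⟩)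
  have : y ∈ {z | ∀ w ∈ fm.branch z, Cn (LG h m d).Adj (real fm Q) v w} := by
    refine hc.cut _ (fun w hw => hbr x hc.left v w hv hw) ?_
    intro x' y' hx' hxQ hyQ hxy w hw
    have h1 := hx' _ (fm.pathEnd_mem hxy)
    have h2 : Cn (LG h m d).Adj (real fm Q) _ _ := (walk_cn (fm.path hxy)).mono
      (fun u hu => Or.inr ⟨x', y', hxy, hxQ, hyQ, hu⟩)
    exact (h1.trans h2).trans (hbr y' hyQ _ w (fm.pathEnd_mem hxy.symm) hw)
  exact this w hw

theorem real_far {Q Q' : Set W} (hd : Disjoint Q Q') : ∀ u ∈ real fm Q, ∀ v ∈ real fm Q',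
    ((3 : ℕ) : ℕ∞) ≤ (LG h m d).edist u v := by
  have hne : ∀ x ∈ Q, ∀ y ∈ Q', x ≠ y := by
    rintro x hx y hy rfl
    exact Set.disjoint_left.1 hd hx hy
  rintro u (⟨x, hx, hu⟩ | ⟨x, y, e, hx, hy, hu⟩) v (⟨x', hx', hv⟩ | ⟨x', y', e', hx', hy', hv⟩)
  · exact sdist_le (fm.fat_branch (hne _ hx _ hx')) hu hv
  · rw [edist_comm]
    exact sdist_le (fm.fat_path_branch e' x (hne _ hx _ hx') (hne _ hx _ hy')) hv hu
  · exact sdist_le (fm.fat_path_branch e x' (hne _ hx _ hx').symm (hne _ hy _ hx').symm) hu hv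
  · refine sdist_le (fm.fat_paths e e' ?_) hu hv
    intro h; rw [Sym2.eq_iff] at h
    rcases h with ⟨h, _⟩ | ⟨h, _⟩
    · exact hne _ hx _ hx' h
    · exact hne _ hx _ hy' h

end model

theorem part1 {h m d : ℕ} (hh : 1 ≤ h) : ¬ CGT.IsFatMinor (LG h (m + 1) d) (CGT.gridGraph 154 154) 3 := by
  rintro ⟨fm⟩
  have hanc : ∀ c : Fin 154, ∃ a, Sum.inl a ∈ fm.branch (1, c) := by
    intro c
    have a1 : GG.Adj (1, c) (0, c) := (gg_v rfl).symm
    have a2 : GG.Adj (1, c) (2, c) := gg_v rfl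
    obtain ⟨c', hc', a3⟩ : ∃ c' : Fin 154, c' ≠ c ∧ GG.Adj (1, c) (1, c') := by
      by_cases hc : c.1 + 1 < 154
      · exact ⟨⟨c.1 + 1, hc⟩, fun h => by have := congrArg Fin.val h; simp at this, gg_h rfl⟩
      · refine ⟨⟨c.1 - 1, by omega⟩, fun h => ?_, (gg_h ?_).symm⟩
        · have := congrArg Fin.val h; simp at this; omega
        · simp; omega
    exact anchor fm a1 a2 a3 (by simp) (by simp) (by simp)
  choose x hx using hanc
  refine no_link (J := m) (x := fun c => (x c).1) hh ?_ ?_ (fun c => (x c).2)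
  · intro c c' hcc
    have e : x c = x c' := Subtype.ext hcc
    by_contra hne
    have h1 := hx c
    rw [e] at h1
    exact Set.disjoint_left.1 (fm.branch_disjoint (x := (1, c)) (y := (1, c')) (by simpa using hne))
      h1 (hx c')
  · intro l A B hA hB
    obtain ⟨Q, a, b, hd, hQ⟩ := gg_link l A B hA hB
    refine ⟨fun i => tr (real fm (Q i)), ?_, ?_, ?_⟩
    · rintro i y ⟨hy | rfl, -⟩
      · exact hy.awf
      · trivial
    · intro i j hij
      exact far_tr (real_far fm (hd i j hij))
    · intro i
      obtain ⟨⟨h1, h2⟩, ⟨h3, h4⟩, h5⟩ := hQ i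
      refine ⟨_, h2, _, h4, trace (real_cn fm h5 ?_ ?_)⟩
      · have := hx (a i).2
        rwa [← h1] at this
      · have := hx (b i).2
        rwa [← h3] at this

end GC

namespace GC

def IsRail (v : An) : Prop := ∃ e p, v = .rail e p

theorem Inc.isRail {h : ℕ} {l v : An} (hi : Inc h l v) : IsRail v := by
  obtain ⟨e, q, k, rfl, ⟨_, rfl⟩ | ⟨_, rfl⟩ | ⟨_, _, _, _, _, _, rfl⟩⟩ := hi
  · exact ⟨_, _, rfl⟩
  · exact ⟨_, _, rfl⟩
  · exact ⟨_, _, rfl⟩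

theorem Inc.isNode {h : ℕ} {l v : An} (hi : Inc h l v) : IsNode l := by
  obtain ⟨e, q, k, rfl, -⟩ := hi
  exact ⟨_, _, _, _, rfl⟩

theorem Inc.lvle {h : ℕ} {l v : An} (hi : Inc h l v) : lv v ≤ lv l := by
  obtain ⟨e, q, k, rfl, ⟨_, rfl⟩ | ⟨_, rfl⟩ | ⟨_, _, _, rfl, _, h1, rfl⟩⟩ := hi <;> simp [lv]
  omega

theorem Inc.inC {h J g : ℕ} {l v : An} (hi : Inc h l v) (hl : InC h J g l) : InC h J g v := by
  obtain ⟨e, p, rfl⟩ := hi.isRail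
  exact hl.node_nb hi.isNode (Or.inl hi) (hi.lvle.trans hl.lvle) (by simp) trivial

structure Shd (h m κ : ℕ) {T : Type} (G : SimpleGraph T) where
  r : An → T
  o : An → T
  S : An → An → Set T
  r_inj : ∀ v v', IsRail v → IsRail v' → InC h m 1 v → InC h m 1 v' → r v = r v' → v = v'
  o_ne : ∀ l v v', Inc h l v' → InC h m 1 l → IsRail v → InC h m 1 v → o l ≠ r v
  conn : ∀ l v, Inc h l v → InC h m 1 l → ∀ x ∈ S l v, Cn G.Adj (S l v) (o l) x
  r_mem : ∀ l v, Inc h l v → InC h m 1 l → r v ∈ S l v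
  only : ∀ l v v', Inc h l v → InC h m 1 l → IsRail v' → InC h m 1 v' → r v' ∈ S l v → v' = v
  blk : ∀ e q k e' q' k' v v' x, Inc h (.node e q 0 k) v → Inc h (.node e' q' 0 k') v' →
    InC h m 1 (.node e q 0 k) → InC h m 1 (.node e' q' 0 k') →
    x ∈ S (.node e q 0 k) v → x ∈ S (.node e' q' 0 k') v' →
    (∀ w, IsRail w → InC h m 1 w → x ≠ r w) → e = e' ∧ q = q' ∧ k / 2 ^ κ = k' / 2 ^ κ

section shd
variable {h m κ : ℕ} {T : Type} {G : SimpleGraph T} (D : Shd h m κ G)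

theorem Shd.o_mem {l v : An} (hi : Inc h l v) (hl : InC h m 1 l) : D.o l ∈ D.S l v :=
  (D.conn l v hi hl _ (D.r_mem l v hi hl)).left

def OK (h m j q : ℕ) : Prop := ∀ x, InC h j q x → InC h m 1 x

theorem OK.sub {h m j q t : ℕ} (hok : OK h m (j + 1) q) (ht : t < nn h) : OK h m j (q * nn h + t) :=
  fun x hx => hok x (hx.sup ht)

def Shd.Rg (j q : ℕ) : Set T := {x | (∃ v, IsRail v ∧ InC h j q v ∧ x = D.r v) ∨
  ∃ l v, Inc h l v ∧ InC h j q l ∧ x ∈ D.S l v}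

theorem Shd.rg_r {j q : ℕ} (hok : OK h m j q) {v : An} (hr : IsRail v) (hv : InC h m 1 v)
    (hx : D.r v ∈ D.Rg j q) : InC h j q v := by
  rcases hx with ⟨v', hr', hv', he⟩ | ⟨l, v', hi, hl, hx⟩
  · rwa [D.r_inj v v' hr hr' hv (hok _ hv') he]
  · rw [D.only l v' v hi (hok _ hl) hr hv hx]
    exact hi.inC hl

theorem Shd.rg_two {j q q' : ℕ} (hok : OK h m j q) (hok' : OK h m j q') (hne : q ≠ q') {x : T}
    (hx : x ∈ D.Rg j q) (hx' : x ∈ D.Rg j q') :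
    ∃ v, IsRail v ∧ InC h j q v ∧ InC h j q' v ∧ x = D.r v := by
  by_cases hw : ∃ w, IsRail w ∧ InC h m 1 w ∧ x = D.r w
  · obtain ⟨w, h1, h2, rfl⟩ := hw
    exact ⟨w, h1, D.rg_r hok h1 h2 hx, D.rg_r hok' h1 h2 hx', rfl⟩
  · exfalso
    push Not at hw
    rcases hx with ⟨v, h1, h2, h3⟩ | ⟨l, v, h1, h2, h3⟩
    · exact hw v h1 (hok _ h2) h3
    rcases hx' with ⟨v', h1', h2', h3'⟩ | ⟨l', v', h1', h2', h3'⟩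
    · exact hw v' h1' (hok' _ h2') h3'
    obtain ⟨e, p, k, rfl, -⟩ := id h1
    obtain ⟨e', p', k', rfl, -⟩ := id h1'
    obtain ⟨rfl, rfl, -⟩ := D.blk _ _ _ _ _ _ v v' x h1 h1' (hok _ h2) (hok' _ h2') h3 h3' hw
    have h4 : InC h j q' (.node e p 0 k) := ⟨h2'.1, h2'.2.1, h2'.2.2.1, h2.2.2.2⟩
    obtain ⟨τ, ⟨e, _, h5⟩, -⟩ := h2.two h4 hne
    cases h5

/-- leaf of level `j+1` against a region of level `j`. -/
theorem Shd.leaf_rg {j g q k : ℕ} {v : An} (hok : OK h m j g) (hi : Inc h (.node (j + 1) q 0 k) v)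
    (hl : InC h m 1 (.node (j + 1) q 0 k)) {x : T} (hx : x ∈ D.S (.node (j + 1) q 0 k) v)
    (hx' : x ∈ D.Rg j g) : x = D.r v ∧ lv v ≤ j := by
  by_cases hw : ∃ w, IsRail w ∧ InC h m 1 w ∧ x = D.r w
  · obtain ⟨w, h1, h2, rfl⟩ := hw
    have h3 := (D.rg_r hok h1 h2 hx').lvle
    obtain rfl := D.only _ v w hi hl h1 h2 hx
    exact ⟨rfl, h3⟩
  · exfalso
    push Not at hw
    rcases hx' with ⟨v', h1', h2', h3'⟩ | ⟨l', v', h1', h2', h3'⟩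
    · exact hw v' h1' (hok _ h2') h3'
    obtain ⟨e', p', k', rfl, -⟩ := id h1'
    obtain ⟨rfl, rfl, -⟩ := D.blk _ _ _ _ _ _ v v' x hi h1' hl (hok _ h2') hx h3' hw
    exact absurd h2'.1 (by omega)

def Shd.zp (j g e : ℕ) : T := D.r (.rail e (g * nn h ^ (j - e)))

def Shd.Rails (j q : ℕ) (Q : ℕ → Set T) (π : ℕ → ℕ) : Prop := ∀ e ≤ j, π e ≤ j ∧ Q e ⊆ D.Rg j q ∧
    D.zp j (q + 1) (π e) ∈ Q e ∧ (∀ x ∈ Q e, Cn G.Adj (Q e) (D.zp j q e) x) ∧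
    ∀ e' ≤ j, e' ≠ e → Disjoint (Q e) (Q e')

theorem Shd.rails_zero {q : ℕ} (hok : OK h m 0 q) : ∃ Q π, D.Rails 0 q Q π := by
  have hb : InC h 0 q (.node 0 q 0 0) := ⟨le_rfl, by simp, by simp, Or.inl ⟨rfl, rfl, rfl⟩⟩
  have i1 : Inc h (.node 0 q 0 0) (.rail 0 q) := ⟨0, q, 0, rfl, Or.inl ⟨rfl, rfl⟩⟩
  have i2 : Inc h (.node 0 q 0 0) (.rail 0 (q + 1)) :=
    ⟨0, q, 0, rfl, Or.inr (Or.inl ⟨by simp [kl], rfl⟩)⟩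
  have hm := hok _ hb
  have c1 := D.conn _ _ i1 hm
  have c2 := D.conn _ _ i2 hm
  have r1 := D.r_mem _ _ i1 hm
  have r2 := D.r_mem _ _ i2 hm
  refine ⟨fun _ => D.S (.node 0 q 0 0) (.rail 0 q) ∪ D.S (.node 0 q 0 0) (.rail 0 (q + 1)),
    fun _ => 0, ?_⟩
  intro e he
  obtain rfl : e = 0 := by omega
  refine ⟨le_rfl, ?_, ?_, ?_, ?_⟩
  · rintro x (hx | hx)
    · exact Or.inr ⟨_, _, i1, hb, hx⟩
    · exact Or.inr ⟨_, _, i2, hb, hx⟩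
  · right; simpa [Shd.zp] using r2
  · intro x hx
    have h0 : Cn G.Adj (D.S (.node 0 q 0 0) (.rail 0 q) ∪ D.S (.node 0 q 0 0) (.rail 0 (q + 1)))
        (D.zp 0 q 0) (D.o (.node 0 q 0 0)) := by
      have := ((c1 _ r1).symm (adj_symm' _)).mono
        (Set.subset_union_left (t := D.S (.node 0 q 0 0) (.rail 0 (q + 1))))
      simpa [Shd.zp] using this
    rcases hx with hx | hx
    · exact h0.trans ((c1 x hx).mono Set.subset_union_left)
    · exact h0.trans ((c2 x hx).mono Set.subset_union_right)
  · intro e' he' hne; omega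

/-- the data of a chain of `N` rails -/
structure Shd.Chain (j q : ℕ) where
  ok : OK h m (j + 1) q
  Q : ℕ → ℕ → Set T
  π : ℕ → ℕ → ℕ
  rails : ∀ t < nn h, D.Rails j (q * nn h + t) (Q t) (π t)

variable {D} {j q : ℕ} (C : D.Chain j q)

def Shd.Chain.lam : ℕ → ℕ → ℕ
  | 0, e => e
  | t + 1, e => C.π t (lam t e)

theorem Shd.Chain.lam_le {t e : ℕ} (ht : t ≤ nn h) (he : e ≤ j) : C.lam t e ≤ j := by
  induction t with
  | zero => exact he
  | succ t ih => exact (C.rails t (by omega) _ (ih (by omega))).1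

def Shd.Chain.pc (t e : ℕ) : Set T := C.Q t (C.lam t e)
def Shd.Chain.pr (t e : ℕ) : An := .rail (C.lam t e) ((q * nn h + t) * nn h ^ (j - C.lam t e))
def Shd.Chain.pt (t e : ℕ) : T := D.r (C.pr t e)

theorem Shd.Chain.pc_sub {t e : ℕ} (ht : t < nn h) (he : e ≤ j) :
    C.pc t e ⊆ D.Rg j (q * nn h + t) :=
  (C.rails t ht _ (C.lam_le ht.le he)).2.1

theorem Shd.Chain.pc_cn {t e : ℕ} (ht : t < nn h) (he : e ≤ j) {x : T} (hx : x ∈ C.pc t e) :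
    Cn G.Adj (C.pc t e) (C.pt t e) x :=
  (C.rails t ht _ (C.lam_le ht.le he)).2.2.2.1 x hx

theorem Shd.Chain.pt_succ_mem {t e : ℕ} (ht : t < nn h) (he : e ≤ j) :
    C.pt (t + 1) e ∈ C.pc t e :=
  (C.rails t ht _ (C.lam_le ht.le he)).2.2.1

theorem Shd.Chain.pt_mem {t e : ℕ} (ht : t < nn h) (he : e ≤ j) : C.pt t e ∈ C.pc t e :=
  (C.pc_cn ht he (C.pt_succ_mem ht he)).left

theorem Shd.Chain.lam_inj {t e e' : ℕ} (ht : t ≤ nn h) (he : e ≤ j) (he' : e' ≤ j)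
    (hl : C.lam t e = C.lam t e') : e = e' := by
  induction t with
  | zero => exact hl
  | succ t ih =>
    apply ih (by omega)
    by_contra hne
    have h1 := C.pt_succ_mem (t := t) (by omega) he
    have h2 := C.pt_succ_mem (t := t) (by omega) he'
    have h3 : C.pt (t + 1) e = C.pt (t + 1) e' := by unfold Shd.Chain.pt Shd.Chain.pr; rw [hl]
    rw [h3] at h1
    exact Set.disjoint_left.1 ((C.rails t (by omega) _ (C.lam_le (by omega) he)).2.2.2.2 _
      (C.lam_le (by omega) he') (Ne.symm hne)) h1 h2

theorem Shd.Chain.pc_disj {t e e' : ℕ} (ht : t < nn h) (he : e ≤ j) (he' : e' ≤ j) (hne : e ≠ e') :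
    Disjoint (C.pc t e) (C.pc t e') :=
  (C.rails t ht _ (C.lam_le ht.le he)).2.2.2.2 _ (C.lam_le ht.le he')
    (fun h => hne (C.lam_inj ht.le he he' h.symm))

theorem Shd.Chain.pr_inC {t e : ℕ} (ht : t ≤ nn h) (he : e ≤ j) : InC h m 1 (C.pr t e) := by
  have hN := nn_pos h
  have hle := C.lam_le ht he
  by_cases h0 : t < nn h
  · exact C.ok.sub h0 _ (Zn.inC ⟨_, hle, rfl⟩)
  · obtain ⟨t', rfl⟩ : ∃ t', t = t' + 1 := ⟨t - 1, by omega⟩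
    exact C.ok.sub (t := t') (by omega) _ (Zn.inC' ⟨_, hle, rfl⟩)

theorem Shd.Chain.pr_rail {t e : ℕ} : IsRail (C.pr t e) := ⟨_, _, rfl⟩

theorem Shd.Chain.pc_two {t t' e e' : ℕ} (hlt : t < t') (ht' : t' < nn h) (he : e ≤ j) (he' : e' ≤ j)
    {x : T} (hx : x ∈ C.pc t e) (hx' : x ∈ C.pc t' e') : e = e' ∧ t' = t + 1 ∧ x = C.pt (t + 1) e := by
  have ht : t < nn h := by omega
  obtain ⟨v, hr, h1, h2, rfl⟩ := D.rg_two (C.ok.sub ht) (C.ok.sub ht') (by omega)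
    (C.pc_sub ht he hx) (C.pc_sub ht' he' hx')
  obtain ⟨τ, ⟨ε, hε, rfl⟩, h3, h4⟩ := h1.two h2 (by omega)
  obtain rfl : t' = t + 1 := by omega
  obtain rfl : τ = q * nn h + (t + 1) := by omega
  have hl : ε = C.lam (t + 1) e' := by
    by_contra hne
    have hle := C.lam_le ht'.le he'
    have hR := C.rails (t + 1) ht' ε hε
    refine Set.disjoint_left.1 (hR.2.2.2.2 _ hle (Ne.symm hne)) ?_ hx'
    exact (hR.2.2.2.1 _ hR.2.2.1).left
  subst hl
  have h5 := C.pt_succ_mem ht he'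
  have : e = e' := by
    by_contra hne
    exact Set.disjoint_left.1 (C.pc_disj ht he he' hne) hx h5
  subst this
  exact ⟨rfl, rfl, rfl⟩

def Shd.Chain.Rl (e : ℕ) : Set T := {x | ∃ t < nn h, x ∈ C.pc t e}

theorem Shd.Chain.rl_disj {e e' : ℕ} (he : e ≤ j) (he' : e' ≤ j) (hne : e ≠ e') :
    Disjoint (C.Rl e) (C.Rl e') := by
  rw [Set.disjoint_left]
  rintro x ⟨t, ht, hx⟩ ⟨t', ht', hx'⟩
  rcases lt_trichotomy t t' with hl | rfl | hl
  · exact hne (C.pc_two hl ht' he he' hx hx').1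
  · exact Set.disjoint_left.1 (C.pc_disj ht he he' hne) hx hx'
  · exact hne (C.pc_two hl ht he' he hx' hx).1.symm

/-- walk along a rail -/
theorem Shd.Chain.walk {W : Set T} {e s s' : ℕ} (he : e ≤ j) (hs : C.pt s e ∈ W) (hss : s ≤ s')
    (hs' : s' ≤ nn h) (hW : ∀ t, s ≤ t → t < s' → C.pc t e ⊆ W) :
    Cn G.Adj W (C.pt s e) (C.pt s' e) := by
  induction s', hss using Nat.le_induction with
  | base => exact Cn.refl hs
  | succ t ht ih =>
    exact (ih (by omega) (fun t' h1 h2 => hW t' h1 (by omega))).trans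
      ((C.pc_cn (by omega) he (C.pt_succ_mem (by omega) he)).mono (hW t ht (by omega)))

theorem Shd.Chain.rl_cn {e : ℕ} (he : e ≤ j) {x : T} (hx : x ∈ C.Rl e) :
    Cn G.Adj (C.Rl e) (C.pt 0 e) x := by
  obtain ⟨t, ht, hx⟩ := hx
  refine (C.walk he ?_ (Nat.zero_le t) ht.le ?_).trans ((C.pc_cn ht he hx).mono ?_)
  · exact ⟨0, nn_pos h, C.pt_mem (nn_pos h) he⟩
  · intro t' _ h2 y hy; exact ⟨t', by omega, hy⟩
  · intro y hy; exact ⟨t, ht, hy⟩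

theorem Shd.Chain.pt_rl {t e : ℕ} (ht : t ≤ nn h) (he : e ≤ j) : C.pt t e ∈ C.Rl e := by
  have hN := nn_pos h
  by_cases h0 : t < nn h
  · exact ⟨t, h0, C.pt_mem h0 he⟩
  · obtain ⟨t', rfl⟩ : ∃ t', t = t' + 1 := ⟨t - 1, by omega⟩
    exact ⟨t', by omega, C.pt_succ_mem (by omega) he⟩

end shd
end GC

namespace GC

section shd
variable {h m κ : ℕ} {T : Type} {G : SimpleGraph T} {D : Shd h m κ G}
variable {j q : ℕ} (C : D.Chain j q)

theorem zp_sub (h j g e : ℕ) (he : e ≤ j) : g * nn h ^ (j + 1 - e) = (g * nn h) * nn h ^ (j - e) := by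
  rw [show j + 1 - e = (j - e) + 1 by omega, pow_succ]; ring

theorem Shd.Chain.pt_zero {e : ℕ} (he : e ≤ j) : C.pt 0 e = D.zp (j + 1) q e := by
  unfold Shd.Chain.pt Shd.Chain.pr Shd.zp
  rw [zp_sub h j q e he]; rfl

theorem Shd.Chain.pt_last {e : ℕ} (he : e ≤ j) :
    C.pt (nn h) e = D.zp (j + 1) (q + 1) (C.lam (nn h) e) := by
  unfold Shd.Chain.pt Shd.Chain.pr Shd.zp
  rw [zp_sub h j (q + 1) _ (C.lam_le le_rfl he), show (q + 1) * nn h = q * nn h + nn h by ring]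

theorem leaf_inC (hh : 1 ≤ h) {k : ℕ} (hk : k < 2 ^ h) : InC h (j + 1) q (.node (j + 1) q 0 k) :=
  ⟨le_rfl, by simp, by simp, Or.inr ⟨by omega, by omega, by simpa using hk⟩⟩

theorem Shd.Chain.leaf_inc {k t e : ℕ} (hz : LZ h k t) (he : e ≤ j) :
    Inc h (.node (j + 1) q 0 k) (C.pr t e) :=
  ⟨j + 1, q, k, rfl, Or.inr (Or.inr ⟨j, t, _, rfl, hz, C.lam_le hz.bd.2.le he, rfl⟩)⟩

theorem Shd.rg_mono {t : ℕ} (ht : t < nn h) : D.Rg j (q * nn h + t) ⊆ D.Rg (j + 1) q := by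
  rintro x (⟨v, h1, h2, h3⟩ | ⟨l, v, h1, h2, h3⟩)
  · exact Or.inl ⟨v, h1, h2.sup ht, h3⟩
  · exact Or.inr ⟨l, v, h1, h2.sup ht, h3⟩

theorem Shd.Chain.rl_sub {e : ℕ} (he : e ≤ j) : C.Rl e ⊆ D.Rg (j + 1) q := by
  rintro x ⟨t, ht, hx⟩
  exact Shd.rg_mono ht (C.pc_sub ht he hx)

theorem Shd.Chain.leaf_rl (hh : 1 ≤ h) {k e : ℕ} {v : An} (hk : k < 2 ^ h) (he : e ≤ j)
    (hi : Inc h (.node (j + 1) q 0 k) v) {x : T} (hx : x ∈ D.S (.node (j + 1) q 0 k) v)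
    (hx' : x ∈ C.Rl e) : x = D.r v ∧ lv v ≤ j := by
  obtain ⟨t, ht, hx'⟩ := hx'
  exact D.leaf_rg (C.ok.sub ht) hi (C.ok _ (leaf_inC hh hk)) hx (C.pc_sub ht he hx')

theorem zset {j : ℕ} {Z : Finset T} (hZ : Z.card < j + 2) (R : ℕ → Set T)
    (hd : ∀ e e', e ≤ j → e' ≤ j → e ≠ e' → Disjoint (R e) (R e'))
    (hh : ∀ e ≤ j, ∃ z ∈ Z, z ∈ R e) :
    (∀ z ∈ Z, ∃ e ≤ j, z ∈ R e) ∧ ∀ e ≤ j, ∀ z ∈ Z, ∀ z' ∈ Z, z ∈ R e → z' ∈ R e → z = z' := by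
  classical
  haveI : Nonempty T := ⟨(hh 0 (Nat.zero_le _)).choose⟩
  choose! f hf hfR using hh
  have hinj : Set.InjOn f (↑(Finset.range (j + 1)) : Set ℕ) := by
    intro a ha b hb hab
    simp only [Finset.coe_range, Set.mem_Iio] at ha hb
    by_contra hne
    refine Set.disjoint_left.1 (hd a b (by omega) (by omega) hne) (hfR a (by omega)) ?_
    rw [hab]; exact hfR b (by omega)
  have hsub : (Finset.range (j + 1)).image f ⊆ Z := by
    intro x hx
    simp only [Finset.mem_image, Finset.mem_range] at hx
    obtain ⟨e, he, rfl⟩ := hx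
    exact hf e (by omega)
  have hc : ((Finset.range (j + 1)).image f).card = j + 1 := by
    rw [Finset.card_image_of_injOn hinj, Finset.card_range]
  have heq : (Finset.range (j + 1)).image f = Z := Finset.eq_of_subset_of_card_le hsub (by omega)
  have hall : ∀ z ∈ Z, ∃ e ≤ j, f e = z := by
    intro z hz
    rw [← heq] at hz
    simp only [Finset.mem_image, Finset.mem_range] at hz
    obtain ⟨e, he, rfl⟩ := hz
    exact ⟨e, by omega, rfl⟩
  refine ⟨?_, ?_⟩
  · intro z hz
    obtain ⟨e, he, rfl⟩ := hall z hz
    exact ⟨e, he, hfR e he⟩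
  · have key : ∀ e ≤ j, ∀ z ∈ Z, z ∈ R e → z = f e := by
      intro e he z hz hzR
      obtain ⟨e', he', rfl⟩ := hall z hz
      by_contra hne
      exact Set.disjoint_left.1 (hd e e' he he' (fun h => hne (by rw [h]))) hzR (hfR e' he')
    intro e he z hz z' hz' h1 h2
    rw [key e he z hz h1, key e he z' hz' h2]

theorem Shd.Chain.nosep {j q : ℕ} (C : D.Chain j q) (hh : 1 ≤ h) (Z : Finset T) (hZ : Z.card < j + 2) :
    ∃ ε ≤ j + 1, ∃ ε' ≤ j + 1, Cn G.Adj (D.Rg (j + 1) q ∩ {x | x ∉ Z})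
      (D.zp (j + 1) q ε) (D.zp (j + 1) (q + 1) ε') := by
  have hN := nn_pos h
  have hN2 := nn_add h
  by_cases hfree : ∃ e ≤ j, ∀ z ∈ Z, z ∉ C.Rl e
  · obtain ⟨e, he, hz⟩ := hfree
    refine ⟨e, by omega, C.lam (nn h) e, (C.lam_le le_rfl he).trans (by omega), ?_⟩
    rw [← C.pt_zero he, ← C.pt_last he]
    refine (C.rl_cn he (C.pt_rl le_rfl he)).mono ?_
    intro x hx
    exact ⟨C.rl_sub he hx, fun hxz => hz x hxz hx⟩
  push Not at hfree
  obtain ⟨hzall, hzu⟩ := zset hZ C.Rl (fun e e' he he' hne => C.rl_disj he he' hne) hfree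
  set W : Set T := D.Rg (j + 1) q ∩ {x | x ∉ Z} with hW
  let lf : ℕ → An := fun k => .node (j + 1) q 0 k
  have hop : ∀ k v, k < 2 ^ h → Inc h (lf k) v → (lv v ≤ j → D.r v ∉ Z) →
      Cn G.Adj W (D.o (lf k)) (D.r v) := by
    intro k v hk hi hv
    have hl := C.ok _ (leaf_inC hh hk)
    refine (D.conn _ _ hi hl _ (D.r_mem _ _ hi hl)).mono ?_
    intro x hx
    refine ⟨Or.inr ⟨_, _, hi, leaf_inC hh hk, hx⟩, fun hxz => ?_⟩
    obtain ⟨e, he, hxe⟩ := hzall x hxz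
    obtain ⟨rfl, h2⟩ := C.leaf_rl hh hk he hi hx hxe
    exact hv h2 hxz
  have hpcW : ∀ t e, t < nn h → e ≤ j → (∀ z ∈ Z, z ∉ C.pc t e) → C.pc t e ⊆ W := by
    intro t e ht he hz x hx
    exact ⟨C.rl_sub he ⟨t, ht, hx⟩, fun hxz => hz x hxz hx⟩
  have hptop : ∀ t k e, LZ h k t → e ≤ j → C.pt t e ∉ Z → Cn G.Adj W (D.o (lf k)) (C.pt t e) := by
    intro t k e hz he hp
    exact hop k _ hz.1 (C.leaf_inc hz he) (fun _ => hp)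
  -- junction
  have hjun : ∀ k e, k + 2 ≤ 2 ^ h → e ≤ j → (∀ z ∈ Z, z ∉ C.pc (2 * k + 1) e) →
      Cn G.Adj W (D.o (lf k)) (D.o (lf (k + 1))) := by
    intro k e hk he hz
    have ht : 2 * k + 1 < nn h := by omega
    have m1 := C.pt_mem ht he
    have m2 := C.pt_succ_mem ht he
    have h1 := hptop (2 * k + 1 + 1) k e ⟨by omega, Or.inr ⟨rfl, hk⟩⟩ he (fun hc => hz _ hc m2)
    have h2 := hptop (2 * k + 1) (k + 1) e ⟨by omega, Or.inl (by omega)⟩ he (fun hc => hz _ hc m1)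
    have h3 := (C.pc_cn ht he m2).mono (hpcW _ e ht he hz)
    exact (h1.trans (h3.symm (adj_symm' _))).trans (h2.symm (adj_symm' _))
  have hoW : ∀ k v, k < 2 ^ h → Inc h (lf k) v → (lv v ≤ j → D.r v ∉ Z) → D.o (lf k) ∈ W :=
    fun k v hk hi hv => (hop k v hk hi hv).left
  have ochain : ∀ k k', k ≤ k' → k' + 1 ≤ 2 ^ h → D.o (lf k) ∈ W →
      (∀ i, k ≤ i → i < k' → ∃ e ≤ j, ∀ z ∈ Z, z ∉ C.pc (2 * i + 1) e) →
      Cn G.Adj W (D.o (lf k)) (D.o (lf k')) := by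
    intro k k' hkk
    induction k', hkk using Nat.le_induction with
    | base => intro _ h1 _; exact Cn.refl h1
    | succ i hi ih =>
      intro h1 h2 h3
      obtain ⟨e, he, hz⟩ := h3 i hi (by omega)
      exact (ih (by omega) h2 (fun i' h4 h5 => h3 i' h4 (by omega))).trans
        (hjun i e (by omega) he hz)
  have hpos : 0 < 2 ^ h := by positivity
  -- ends
  have hleft : Cn G.Adj W (D.o (lf 0)) (D.zp (j + 1) q (j + 1)) := by
    have := hop 0 (.rail (j + 1) q) hpos ⟨_, _, _, rfl, Or.inl ⟨rfl, rfl⟩⟩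
      (fun hc => by simp [lv] at hc)
    simpa [Shd.zp] using this
  have hright : Cn G.Adj W (D.o (lf (2 ^ h - 1))) (D.zp (j + 1) (q + 1) (j + 1)) := by
    have := hop (2 ^ h - 1) (.rail (j + 1) (q + 1)) (by omega)
      ⟨_, _, _, rfl, Or.inr (Or.inl ⟨by simp [kl]; omega, rfl⟩)⟩ (fun hc => by simp [lv] at hc)
    simpa [Shd.zp] using this
  by_cases hA : ∀ i, i < 2 ^ h - 1 → ∃ e ≤ j, ∀ z ∈ Z, z ∉ C.pc (2 * i + 1) e
  · refine ⟨j + 1, le_rfl, j + 1, le_rfl, (hleft.symm (adj_symm' _)).trans (Cn.trans ?_ hright)⟩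
    exact ochain 0 (2 ^ h - 1) (by omega) (by omega) hleft.left (fun i _ hi => hA i hi)
  push Not at hA
  obtain ⟨k0, hk0, hB⟩ := hA
  obtain ⟨z, hzZ, hz⟩ := hB 0 (Nat.zero_le _)
  have ht0 : 2 * k0 + 1 < nn h := by omega
  have hfr : ∀ t < nn h, z ∉ C.pc t 0 → ∀ z' ∈ Z, z' ∉ C.pc t 0 := by
    intro t ht hzt z' hz' hz'p
    have := hzu 0 (Nat.zero_le _) z hzZ z' hz' ⟨_, ht0, hz⟩ ⟨_, ht, hz'p⟩
    exact hzt (this ▸ hz'p)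
  have hoth : ∀ i, i < 2 ^ h - 1 → i ≠ k0 → ∃ e ≤ j, ∀ z ∈ Z, z ∉ C.pc (2 * i + 1) e := by
    intro i hi hne
    refine ⟨0, Nat.zero_le _, hfr _ (by omega) ?_⟩
    intro hc
    rcases lt_or_gt_of_ne hne with hl | hl
    · have := (C.pc_two (by omega) ht0 (Nat.zero_le _) (Nat.zero_le _) hc hz).2.1
      omega
    · have := (C.pc_two (by omega) (by omega) (Nat.zero_le _) (Nat.zero_le _) hz hc).2.1
      omega
  have hptZ : ∀ t ≤ nn h, C.pt t 0 ≠ z → C.pt t 0 ∉ Z := by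
    intro t ht hne hc
    exact hne (hzu 0 (Nat.zero_le _) _ hc _ hzZ (C.pt_rl ht (Nat.zero_le _)) ⟨_, ht0, hz⟩)
  by_cases hx1 : z = C.pt (2 * k0 + 1 + 1) 0
  · -- left part
    have hne0 : C.pt (2 * k0 + 1) 0 ≠ z := by
      rw [hx1]
      intro he
      have h1 := D.r_inj _ _ C.pr_rail C.pr_rail (C.pr_inC (by omega) (Nat.zero_le _))
        (C.pr_inC (by omega) (Nat.zero_le _)) he
      simp only [Shd.Chain.pr, An.rail.injEq] at h1
      obtain ⟨h1, h2⟩ := h1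
      rw [h1] at h2
      have := Nat.eq_of_mul_eq_mul_right (pwpos h _) h2
      omega
    have hfree2 : ∀ t, 0 ≤ t → t < 2 * k0 + 1 → C.pc t 0 ⊆ W := by
      intro t _ ht
      refine hpcW _ _ (by omega) (Nat.zero_le _) (hfr t (by omega) ?_)
      intro hc
      obtain ⟨-, h1, h2⟩ := C.pc_two ht ht0 (Nat.zero_le _) (Nat.zero_le _) hc hz
      rw [h2] at hne0
      rw [h1] at hne0
      exact hne0 rfl
    have h1 : Cn G.Adj W (C.pt 0 0) (C.pt (2 * k0 + 1) 0) :=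
      C.walk (Nat.zero_le _) (hfree2 0 le_rfl (by omega) (C.pt_mem hN (Nat.zero_le _)))
        (Nat.zero_le _) ht0.le hfree2
    have h2 := hptop (2 * k0 + 1) (k0 + 1) 0 ⟨by omega, Or.inl (by omega)⟩ (Nat.zero_le _)
      (hptZ _ ht0.le hne0)
    have h3 := ochain (k0 + 1) (2 ^ h - 1) (by omega) (by omega) h2.left
      (fun i hi hi' => hoth i (by omega) (by omega))
    refine ⟨0, by omega, j + 1, le_rfl, ?_⟩
    rw [← C.pt_zero (Nat.zero_le _)]
    exact ((h1.trans (h2.symm (adj_symm' _))).trans h3).trans hright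
  · have hfree2 : ∀ t, 2 * k0 + 1 + 1 ≤ t → t < nn h → C.pc t 0 ⊆ W := by
      intro t ht ht'
      refine hpcW _ _ (by omega) (Nat.zero_le _) (hfr t (by omega) ?_)
      intro hc
      obtain ⟨-, h1, h2⟩ := C.pc_two (by omega) ht' (Nat.zero_le _) (Nat.zero_le _) hz hc
      exact hx1 h2
    have ht1 : 2 * k0 + 1 + 1 < nn h := by omega
    have h1 : Cn G.Adj W (C.pt (2 * k0 + 1 + 1) 0) (C.pt (nn h) 0) :=
      C.walk (Nat.zero_le _) (hfree2 _ le_rfl ht1 (C.pt_mem ht1 (Nat.zero_le _)))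
        ht1.le le_rfl hfree2
    have h2 := hptop (2 * k0 + 1 + 1) k0 0 ⟨by omega, Or.inr ⟨rfl, by omega⟩⟩ (Nat.zero_le _)
      (hptZ _ ht1.le (Ne.symm hx1))
    have h3 := ochain 0 k0 (by omega) (by omega) hleft.left
      (fun i hi hi' => hoth i (by omega) (by omega))
    refine ⟨j + 1, le_rfl, C.lam (nn h) 0, (C.lam_le le_rfl (Nat.zero_le _)).trans (by omega), ?_⟩
    rw [← C.pt_last (Nat.zero_le _)]
    exact (((hleft.symm (adj_symm' _)).trans h3).trans h2).trans h1

end shd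
end GC

namespace GC

section shd
variable {h m κ : ℕ} {T : Type} {G : SimpleGraph T} {D : Shd h m κ G}

theorem Shd.Chain.rails_step [Finite T] {j q : ℕ} (C : D.Chain j q) (hh : 1 ≤ h) :
    ∃ Q π, D.Rails (j + 1) q Q π := by
  let G1 : SimpleGraph T :=
    { Adj := fun x y => G.Adj x y ∧ x ∈ D.Rg (j + 1) q ∧ y ∈ D.Rg (j + 1) q
      symm := ⟨fun x y hxy => ⟨hxy.1.symm, hxy.2.2, hxy.2.1⟩⟩
      loopless := ⟨fun x hx => hx.1.ne rfl⟩ }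
  have hz0 : ∀ e ≤ j + 1, D.zp (j + 1) q e ∈ D.Rg (j + 1) q := fun e he =>
    Or.inl ⟨_, ⟨_, _, rfl⟩, Zn.inC ⟨e, he, rfl⟩, rfl⟩
  have hN : NoSep G1 {x | ∃ e ≤ j + 1, x = D.zp (j + 1) q e}
      {x | ∃ e ≤ j + 1, x = D.zp (j + 1) (q + 1) e} (j + 2) := by
    intro Z hZ
    obtain ⟨ε, h1, ε', h2, hc⟩ := C.nosep hh Z hZ
    refine ⟨_, ⟨ε, h1, rfl⟩, _, ⟨ε', h2, rfl⟩, ?_⟩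
    refine hc.cut {x | Cn G1.Adj {x | x ∉ Z} (D.zp (j + 1) q ε) x} (Cn.refl hc.left.2) ?_
    intro x y hx hxW hyW hxy
    exact Cn.step hx ⟨hxy, hxW.1, hyW.1⟩ hyW.2
  obtain ⟨P, a, b, hd, hP⟩ := menger G1 _ _ _ hN
  have hA : ∀ i, ∃ e ≤ j + 1, a i = D.zp (j + 1) q e := fun i => (hP i).1
  have hB : ∀ i, ∃ e ≤ j + 1, b i = D.zp (j + 1) (q + 1) e := fun i => (hP i).2.1
  have hC := fun i => (hP i).2.2
  choose α hα ha using hA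
  choose β hβ hb using hB
  have hinj : ∀ i i', α i = α i' → i = i' := by
    intro i i' hi
    by_contra hne
    refine Set.disjoint_left.1 (hd i i' hne) (hC i).left ?_
    rw [ha i, hi, ← ha i']; exact (hC i').left
  let α' : Fin (j + 2) → Fin (j + 2) := fun i => ⟨α i, by have := hα i; omega⟩
  have hinj' : Function.Injective α' := fun i i' hi => hinj i i' (by simpa [α'] using hi)
  have hsur : ∀ e, ∃ i, e ≤ j + 1 → α i = e := by
    intro e
    by_cases he : e ≤ j + 1
    · obtain ⟨i, hi⟩ := Finite.injective_iff_surjective.1 hinj' ⟨e, by omega⟩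
      exact ⟨i, fun _ => by simpa [α'] using congrArg Fin.val hi⟩
    · exact ⟨0, fun h => absurd h he⟩
  choose σ hσ using hsur
  refine ⟨fun e => {x | Cn G1.Adj (P (σ e)) (a (σ e)) x}, fun e => β (σ e), ?_⟩
  intro e he
  have hae : a (σ e) = D.zp (j + 1) q e := by rw [ha, hσ e he]
  refine ⟨hβ _, ?_, ?_, ?_, ?_⟩
  · intro x hx
    refine Cn.cut hx (D.Rg (j + 1) q) ?_ (fun x y _ _ _ hxy => hxy.2.2)
    rw [hae]; exact hz0 e he
  · show Cn G1.Adj _ _ _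
    rw [← hb]; exact hC _
  · intro x hx
    rw [← hae]
    exact (Cn.comp hx).monoR (fun x y hxy => hxy.1)
  · intro e' he' hne
    refine Set.disjoint_left.2 fun x hx hx' => ?_
    refine Set.disjoint_left.1 (hd (σ e) (σ e') ?_) (Cn.right hx) (Cn.right hx')
    intro hs
    apply hne
    rw [← hσ e he, ← hσ e' he', hs]

theorem Shd.rails [Finite T] (D : Shd h m κ G) (hh : 1 ≤ h) (j : ℕ) :
    ∀ q, OK h m j q → ∃ Q π, D.Rails j q Q π := by
  induction j with
  | zero => exact fun q hok => D.rails_zero hok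
  | succ j ih =>
    intro q hok
    have : ∀ t, ∃ Q π, t < nn h → D.Rails j (q * nn h + t) Q π := by
      intro t
      by_cases ht : t < nn h
      · obtain ⟨Q, π, hQ⟩ := ih _ (hok.sub ht)
        exact ⟨Q, π, fun _ => hQ⟩
      · exact ⟨fun _ => ∅, fun _ => 0, fun h => absurd h ht⟩
    choose Q π hQ using this
    exact Shd.Chain.rails_step ⟨hok, Q, π, hQ⟩ hh

theorem Shd.exChain [Finite T] (D : Shd h m κ G) (hh : 1 ≤ h) (j q : ℕ) (hok : OK h m (j + 1) q) :
    Nonempty (D.Chain j q) := by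
  have : ∀ t, ∃ Q π, t < nn h → D.Rails j (q * nn h + t) Q π := by
    intro t
    by_cases ht : t < nn h
    · obtain ⟨Q, π, hQ⟩ := D.rails hh j _ (hok.sub ht)
      exact ⟨Q, π, fun _ => hQ⟩
    · exact ⟨fun _ => ∅, fun _ => 0, fun h => absurd h ht⟩
  choose Q π hQ using this
  exact ⟨⟨hok, Q, π, hQ⟩⟩

theorem Cn.last {α : Type*} {R : α → α → Prop} {S : Set α} {a b : α} (hc : Cn R S a b)
    (hne : a ≠ b) : ∃ x, Cn R (S \ {b}) a x ∧ R x b := by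
  by_contra hno
  push Not at hno
  have : b ∈ {x | Cn R (S \ {b}) a x} := by
    refine hc.cut _ (Cn.refl ⟨hc.left, hne⟩) ?_
    intro x y hx _ hy hxy
    refine Cn.step hx hxy ⟨hy, ?_⟩
    rintro rfl
    exact hno x hx hxy
  exact (Cn.right this).2 rfl

theorem Shd.hasMinor [Finite T] {n : ℕ} (D : Shd h (n + 1) κ G) (hκ : 1 ≤ κ) (hh : h = κ + n) :
    CGT.HasMinor G (⊤ : SimpleGraph (Fin n)) := by
  obtain ⟨C⟩ := D.exChain (by omega) n 1 (fun x hx => hx)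
  have hlt : ∀ i : Fin n, i.1 * 2 ^ κ + 2 ≤ 2 ^ h := by
    intro i
    have h1 : i.1 + 1 ≤ 2 ^ n := by
      have := Nat.lt_two_pow_self (n := n); have := i.2; omega
    have h2 : (i.1 + 1) * 2 ^ κ ≤ 2 ^ n * 2 ^ κ := Nat.mul_le_mul_right _ h1
    have h3 : 2 ≤ 2 ^ κ := by
      calc 2 = 2 ^ 1 := rfl
        _ ≤ 2 ^ κ := Nat.pow_le_pow_right (by norm_num) hκ
    rw [hh, pow_add, mul_comm (2 ^ κ)]
    rw [Nat.add_mul, Nat.one_mul] at h2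
    omega
  let k : Fin n → ℕ := fun i => i.1 * 2 ^ κ
  let t : Fin n → ℕ := fun i => 2 * k i + 2
  have hz : ∀ i, LZ h (k i) (t i) := fun i => ⟨by have := hlt i; simp only [k]; omega, Or.inr ⟨rfl, hlt i⟩⟩
  have hk : ∀ i, k i < 2 ^ h := fun i => (hz i).1
  have hh1 : 1 ≤ h := by omega
  let l : Fin n → An := fun i => .node (n + 1) 1 0 (k i)
  have hl : ∀ i, InC h (n + 1) 1 (l i) := fun i => leaf_inC hh1 (hk i)
  have hi : ∀ i, ∀ e ≤ n, Inc h (l i) (C.pr (t i) e) := fun i e he => C.leaf_inc (hz i) he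
  let hub : Fin n → Set T := fun i => {x | ∃ e ≤ n,
    Cn G.Adj (D.S (l i) (C.pr (t i) e) \ {C.pt (t i) e}) (D.o (l i)) x}
  have hnr : ∀ i, ∀ x ∈ hub i, ∀ w, IsRail w → InC h (n + 1) 1 w → x ≠ D.r w := by
    rintro i x ⟨e, he, hx⟩ w h1 h2 rfl
    have := D.only _ _ w (hi i e he) (hl i) h1 h2 hx.right.1
    exact hx.right.2 (by rw [this]; rfl)
  have hhr : ∀ i, ∀ e ≤ n, Disjoint (hub i) (C.Rl e) := by
    intro i e he
    refine Set.disjoint_left.2 ?_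
    rintro x hx hx'
    obtain ⟨e', he', hx⟩ := id hx
    have := (C.leaf_rl hh1 (hk i) he (hi i e' he') hx.right.1 hx').1
    exact hx.right.2 this
  have hhh : ∀ i i', i ≠ i' → Disjoint (hub i) (hub i') := by
    intro i i' hne
    refine Set.disjoint_left.2 ?_
    rintro x hx hx'
    obtain ⟨e, he, hx1⟩ := id hx
    obtain ⟨e', he', hx2⟩ := id hx'
    have := (D.blk _ _ _ _ _ _ _ _ x (hi i e he) (hi i' e' he') (hl i) (hl i') hx1.right.1
      hx2.right.1 (hnr i x hx)).2.2
    simp only [k] at this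
    rw [Nat.mul_div_cancel _ (by positivity), Nat.mul_div_cancel _ (by positivity)] at this
    exact hne (Fin.ext this)
  have hto : ∀ i, ∀ e ≤ n, ∃ x ∈ hub i, G.Adj x (C.pt (t i) e) := by
    intro i e he
    have h1 : Cn G.Adj (D.S (l i) (C.pr (t i) e)) (D.o (l i)) (C.pt (t i) e) :=
      D.conn _ _ (hi i e he) (hl i) _ (D.r_mem _ _ (hi i e he) (hl i))
    obtain ⟨x, h2, h3⟩ := h1.last
      (D.o_ne _ _ _ (hi i e he) (hl i) C.pr_rail (C.pr_inC (hz i).bd.2.le he))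
    exact ⟨x, ⟨e, he, h2⟩, h3⟩
  have hoh : ∀ i, D.o (l i) ∈ hub i := by
    intro i
    obtain ⟨x, ⟨e, he, hx⟩, -⟩ := hto i 0 (Nat.zero_le _)
    exact ⟨e, he, Cn.refl hx.left⟩
  have hhc : ∀ i, ∀ x ∈ hub i, Cn G.Adj (hub i) (D.o (l i)) x := by
    rintro i x ⟨e, he, hx⟩
    exact hx.comp.mono (fun y hy => ⟨e, he, hy⟩)
  have hpt : ∀ i, ∀ e ≤ n, C.pt (t i) e ∈ C.Rl e := fun i e he => C.pt_rl (hz i).bd.2.le he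
  have hin : ∀ i : Fin n, i.1 ≤ n := fun i => i.2.le
  refine ⟨fun i => C.Rl i.1 ∪ hub i, fun i => ⟨_, Or.inr (hoh i)⟩, ?_, ?_, ?_⟩
  · intro i
    have key : ∀ x ∈ C.Rl i.1 ∪ hub i, Cn G.Adj (C.Rl i.1 ∪ hub i) (D.o (l i)) x := by
      rintro x (hx | hx)
      · obtain ⟨y, hy, hya⟩ := hto i i.1 (hin i)
        have h1 := ((hhc i y hy).mono (Set.subset_union_right (s := C.Rl i.1))).step hya
          (Or.inl (hpt i i.1 (hin i)))
        refine h1.trans (Cn.mono ?_ (Set.subset_union_left (t := hub i)))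
        exact ((C.rl_cn (hin i) (hpt i i.1 (hin i))).symm (adj_symm' _)).trans
          (C.rl_cn (hin i) hx)
      · exact (hhc i x hx).mono Set.subset_union_right
    exact setconn_of ⟨_, Or.inr (hoh i)⟩ (fun u hu v hv =>
      ((key u hu).symm (adj_symm' _)).trans (key v hv))
  · intro i i' hne
    have hne' : i.1 ≠ i'.1 := fun h => hne (Fin.ext h)
    rw [Set.disjoint_union_left, Set.disjoint_union_right, Set.disjoint_union_right]
    exact ⟨⟨C.rl_disj (hin i) (hin i') hne', (hhr i' _ (hin i)).symm⟩,
      hhr i _ (hin i'), hhh i i' hne⟩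
  · intro i i' hadj
    obtain ⟨x, hx, hxa⟩ := hto i i'.1 (hin i')
    exact ⟨x, Or.inr hx, _, Or.inl (hpt i i'.1 (hin i')), hxa⟩

end shd
end GC

namespace GC

theorem minor_trans {V W X : Type*} {H : SimpleGraph V} {G : SimpleGraph W} {K : SimpleGraph X}
    (h1 : CGT.HasMinor H G) (h2 : CGT.HasMinor G K) : CGT.HasMinor H K := by
  obtain ⟨U, hUne, hUc, hUd, hUa⟩ := h1
  obtain ⟨W', hWne, hWc, hWd, hWa⟩ := h2
  have key : ∀ x, ∀ b ∈ W' x, ∀ b' ∈ W' x, ∀ u ∈ U b, ∀ v ∈ U b',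
      Cn H.Adj {z | ∃ b ∈ W' x, z ∈ U b} u v := by
    intro x b hb b' hb' u hu
    have hc := setconn_cn (hWc x) hb hb'
    refine hc.cut {b' | ∀ v ∈ U b', Cn H.Adj {z | ∃ b ∈ W' x, z ∈ U b} u v} ?_ ?_
    · intro v hv
      exact (setconn_cn (hUc b) hu hv).mono (fun z hz => ⟨b, hb, hz⟩)
    · intro y z hy hyW hzW hyz v hv
      obtain ⟨s, hs, t, ht, hst⟩ := hUa hyz
      exact (Cn.step (hy s hs) hst ⟨z, hzW, ht⟩).trans
        ((setconn_cn (hUc z) ht hv).mono (fun w hw => ⟨z, hzW, hw⟩))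
  refine ⟨fun x => {z | ∃ b ∈ W' x, z ∈ U b}, ?_, ?_, ?_, ?_⟩
  · intro x
    obtain ⟨b, hb⟩ := hWne x
    obtain ⟨z, hz⟩ := hUne b
    exact ⟨z, b, hb, hz⟩
  · intro x
    obtain ⟨b, hb⟩ := hWne x
    obtain ⟨z, hz⟩ := hUne b
    refine setconn_of ⟨z, b, hb, hz⟩ ?_
    rintro u ⟨b1, hb1, hu⟩ v ⟨b2, hb2, hv⟩
    exact key x b1 hb1 b2 hb2 u hu v hv
  · intro x y hxy
    refine Set.disjoint_left.2 ?_
    rintro z ⟨b, hb, hz⟩ ⟨b', hb', hz'⟩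
    have hne : b ≠ b' := by
      rintro rfl
      exact Set.disjoint_left.1 (hWd hxy) hb hb'
    exact Set.disjoint_left.1 (hUd hne) hz hz'
  · intro x y hxy
    obtain ⟨b, hb, b', hb', hbb⟩ := hWa hxy
    obtain ⟨u, hu, v, hv, huv⟩ := hUa hbb
    exact ⟨u, ⟨b, hb, hu⟩, v, ⟨b', hb', hv⟩, huv⟩

theorem shd_of {h m κ : ℕ} {V' : Type} (H : SimpleGraph V') (F : Set V') (hF : F.Finite)
    (hAn : {v | IsRail v ∧ InC h m 1 v}.Finite)
    (R : An → Set V') (o : An → V') (S : An → An → Set V')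
    (hRne : ∀ v, IsRail v → InC h m 1 v → (R v).Nonempty)
    (hRc : ∀ v, IsRail v → InC h m 1 v → ∀ x ∈ R v, ∀ y ∈ R v, Cn H.Adj (R v) x y)
    (hRd : ∀ v v', IsRail v → IsRail v' → InC h m 1 v → InC h m 1 v' → ∀ x ∈ R v, x ∈ R v' → v = v')
    (ho : ∀ l v v', Inc h l v' → InC h m 1 l → IsRail v → InC h m 1 v → o l ∉ R v)
    (hS : ∀ l v, Inc h l v → InC h m 1 l → ∀ x ∈ S l v, Cn H.Adj (S l v) (o l) x)
    (hSR : ∀ l v, Inc h l v → InC h m 1 l → ∃ x ∈ S l v, x ∈ R v)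
    (hon : ∀ l v v', Inc h l v → InC h m 1 l → IsRail v' → InC h m 1 v' →
      ∀ x ∈ S l v, x ∈ R v' → v' = v)
    (hblk : ∀ e q k e' q' k' v v' x, Inc h (.node e q 0 k) v → Inc h (.node e' q' 0 k') v' →
      InC h m 1 (.node e q 0 k) → InC h m 1 (.node e' q' 0 k') →
      x ∈ S (.node e q 0 k) v → x ∈ S (.node e' q' 0 k') v' →
      e = e' ∧ q = q' ∧ k / 2 ^ κ = k' / 2 ^ κ)
    (hSF : ∀ l v, Inc h l v → InC h m 1 l → S l v ⊆ F) :
    ∃ (T : Type) (_ : Finite T) (G' : SimpleGraph T), CGT.HasMinor H G' ∧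
      Nonempty (Shd h m κ G') := by
  classical
  let TS : Set (Set V') := {B | (∃ v, (IsRail v ∧ InC h m 1 v) ∧ R v = B) ∨
    ∃ x, (x ∈ F ∧ ∀ v, IsRail v → InC h m 1 v → x ∉ R v) ∧ {x} = B}
  have hfin : TS.Finite := by
    refine ((hAn.image R).union (hF.image (fun x => ({x} : Set V')))).subset ?_
    rintro B (⟨v, hv, rfl⟩ | ⟨x, hx, rfl⟩)
    · exact Or.inl ⟨v, hv, rfl⟩
    · exact Or.inr ⟨x, hx.1, rfl⟩
  have hdis : ∀ B B' : TS, ∀ x, x ∈ B.1 → x ∈ B'.1 → B = B' := by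
    rintro ⟨B, hB⟩ ⟨B', hB'⟩ x hx hx'
    apply Subtype.ext
    show B = B'
    simp only at hx hx'
    rcases hB with ⟨v, hv, rfl⟩ | ⟨y, hy, rfl⟩ <;> rcases hB' with ⟨v', hv', rfl⟩ | ⟨y', hy', rfl⟩
    · rw [hRd v v' hv.1 hv'.1 hv.2 hv'.2 x hx hx']
    · rw [Set.mem_singleton_iff] at hx'; subst hx'
      exact absurd hx (hy'.2 v hv.1 hv.2)
    · rw [Set.mem_singleton_iff] at hx; subst hx
      exact absurd hx' (hy.2 v' hv'.1 hv'.2)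
    · rw [Set.mem_singleton_iff] at hx hx'; rw [← hx, ← hx']
  have hcov : ∀ x ∈ F, ∃ B : TS, x ∈ B.1 := by
    intro x hx
    by_cases hc : ∃ v, (IsRail v ∧ InC h m 1 v) ∧ x ∈ R v
    · obtain ⟨v, hv, hxv⟩ := hc
      exact ⟨⟨R v, Or.inl ⟨v, hv, rfl⟩⟩, hxv⟩
    · push Not at hc
      exact ⟨⟨{x}, Or.inr ⟨x, ⟨hx, fun v h1 h2 => hc v ⟨h1, h2⟩⟩, rfl⟩⟩, rfl⟩
  have hne : Nonempty TS := by
    refine ⟨⟨R (.rail m 1), Or.inl ⟨_, ⟨⟨_, _, rfl⟩, ?_⟩, rfl⟩⟩⟩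
    exact ⟨le_rfl, by simp, by simp⟩
  let G' : SimpleGraph TS :=
    { Adj := fun B B' => B ≠ B' ∧ ∃ x ∈ B.1, ∃ y ∈ B'.1, H.Adj x y
      symm := ⟨fun B B' ⟨h1, x, hx, y, hy, hxy⟩ => ⟨h1.symm, y, hy, x, hx, hxy.symm⟩⟩
      loopless := ⟨fun B hB => hB.1 rfl⟩ }
  have hr : ∀ v, ∃ B : TS, IsRail v → InC h m 1 v → B.1 = R v := by
    intro v
    by_cases hv : IsRail v ∧ InC h m 1 v
    · exact ⟨⟨R v, Or.inl ⟨v, hv, rfl⟩⟩, fun _ _ => rfl⟩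
    · exact ⟨hne.some, fun h1 h2 => absurd ⟨h1, h2⟩ hv⟩
  have hoo : ∀ l, ∃ B : TS, ∀ v, Inc h l v → InC h m 1 l → o l ∈ B.1 := by
    intro l
    by_cases hl : ∃ v, Inc h l v ∧ InC h m 1 l
    · obtain ⟨v, h1, h2⟩ := hl
      obtain ⟨x, hx, -⟩ := hSR l v h1 h2
      obtain ⟨B, hB⟩ := hcov (o l) (hSF l v h1 h2 (hS l v h1 h2 x hx).left)
      exact ⟨B, fun _ _ _ => hB⟩
    · exact ⟨hne.some, fun v h1 h2 => absurd ⟨v, h1, h2⟩ hl⟩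
  choose r hr using hr
  choose oo hoo using hoo
  refine ⟨TS, hfin.to_subtype, G', ⟨fun B => B.1, ?_, ?_, ?_, ?_⟩, ⟨⟨r, oo,
    fun l v => {B | ∃ x ∈ S l v, x ∈ B.1}, ?_, ?_, ?_, ?_, ?_, ?_⟩⟩⟩
  · rintro ⟨B, ⟨v, hv, rfl⟩ | ⟨y, hy, rfl⟩⟩
    · exact hRne v hv.1 hv.2
    · exact ⟨y, rfl⟩
  · rintro ⟨B, ⟨v, hv, rfl⟩ | ⟨y, hy, rfl⟩⟩
    · exact setconn_of (hRne v hv.1 hv.2) (hRc v hv.1 hv.2)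
    · refine setconn_of ⟨y, rfl⟩ ?_
      intro u hu v hv
      rw [Set.mem_singleton_iff] at hu hv
      subst hu; subst hv
      exact Cn.refl rfl
  · intro B B' hBB
    exact Set.disjoint_left.2 fun x hx hx' => hBB (hdis B B' x hx hx')
  · intro B B' hBB
    exact hBB.2
  · intro v v' h1 h2 h3 h4 he
    obtain ⟨x, hx⟩ := hRne v h1 h3
    refine hRd v v' h1 h2 h3 h4 x hx ?_
    rw [← hr v' h2 h4, ← he, hr v h1 h3]; exact hx
  · intro l v v' h1 h2 h3 h4 he
    have := hoo l v' h1 h2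
    rw [he, hr v h3 h4] at this
    exact ho l v v' h1 h2 h3 h4 this
  · rintro l v h1 h2 B ⟨x, hx, hxB⟩
    have hc := hS l v h1 h2 x hx
    have : x ∈ {x | ∃ B : TS, x ∈ B.1 ∧ Cn G'.Adj {B : TS | ∃ x ∈ S l v, x ∈ B.1} (oo l) B} := by
      refine hc.cut _ ⟨oo l, hoo l v h1 h2, Cn.refl ⟨_, hc.left, hoo l v h1 h2⟩⟩ ?_
      rintro y z ⟨B1, hy1, hy2⟩ hyS hzS hyz
      obtain ⟨B2, hB2⟩ := hcov z (hSF l v h1 h2 hzS)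
      refine ⟨B2, hB2, ?_⟩
      by_cases hBB : B1 = B2
      · rw [← hBB]; exact hy2
      · exact hy2.step ⟨hBB, y, hy1, z, hB2, hyz⟩ ⟨z, hzS, hB2⟩
    obtain ⟨B1, hB1, hc1⟩ := this
    rwa [hdis B B1 x hxB hB1]
  · intro l v h1 h2
    obtain ⟨x, hx, hx'⟩ := hSR l v h1 h2
    exact ⟨x, hx, by rw [hr v h1.isRail (h1.inC h2)]; exact hx'⟩
  · rintro l v v' h1 h2 h3 h4 ⟨x, hx, hx'⟩
    rw [hr v' h3 h4] at hx'
    exact hon l v v' h1 h2 h3 h4 x hx hx'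
  · rintro e q k e' q' k' v v' ⟨B, hB⟩ h1 h2 h3 h4 ⟨x, hx, hxB⟩ ⟨y, hy, hyB⟩ hno
    rcases hB with ⟨w, hw, rfl⟩ | ⟨z, hz, rfl⟩
    · exact absurd (Subtype.ext (hr w hw.1 hw.2).symm) (hno w hw.1 hw.2)
    · simp only [Set.mem_singleton_iff] at hxB hyB
      subst hxB
      subst hyB
      exact hblk e q k e' q' k' v v' _ h1 h2 h3 h4 hx hy

end GC

namespace GC

theorem lip {V : Type*} {G : SimpleGraph V} (φ : V → ℕ) (hφ : ∀ a b, G.Adj a b → φ b ≤ φ a + 1)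
    {u v : V} {r : ℕ} (h : G.edist u v ≤ (r : ℕ∞)) : φ v ≤ φ u + r := by
  have hne : G.edist u v ≠ ⊤ := fun hc => by rw [hc] at h; exact absurd h (by simp)
  obtain ⟨p, hp⟩ := exists_walk_of_edist_ne_top hne
  rw [← hp] at h
  have hl : p.length ≤ r := by exact_mod_cast h
  have key : ∀ {a b : V} (w : G.Walk a b), φ b ≤ φ a + w.length := by
    intro a b w
    induction w with
    | nil => simp
    | cons hab w ih => have := hφ _ _ hab; rw [Walk.length_cons]; omega
  have := key p
  omega

theorem clusters {V V' : Type} [Finite V] {G : SimpleGraph V} {H : SimpleGraph V'} {M A : ℕ}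
    {f : V → V'} (hq : CGT.IsQI M A G H f) : ∃ C : V → Set V', (∀ u, (C u).Finite) ∧
      (∀ u, f u ∈ C u) ∧ (∀ u, ∀ x ∈ C u, Cn H.Adj (C u) (f u) x) ∧
      (∀ u u', G.Adj u u' → ∃ x ∈ C u, x ∈ C u') ∧
      ∀ u u' x, x ∈ C u → x ∈ C u' → G.edist u u' ≤ ((2 * M * (M + A) + M * A : ℕ) : ℕ∞) := by
  have hw : ∀ u u', G.Adj u u' → ∃ w : H.Walk (f u) (f u'), w.length ≤ M + A := by
    intro u u' hu
    have h1 := hq.upper u u'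
    rw [edist_eq_one_iff_adj.2 hu, mul_one] at h1
    have h2 : H.edist (f u) (f u') ≤ ((M + A : ℕ) : ℕ∞) := by push_cast; exact h1
    have hne : H.edist (f u) (f u') ≠ ⊤ := fun hc => by rw [hc] at h2; exact absurd h2 (by simp)
    obtain ⟨p, hp⟩ := exists_walk_of_edist_ne_top hne
    rw [← hp] at h2
    exact ⟨p, by exact_mod_cast h2⟩
  choose w hw using hw
  have hdist : ∀ u u' (hu : G.Adj u u') x, x ∈ CGT.walkSupp (w u u' hu) →
      H.edist (f u) x ≤ ((M + A : ℕ) : ℕ∞) := by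
    intro u u' hu x hx
    have hx' : x ∈ (w u u' hu).support := hx
    classical
    refine ((w u u' hu).takeUntil x hx').edist_le.trans ?_
    have h1 := (w u u' hu).length_takeUntil_le_length hx'
    have h2 := hw u u' hu
    exact_mod_cast h1.trans h2
  have hcn : ∀ {a b : V'} (p : H.Walk a b), ∀ x ∈ p.support, Cn H.Adj (CGT.walkSupp p) a x := by
    intro a b p x hx
    classical
    refine (walk_cn (p.takeUntil x hx)).mono ?_
    intro y hy
    exact p.support_takeUntil_subset_support hx hy
  let C : V → Set V' := fun u => {x | x = f u ∨ ∃ u', ∃ hu : G.Adj u u', x ∈ CGT.walkSupp (w u u' hu)}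
  have hCd : ∀ u, ∀ x ∈ C u, H.edist (f u) x ≤ ((M + A : ℕ) : ℕ∞) := by
    rintro u x (rfl | ⟨u', hu, hx⟩)
    · rw [edist_self]; exact zero_le
    · exact hdist u u' hu x hx
  refine ⟨C, ?_, fun u => Or.inl rfl, ?_, ?_, ?_⟩
  · intro u
    have : C u ⊆ {f u} ∪ ⋃ u', ⋃ hu : G.Adj u u', CGT.walkSupp (w u u' hu) := by
      rintro x (rfl | ⟨u', hu, hx⟩)
      · exact Or.inl rfl
      · exact Or.inr (Set.mem_iUnion.2 ⟨u', Set.mem_iUnion.2 ⟨hu, hx⟩⟩)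
    refine Set.Finite.subset ((Set.finite_singleton _).union (Set.finite_iUnion fun u' =>
      Set.finite_iUnion fun hu => ?_)) this
    exact List.finite_toSet _
  · rintro u x (rfl | ⟨u', hu, hx⟩)
    · exact Cn.refl (Or.inl rfl)
    · exact (hcn _ x hx).mono (fun y hy => Or.inr ⟨u', hu, hy⟩)
  · intro u u' hu
    exact ⟨f u', Or.inr ⟨u', hu, Walk.end_mem_support _⟩, Or.inl rfl⟩
  · intro u u' x hx hx'
    have h1 := hCd u x hx
    have h2 := hCd u' x hx'
    rw [edist_comm] at h2
    have h3 : H.edist (f u) (f u') ≤ ((M + A : ℕ) : ℕ∞) + ((M + A : ℕ) : ℕ∞) :=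
      SimpleGraph.edist_triangle.trans (add_le_add h1 h2)
    refine (hq.lower u u').trans ?_
    calc (M : ℕ∞) * H.edist (f u) (f u') + M * A
        ≤ (M : ℕ∞) * (((M + A : ℕ) : ℕ∞) + ((M + A : ℕ) : ℕ∞)) + M * A := by gcongr
      _ = ((2 * M * (M + A) + M * A : ℕ) : ℕ∞) := by push_cast; ring

/-- union of clusters along a connected set -/
theorem union_cn {V V' : Type} {G : SimpleGraph V} {H : SimpleGraph V'} {f : V → V'}
    {C : V → Set V'} (hc : ∀ u, ∀ x ∈ C u, Cn H.Adj (C u) (f u) x)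
    (ha : ∀ u u', G.Adj u u' → ∃ x ∈ C u, x ∈ C u') {P : Set V} {u0 u : V} (hu : Cn G.Adj P u0 u)
    {x : V'} (hx : x ∈ C u) : Cn H.Adj {x | ∃ u ∈ P, x ∈ C u} (f u0) x := by
  have hsub : ∀ u ∈ P, C u ⊆ {x | ∃ u ∈ P, x ∈ C u} := fun u hu x hx => ⟨u, hu, hx⟩
  have : u ∈ {u | ∀ x ∈ C u, Cn H.Adj {x | ∃ u ∈ P, x ∈ C u} (f u0) x} := by
    refine hu.cut _ ?_ ?_
    · intro x hx
      exact (hc u0 x hx).mono (hsub _ hu.left)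
    · intro y z hy hyP hzP hyz x hx
      obtain ⟨t, ht1, ht2⟩ := ha y z hyz
      refine (hy t ht1).trans (Cn.mono ?_ (hsub z hzP))
      exact ((hc z t ht2).symm (adj_symm' _)).trans (hc z x hx)
  exact this x hx

section src
variable {h m κ δ d : ℕ}

def sR (h m δ d : ℕ) (v : An) : Set (LV h m d) := {u | (∃ a, u = .inl a ∧ a.1 = v) ∨
  ∃ p i, u = .inr (p, i) ∧ p.1.2.1 = v ∧ δ ≤ i.1}

def sS (h m δ d : ℕ) (l v : An) : Set (LV h m d) := {u | (∃ a, u = .inl a ∧ a.1 = l) ∨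
  ∃ p i, u = .inr (p, i) ∧ p.1.1.1 = l ∧ p.1.2.1 = v ∧ i.1 < δ}

theorem sR_cn {v : An} (hv : Vd h m v) {u : LV h m d} (hu : u ∈ sR h m δ d v) :
    Cn (LG h m d).Adj (sR h m δ d v) (.inl ⟨v, hv⟩) u := by
  have h0 : (Sum.inl ⟨v, hv⟩ : LV h m d) ∈ sR h m δ d v := Or.inl ⟨_, rfl, rfl⟩
  rcases hu with ⟨a, rfl, rfl⟩ | ⟨p, i, rfl, rfl, hi⟩
  · exact Cn.refl h0
  · obtain ⟨c, hc⟩ : ∃ c, i.1 + 1 + c = d := ⟨d - (i.1 + 1), by omega⟩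
    induction c generalizing i with
    | zero =>
      exact Cn.single h0 (LG.lr.2 (Or.inr ⟨rfl, by omega⟩)) (Or.inr ⟨p, i, rfl, rfl, hi⟩)
    | succ c ih =>
      have := ih ⟨i.1 + 1, by omega⟩ (by simp; omega) (by simp; omega)
      exact this.step (LG.rr.2 ⟨rfl, Or.inr rfl⟩) (Or.inr ⟨p, i, rfl, rfl, hi⟩)

theorem sS_cn {l v : An} (hl : Vd h m l) {u : LV h m d} (hu : u ∈ sS h m δ d l v) :
    Cn (LG h m d).Adj (sS h m δ d l v) (.inl ⟨l, hl⟩) u := by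
  have h0 : (Sum.inl ⟨l, hl⟩ : LV h m d) ∈ sS h m δ d l v := Or.inl ⟨_, rfl, rfl⟩
  rcases hu with ⟨a, rfl, rfl⟩ | ⟨p, i, rfl, rfl, rfl, hi⟩
  · exact Cn.refl h0
  · obtain ⟨i, hid⟩ := i
    induction i with
    | zero =>
      exact Cn.single h0 (LG.lr.2 (Or.inl ⟨rfl, rfl⟩)) (Or.inr ⟨p, _, rfl, rfl, rfl, hi⟩)
    | succ c ih =>
      have := ih (by omega) (by simp only at hi ⊢; omega)
      exact this.step (LG.rr.2 ⟨rfl, Or.inl rfl⟩) (Or.inr ⟨p, _, rfl, rfl, rfl, hi⟩)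

theorem LG.lip {φ : LV h m d → ℕ}
    (hll : ∀ a b : AV h m, Sh h a.1 b.1 → φ (.inl b) ≤ φ (.inl a) + 1)
    (h0 : ∀ p i, i.1 = 0 → φ (.inl p.1.1) ≤ φ (.inr (p, i)) + 1 ∧ φ (.inr (p, i)) ≤ φ (.inl p.1.1) + 1)
    (h1 : ∀ p i, i.1 + 1 = d →
      φ (.inl p.1.2) ≤ φ (.inr (p, i)) + 1 ∧ φ (.inr (p, i)) ≤ φ (.inl p.1.2) + 1)
    (hrr : ∀ p i j, i.1 + 1 = j.1 →
      φ (.inr (p, i)) ≤ φ (.inr (p, j)) + 1 ∧ φ (.inr (p, j)) ≤ φ (.inr (p, i)) + 1) :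
    ∀ a b, (LG h m d).Adj a b → φ b ≤ φ a + 1 := by
  rintro (a | ⟨p, i⟩) (b | ⟨p', j⟩) hab
  · exact hll a b (LG.ll.1 hab).2
  · rcases LG.lr.1 hab with ⟨rfl, hi⟩ | ⟨rfl, hi⟩
    · exact (h0 _ _ hi).2
    · exact (h1 _ _ hi).2
  · rcases LG.lr.1 hab.symm with ⟨rfl, hi⟩ | ⟨rfl, hi⟩
    · exact (h0 _ _ hi).1
    · exact (h1 _ _ hi).1
  · obtain ⟨rfl, hi | hi⟩ := LG.rr.1 hab
    · exact (hrr _ _ _ hi).2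
    · exact (hrr _ _ _ hi).1

open Classical in
noncomputable def phi (h m d : ℕ) (v : An) : LV h m d → ℕ
  | .inl a => if a.1 = v then 0 else d + 1
  | .inr (p, i) => if p.1.2.1 = v then d - i.1 else d + 1

theorem Short.no_rail {x y : An} (hs : Short h x y) : ¬ IsRail x ∧ ¬ IsRail y := by
  obtain ⟨e, q, s, a, rfl, ⟨_, rfl⟩ | ⟨_, rfl⟩⟩ := hs <;>
  exact ⟨(by rintro ⟨_, _, h⟩; cases h), (by rintro ⟨_, _, h⟩; cases h)⟩

theorem Sh.no_rail {x y : An} (hs : Sh h x y) : ¬ IsRail x ∧ ¬ IsRail y :=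
  hs.elim (fun h => h.no_rail) (fun h => h.no_rail.symm)

theorem node_no_rail {x : An} (hn : IsNode x) : ¬ IsRail x := by
  obtain ⟨e, q, s, a, rfl⟩ := hn
  rintro ⟨_, _, h⟩; cases h

theorem phi_lip {v : An} (hv : IsRail v) :
    ∀ a b, (LG h m d).Adj a b → phi h m d v b ≤ phi h m d v a + 1 := by
  apply LG.lip
  · intro a b hs
    have h1 : a.1 ≠ v := by rintro rfl; exact hs.no_rail.1 hv
    have h2 : b.1 ≠ v := by rintro rfl; exact hs.no_rail.2 hv
    simp [phi, h1, h2]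
  · intro p i hi
    have h1 : p.1.1.1 ≠ v := by
      intro he; exact node_no_rail p.2.isNode (he ▸ hv)
    simp only [phi, h1, if_false, hi]
    split_ifs <;> omega
  · intro p i hi
    simp only [phi]
    split_ifs <;> omega
  · intro p i j hi
    simp only [phi]
    split_ifs <;> omega

open Classical in
noncomputable def nv (κ e q b : ℕ) : An → ℕ
  | .node e' q' s a => if e' = e ∧ q' = q ∧ s < κ ∧ a / 2 ^ (κ - s) = b then s else κ
  | _ => κ

theorem nv_le (κ e q b : ℕ) (x : An) : nv κ e q b x ≤ κ := by
  cases x <;> simp only [nv, le_refl]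
  split_ifs <;> omega

theorem nv_short {e q b : ℕ} (hκ : κ ≤ h) {x y : An} (hs : Short h x y) :
    nv κ e q b y ≤ nv κ e q b x + 1 ∧ nv κ e q b x ≤ nv κ e q b y + 1 := by
  obtain ⟨e', q', s, a, rfl, ⟨h1, rfl⟩ | ⟨h1, rfl⟩⟩ := hs
  · by_cases hsk : s + 1 < κ
    · have : a / 2 / 2 ^ (κ - (s + 1)) = a / 2 ^ (κ - s) := by
        rw [Nat.div_div_eq_div_mul, ← pow_succ', show κ - (s + 1) + 1 = κ - s by omega]
      simp only [nv, this]
      split_ifs <;> omega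
    · simp only [nv]
      split_ifs <;> omega
  · simp only [nv]
    split_ifs <;> omega

noncomputable def psi (h m d κ e q b : ℕ) : LV h m d → ℕ
  | .inl x => nv κ e q b x.1
  | .inr (p, i) => max (nv κ e q b p.1.1.1) (min (i.1 + 1 - κ) κ)

theorem nv_rail {e q b : ℕ} {x : An} (hx : IsRail x) : nv κ e q b x = κ := by
  obtain ⟨e, p, rfl⟩ := hx; rfl

theorem psi_lip {e q b : ℕ} (hκ : κ ≤ h) (hκ1 : 1 ≤ κ) (hd : d = 2 * κ) :
    ∀ x y, (LG h m d).Adj x y → psi h m d κ e q b y ≤ psi h m d κ e q b x + 1 := by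
  apply LG.lip
  · intro x y hs
    simp only [psi]
    rcases hs with hs | hs
    · exact (nv_short hκ hs).1
    · exact (nv_short hκ hs).2
  · intro p i hi
    simp only [psi]
    omega
  · intro p i hi
    have := nv_le κ e q b p.1.1.1
    simp only [psi, nv_rail p.2.isRail]
    omega
  · intro p i j hi
    simp only [psi]
    omega

end src
end GC

namespace GC

theorem part2 {M A n κ h d : ℕ} (hκ : κ = 2 * M * (M + A) + M * A + 1) (hh : h = κ + n)
    (hd : d = 2 * κ) {V' : Type} {H : SimpleGraph V'}
    (hq : CGT.QIsometric M A (LG h (n + 1) d) H) : CGT.HasMinor H (⊤ : SimpleGraph (Fin n)) := by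
  obtain ⟨f, hf⟩ := hq
  haveI := lv_finite h (n + 1) d
  haveI := av_finite h (n + 1)
  obtain ⟨C, hCfin, hCf, hCc, hCa, hCd⟩ := clusters hf
  obtain ⟨r, hr⟩ : ∃ r, r = 2 * M * (M + A) + M * A := ⟨_, rfl⟩
  rw [← hr] at hCd hκ
  let R : An → Set V' := fun v => {x | ∃ u ∈ sR h (n + 1) κ d v, x ∈ C u}
  let S : An → An → Set V' := fun l v => {x | ∃ u ∈ sS h (n + 1) κ d l v, x ∈ C u}
  have hne : Nonempty V' := ⟨f (.inl ⟨.root, Or.inr rfl⟩)⟩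
  have ho : ∀ l, ∃ x : V', ∀ hl : InC h (n + 1) 1 l, x = f (.inl ⟨l, Or.inl hl⟩) := by
    intro l
    by_cases hl : InC h (n + 1) 1 l
    · exact ⟨f (.inl ⟨l, Or.inl hl⟩), fun _ => rfl⟩
    · exact ⟨hne.some, fun h => absurd h hl⟩
  choose o ho using ho
  have hRc0 : ∀ v (hv : InC h (n + 1) 1 v), ∀ x ∈ R v,
      Cn H.Adj (R v) (f (.inl ⟨v, Or.inl hv⟩)) x := by
    rintro v hv x ⟨u, hu, hx⟩
    exact union_cn hCc hCa (sR_cn (Or.inl hv) hu) hx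
  have phiR : ∀ v v', ∀ u ∈ sR h (n + 1) κ d v', (v = v' → phi h (n + 1) d v u ≤ κ) ∧
      (v ≠ v' → phi h (n + 1) d v u = d + 1) := by
    rintro v v' u (⟨a, rfl, rfl⟩ | ⟨p, i, rfl, rfl, hi⟩)
    · refine ⟨?_, ?_⟩
      · rintro rfl; simp [phi]
      · intro h; simp [phi, h.symm]
    · refine ⟨?_, ?_⟩
      · rintro rfl; simp only [phi, if_true]; omega
      · intro h; simp [phi, h.symm]
  have phiS : ∀ l v v', IsRail v' → IsNode l → v ≠ v' → ∀ u ∈ sS h (n + 1) κ d l v,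
      phi h (n + 1) d v' u = d + 1 := by
    rintro l v v' h1 h2 hne u (⟨a, rfl, rfl⟩ | ⟨p, i, rfl, rfl, rfl, hi⟩)
    · have : a.1 ≠ v' := by rintro rfl; exact node_no_rail h2 h1
      simp [phi, this]
    · simp [phi, hne]
  have meet : ∀ v u u' x, IsRail v → x ∈ C u → x ∈ C u' → phi h (n + 1) d v u ≤ κ →
      phi h (n + 1) d v u' = d + 1 → False := by
    intro v u u' x hv hx hx' h1 h2
    have := lip _ (phi_lip hv) (hCd u u' x hx hx')
    omega
  obtain ⟨T, hT, G', hG', ⟨D⟩⟩ := shd_of (h := h) (m := n + 1) (κ := κ) H (⋃ u, C u)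
    (Set.finite_iUnion hCfin) (by
      refine (Set.finite_range (Subtype.val : AV h (n + 1) → An)).subset ?_
      rintro v ⟨-, hv⟩
      exact ⟨⟨v, Or.inl hv⟩, rfl⟩) R o S
    (fun v _ hv => ⟨_, .inl ⟨v, Or.inl hv⟩, Or.inl ⟨_, rfl, rfl⟩, hCf _⟩)
    (fun v _ hv x hx y hy => ((hRc0 v hv x hx).symm (adj_symm' _)).trans (hRc0 v hv y hy))
    (by
      rintro v v' h1 h2 h3 h4 x ⟨u, hu, hx⟩ ⟨u', hu', hx'⟩
      by_contra hne
      exact meet v u u' x h1 hx hx' ((phiR v v u hu).1 rfl) ((phiR v v' u' hu').2 hne))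
    (by
      rintro l v v' h1 h2 h3 h4 ⟨u, hu, hx⟩
      rw [ho l h2] at hx
      refine meet v u _ _ h3 hx (hCf _) ((phiR v v u hu).1 rfl) ?_
      have : l ≠ v := by rintro rfl; exact node_no_rail h1.isNode h3
      simp [phi, this])
    (by
      rintro l v h1 h2 x ⟨u, hu, hx⟩
      rw [ho l h2]
      exact union_cn hCc hCa (sS_cn (Or.inl h2) hu) hx)
    (by
      intro l v h1 h2
      let p : EE h (n + 1) := ⟨(⟨l, Or.inl h2⟩, ⟨v, Or.inl (h1.inC h2)⟩), h1⟩
      obtain ⟨x, hx, hx'⟩ := hCa (.inr (p, ⟨κ - 1, by omega⟩)) (.inr (p, ⟨κ, by omega⟩))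
        (LG.rr.2 ⟨rfl, Or.inl (by simp; omega)⟩)
      exact ⟨x, ⟨_, Or.inr ⟨p, _, rfl, rfl, rfl, by simp; omega⟩, hx⟩,
        ⟨_, Or.inr ⟨p, _, rfl, rfl, le_rfl⟩, hx'⟩⟩)
    (by
      rintro l v v' h1 h2 h3 h4 x ⟨u, hu, hx⟩ ⟨u', hu', hx'⟩
      by_contra hne
      exact meet v' u' u x h3 hx' hx ((phiR v' v' u' hu').1 rfl)
        (phiS l v v' h3 h1.isNode (Ne.symm hne) u hu))
    (by
      rintro e q k e' q' k' v v' x h1 h2 h3 h4 ⟨u, hu, hx⟩ ⟨u', hu', hx'⟩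
      by_contra hne
      have hlip := lip _ (psi_lip (h := h) (m := n + 1) (e := e) (q := q) (b := k / 2 ^ κ)
        (show κ ≤ h by omega) (by omega) hd) (hCd u u' x hx hx')
      have e1 : nv κ e q (k / 2 ^ κ) (.node e q 0 k) = 0 := by
        simp only [nv]; rw [if_pos]; exact ⟨trivial, trivial, by omega, rfl⟩
      have e2 : nv κ e q (k / 2 ^ κ) (.node e' q' 0 k') = κ := by
        simp only [nv]; rw [if_neg]
        rintro ⟨rfl, rfl, -, h5⟩
        exact hne ⟨rfl, rfl, h5.symm⟩
      have f1 : psi h (n + 1) d κ e q (k / 2 ^ κ) u = 0 := by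
        rcases hu with ⟨a, rfl, ha⟩ | ⟨p, i, rfl, hp, -, hi⟩
        · simp only [psi, ha, e1]
        · simp only [psi, hp, e1]; omega
      have f2 : κ ≤ psi h (n + 1) d κ e q (k / 2 ^ κ) u' := by
        rcases hu' with ⟨a, rfl, ha⟩ | ⟨p, i, rfl, hp, -, hi⟩
        · simp only [psi, ha, e2]; exact le_rfl
        · simp only [psi, hp, e2]; omega
      omega)
    (by
      rintro l v h1 h2 x ⟨u, hu, hx⟩
      exact Set.mem_iUnion.2 ⟨u, hx⟩)
  exact minor_trans hG' (D.hasMinor (by omega) hh)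

theorem final (M A n : ℕ) :
    ∃ (V : Type) (_ : Fintype V) (G : SimpleGraph V),
      ¬ CGT.IsFatMinor G (CGT.gridGraph 154 154) 3 ∧
      ∀ (V' : Type) (H : SimpleGraph V'),
        ¬ CGT.HasMinor H (⊤ : SimpleGraph (Fin n)) → ¬ CGT.QIsometric M A G H := by
  let κ := 2 * M * (M + A) + M * A + 1
  haveI := lv_finite (κ + n) (n + 1) (2 * κ)
  exact ⟨_, Fintype.ofFinite _, LG (κ + n) (n + 1) (2 * κ), part1 (by omega),
    fun V' H hno hq => hno (part2 rfl rfl rfl hq)⟩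

end GC

/-- For every `M, A, n ∈ ℕ` with `M ≥ 1` there is a finite graph `G` such
that the `(154 × 154)`-grid is not a 3-fat minor of `G`, and `G` is not
`(M,A)`-quasi-isometric to any graph with no `K_n` minor. -/
theorem statement0 (M A n : ℕ) (hM : 1 ≤ M) :
    ∃ (V : Type) (_ : Fintype V) (G : SimpleGraph V),
      ¬ CGT.IsFatMinor G (CGT.gridGraph 154 154) 3 ∧
      ∀ (V' : Type) (H : SimpleGraph V'),
        ¬ CGT.HasMinor H (⊤ : SimpleGraph (Fin n)) → ¬ CGT.QIsometric M A G H := by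
  exact GC.final M A n
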